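/- arXiv:math/0312413 — 2 statements merged into one kernel-verified Lean document; each statement's English description precedes it below -/
import Mathlib

section
/- Let S be a scheme and let P → S and P′ → S be ℙ¹-bundles over S. Let D be a closed subscheme of P and D′ a closed subscheme of P′ such that D → S and D′ → S are étale covers of degree 3, and let η : D → D′ be an S-isomorphism. Then there exists a unique S-isomorphism α : P → P′ such that α restricted to D equals η (i.e., α ∘ ι_D = ι_{D′} ∘ η for the inclusions ι_D : D → P and ι_{D′} : D′ → P′). -/
universe u

open AlgebraicGeometry CategoryTheory CategoryTheory.Limits

attribute [local instance] MvPolynomial.gradedAlgebra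

/-- The projective line over `ℤ`, i.e. `Proj ℤ[X₀, X₁]`. -/
noncomputable def P1Z : Scheme.{u} :=
  AlgebraicGeometry.Proj (MvPolynomial.homogeneousSubmodule (Fin 2) (ULift.{u} ℤ))

/-- The projective line `ℙ¹_S` over a scheme `S`, i.e. the base change to `S` of
`Proj ℤ[X₀, X₁]` (the fibre product over the terminal scheme, which is `Spec ℤ`). -/
noncomputable def P1 (S : Scheme.{u}) : Scheme.{u} :=
  pullback (terminal.from S) (terminal.from P1Z)

/-- The structure morphism `ℙ¹_S ⟶ S`. -/
noncomputable def P1proj (S : Scheme.{u}) : P1 S ⟶ S :=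
  pullback.fst (terminal.from S) (terminal.from P1Z)

/-- `f : D ⟶ S` is an étale cover of degree `n`: a finite étale surjection all of whose
geometric fibres consist of `n` points. -/
def IsEtaleCoverOfDegree (n : ℕ) {D S : Scheme.{u}} (f : D ⟶ S) : Prop :=
  IsFinite f ∧ IsEtale f ∧ Function.Surjective f.base ∧
    ∀ (K : Type u) [Field K] [IsAlgClosed K]
      (x : Spec (CommRingCat.of K) ⟶ S), Nat.card (pullback f x : Scheme.{u}) = n

/-- `f : P ⟶ S` is a `ℙ¹`-bundle: locally on `S`, `P` is `S`-isomorphic to `ℙ¹`, i.e. there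
is an open cover of `S` by opens `U` together with `U`-isomorphisms `P ×_S U ≅ ℙ¹_U`. -/
def IsP1Bundle {P S : Scheme.{u}} (f : P ⟶ S) : Prop :=
  ∀ x : S, ∃ U : S.Opens, x ∈ U ∧
    ∃ e : pullback f U.ι ≅ P1 (U : Scheme.{u}),
      e.hom ≫ P1proj (U : Scheme.{u}) = pullback.snd f U.ι


namespace P1aux

open HomogeneousLocalization

/-- Morphism to `Spec R` from a ring map. -/
noncomputable def toS {X : Scheme.{u}} {R : CommRingCat.{u}} (φ : R ⟶ Γ(X, ⊤)) : X ⟶ Spec R :=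
  X.toSpecΓ ≫ Spec.map φ

lemma toS_surj {X : Scheme.{u}} {R : CommRingCat.{u}} (g : X ⟶ Spec R) :
    ∃ φ : R ⟶ Γ(X, ⊤), g = toS φ := by
  refine ⟨(Scheme.ΓSpecIso R).inv ≫ g.appTop, ?_⟩
  rw [toS, Spec.map_comp, ← Category.assoc, ← Scheme.toSpecΓ_naturality, Category.assoc,
    toSpecΓ_SpecMap_ΓSpecIso_inv, Category.comp_id]

lemma toS_appTop {X : Scheme.{u}} {R : CommRingCat.{u}} (φ : R ⟶ Γ(X, ⊤)) :
    (Scheme.ΓSpecIso R).inv ≫ (toS φ).appTop = φ := by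
  simp [toS, Scheme.toSpecΓ_appTop]

lemma toS_inj {X : Scheme.{u}} {R : CommRingCat.{u}} {φ ψ : R ⟶ Γ(X, ⊤)} (h : toS φ = toS ψ) :
    φ = ψ := by
  rw [← toS_appTop φ, h, toS_appTop]

lemma comp_toS {X Y : Scheme.{u}} {R : CommRingCat.{u}} (g : Y ⟶ X) (φ : R ⟶ Γ(X, ⊤)) :
    g ≫ toS φ = toS (φ ≫ g.appTop) := by
  simp [toS, Scheme.toSpecΓ_naturality_assoc]

lemma toS_comp_SpecMap {X : Scheme.{u}} {R R' : CommRingCat.{u}} (ψ : R' ⟶ R)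
    (φ : R ⟶ Γ(X, ⊤)) : toS φ ≫ Spec.map ψ = toS (ψ ≫ φ) := by
  simp [toS]

/-- The homogeneous coordinate ring. -/
abbrev HA : Type u := MvPolynomial (Fin 2) (ULift.{u} ℤ)

/-- Its grading. -/
noncomputable abbrev 𝒜 : ℕ → Submodule (ULift.{u} ℤ) HA.{u} :=
  MvPolynomial.homogeneousSubmodule (Fin 2) (ULift.{u} ℤ)

lemma hX (i : Fin 2) : (MvPolynomial.X i : HA.{u}) ∈ 𝒜.{u} 1 :=
  MvPolynomial.isHomogeneous_X _ i

/-- Evaluation hom. -/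
noncomputable def ev {B : Type u} [CommRing B] (v : Fin 2 → B) : HA.{u} →+* B :=
  MvPolynomial.eval₂Hom ((Int.castRingHom B).comp (ULift.ringEquiv.{0,u}.toRingHom)) v

@[simp] lemma ev_X {B : Type u} [CommRing B] (v : Fin 2 → B) (i) : ev v (MvPolynomial.X i) = v i := by
  simp [ev]

lemma ev_comp {B C : Type u} [CommRing B] [CommRing C] (v : Fin 2 → B) (g : B →+* C) (p) :
    g (ev v p) = ev (fun i => g (v i)) p := by
  have : g.comp (ev v) = ev (fun i => g (v i)) := by
    apply MvPolynomial.ringHom_ext'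
    · ext x; simp [ev]
    · intro i; simp
  exact congr($this p)

/-- Dehomogenisation. -/
noncomputable def dehom {B : Type u} [CommRing B] (f : HA.{u}) (v : Fin 2 → B)
    (h : IsUnit (ev v f)) : Away 𝒜.{u} f →+* B :=
  (Localization.awayLift (ev v) f h).comp
    (algebraMap (Away 𝒜.{u} f) (Localization.Away f))

lemma dehom_mk {B : Type u} [CommRing B] (f : HA.{u}) (v : Fin 2 → B)
    (h : IsUnit (ev v f)) {d : ℕ} (hf : f ∈ 𝒜.{u} d) (n : ℕ) (x : HA.{u}) (hx : x ∈ 𝒜.{u} (n • d)) :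
    dehom f v h (Away.mk 𝒜 hf n x hx) * ev v f ^ n = ev v x := by
  obtain ⟨w, hw⟩ := h.exists_right_inv
  simp only [dehom, RingHom.coe_comp, Function.comp_apply, HomogeneousLocalization.algebraMap_apply, Away.val_mk]
  rw [Localization.awayLift_mk _ _ _ _ hw]
  rw [mul_assoc, ← mul_pow, mul_comm w, hw, one_pow, mul_one]

lemma dehom_awayMap {B : Type u} [CommRing B] (f g x : HA.{u}) (v : Fin 2 → B)
    {d e : ℕ} (hf : f ∈ 𝒜.{u} d) (hg : g ∈ 𝒜.{u} e) (hx : x = f * g)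
    (h : IsUnit (ev v f)) (h' : IsUnit (ev v x)) :
    (dehom x v h').comp (awayMap 𝒜 hg hx) = dehom f v h := by
  ext z
  obtain ⟨n, a, ha, rfl⟩ := Away.mk_surjective 𝒜 hf z
  rw [RingHom.comp_apply, awayMap_mk]
  refine (h'.pow n).mul_right_cancel ?_
  rw [dehom_mk, hx, map_mul, map_mul, mul_pow, ← mul_assoc, dehom_mk, map_pow]

/-- the coordinate functions `X_k / X_i`. -/
noncomputable def co (i k : Fin 2) : Away 𝒜.{u} (MvPolynomial.X i) :=
  Away.mk 𝒜 (hX i) 1 (MvPolynomial.X k) (by simpa using hX k)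

lemma co_self (i : Fin 2) : co.{u} i i = 1 := by
  ext
  simp only [co, Away.val_mk, val_one, pow_one]
  rw [← Localization.mk_one, Localization.mk_eq_mk_iff, Localization.r_iff_exists]
  exact ⟨1, by simp⟩

lemma ev_homog {B : Type u} [CommRing B] (v : Fin 2 → B) (c : B) (n : ℕ) (x : HA.{u})
    (hx : x ∈ 𝒜.{u} n) : ev (fun k => c * v k) x = c ^ n * ev v x := by
  rw [MvPolynomial.mem_homogeneousSubmodule] at hx
  simp only [ev, MvPolynomial.coe_eval₂Hom, MvPolynomial.eval₂_eq', Finset.mul_sum]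
  refine Finset.sum_congr rfl fun d hd => ?_
  rw [← hx (MvPolynomial.mem_support_iff.mp hd)]
  simp only [mul_pow, Finset.prod_mul_distrib]
  rw [Finset.prod_pow_eq_pow_sum]
  have : Finsupp.weight 1 d = ∑ i, d i := by
    simp [Finsupp.weight_apply, Finsupp.sum_fintype]
  rw [this]; ring

lemma ulift_hom_ext {B : Type u} [CommRing B] (φ ψ : ULift.{u} ℤ →+* B) : φ = ψ := by
  have h : φ.comp ULift.ringEquiv.{0,u}.symm.toRingHom =
    ψ.comp ULift.ringEquiv.{0,u}.symm.toRingHom := RingHom.ext_int _ _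
  ext ⟨x⟩
  exact congr($h x)

lemma away_eq (i : Fin 2) (n : ℕ) (x : HA.{u}) (hx : x ∈ 𝒜.{u} (n • 1)) :
    Away.mk 𝒜 (hX i) n x hx = ev (co.{u} i) x := by
  apply val_injective
  let s : Localization.Away (MvPolynomial.X i : HA.{u}) := algebraMap HA.{u} _ (MvPolynomial.X i)
  have hs : IsUnit s := IsLocalization.Away.algebraMap_isUnit _
  refine (hs.pow n).mul_left_cancel ?_
  have h1 := ev_comp (co.{u} i) (algebraMap (Away 𝒜.{u} (MvPolynomial.X i)) 
    (Localization.Away (MvPolynomial.X i : HA.{u}))) x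
  simp only [HomogeneousLocalization.algebraMap_apply] at h1
  rw [h1, ← ev_homog _ _ _ _ (by simpa using hx)]
  have h2 : (fun k => s * (co.{u} i k).val) = fun k => algebraMap HA.{u}
      (Localization.Away (MvPolynomial.X i : HA.{u})) (MvPolynomial.X k) := by
    ext k
    simp only [co, Away.val_mk, s, ← Localization.mk_one_eq_algebraMap, Localization.mk_mul]
    rw [Localization.mk_eq_mk_iff, Localization.r_iff_exists]
    exact ⟨1, by simp⟩
  have h3 := ev_comp (B := HA.{u}) MvPolynomial.X (algebraMap HA.{u}
    (Localization.Away (MvPolynomial.X i : HA.{u}))) x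
  have h4 : ev (B := HA.{u}) MvPolynomial.X x = x := by
    have : ev (B := HA.{u}) MvPolynomial.X = RingHom.id _ := by
      apply MvPolynomial.ringHom_ext'
      · exact ulift_hom_ext _ _
      · intro i; simp
    rw [this]; rfl
  rw [h2, ← h3, h4, Away.val_mk]
  simp only [s, ← Localization.mk_one_eq_algebraMap, Localization.mk_pow, Localization.mk_mul]
  rw [Localization.mk_eq_mk_iff, Localization.r_iff_exists]
  exact ⟨1, by simp⟩

lemma away_hom_ext {B : Type u} [CommRing B] (i : Fin 2)
    (φ ψ : Away 𝒜.{u} (MvPolynomial.X i) →+* B) (h : φ (co i (1 - i)) = ψ (co i (1 - i))) :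
    φ = ψ := by
  ext z
  obtain ⟨n, a, ha, rfl⟩ := Away.mk_surjective 𝒜 (hX i) z
  rw [away_eq, ev_comp, ev_comp]
  congr 2
  ext k
  obtain rfl | rfl : k = i ∨ k = 1 - i := by fin_cases k <;> fin_cases i <;> simp
  · rw [co_self, map_one, map_one]
  · exact h

/-- coordinates vector with `1` in place `i` and `b` elsewhere. -/
def vec {B : Type u} [CommRing B] (i : Fin 2) (b : B) : Fin 2 → B := fun k => if k = i then 1 else b

lemma vec_unit {B : Type u} [CommRing B] (i : Fin 2) (b : B) :
    IsUnit (ev (vec i b) (MvPolynomial.X i)) := by simp [vec]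

/-- the hom `A_(X_i) → B` with `X_{1-i}/X_i ↦ b`. -/
noncomputable def dh {B : Type u} [CommRing B] (i : Fin 2) (b : B) :
    Away 𝒜.{u} (MvPolynomial.X i) →+* B := dehom _ (vec i b) (vec_unit i b)

lemma dh_co {B : Type u} [CommRing B] (i : Fin 2) (b : B) : dh i b (co i (1 - i)) = b := by
  have := dehom_mk _ (vec i b) (vec_unit i b) (hX i) 1 (MvPolynomial.X (1 - i)) (by simpa using hX _)
  have h2 : (1 - i : Fin 2) ≠ i := by fin_cases i <;> simp
  simp only [ev_X, pow_one] at this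
  simp only [vec, h2, if_false, if_true, mul_one] at this
  exact this

lemma dh_eq {B : Type u} [CommRing B] (i : Fin 2) (φ : Away 𝒜.{u} (MvPolynomial.X i) →+* B) :
    φ = dh i (φ (co i (1 - i))) := away_hom_ext _ _ _ (dh_co _ _).symm

/-- the charts of the projective line -/
noncomputable def chart (i : Fin 2) :
    Spec (.of (Away 𝒜.{u} (MvPolynomial.X i))) ⟶ P1Z.{u} :=
  Proj.awayι 𝒜.{u} (MvPolynomial.X i) (hX i) one_pos

instance (i : Fin 2) : IsOpenImmersion (chart.{u} i) :=
  inferInstanceAs (IsOpenImmersion (Proj.awayι 𝒜.{u} (MvPolynomial.X i) (hX i) one_pos))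

lemma chart_cover (z : P1Z.{u}) : ∃ i, z ∈ (chart.{u} i).opensRange := by
  have h := Proj.iSup_basicOpen_eq_top' 𝒜.{u} (fun i : Fin 2 => (MvPolynomial.X i : HA.{u}))
    (fun i => ⟨1, hX i⟩) (by
      rw [eq_top_iff]
      intro p _
      induction p using MvPolynomial.induction_on with
      | C a => exact Subalgebra.algebraMap_mem (Algebra.adjoin (𝒜.{u} 0) _) 
                ⟨MvPolynomial.C a, MvPolynomial.isHomogeneous_C _ _⟩
      | add p q hp hq => exact add_mem (hp trivial) (hq trivial)
      | mul_X p n hp => exact mul_mem (hp trivial) (Algebra.subset_adjoin ⟨n, rfl⟩))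
  have hz : z ∈ (⊤ : (Proj 𝒜.{u}).Opens) := trivial
  rw [← h] at hz
  obtain ⟨i, hi⟩ := (TopologicalSpace.Opens.mem_iSup (α := Proj 𝒜.{u})).mp hz
  refine ⟨i, ?_⟩
  have := Proj.opensRange_awayι 𝒜.{u} (MvPolynomial.X i) (hX i) one_pos
  rw [← this] at hi
  exact hi

/-- the morphism `[1:b]` or `[b:1]`. -/
noncomputable def c {X : Scheme.{u}} (i : Fin 2) (b : Γ(X, ⊤)) : X ⟶ P1Z.{u} :=
  toS (CommRingCat.ofHom (dh i b)) ≫ chart i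

lemma comp_c {X Y : Scheme.{u}} (g : Y ⟶ X) (i : Fin 2) (b : Γ(X, ⊤)) :
    g ≫ c i b = c i (g.appTop b) := by
  rw [c, c, ← Category.assoc, comp_toS]
  congr 2
  ext1
  refine away_hom_ext _ _ _ ?_
  simp [dh_co]

lemma c_inj {X : Scheme.{u}} (i : Fin 2) {b b' : Γ(X, ⊤)} (h : c i b = c i b') : b = b' := by
  rw [c, c, cancel_mono] at h
  have := toS_inj h
  rw [← dh_co i b, ← dh_co i b']
  have := congr($(this).hom (co i (1 - i)))
  simpa using this

lemma c_surj {X : Scheme.{u}} (i : Fin 2) (φ : X ⟶ P1Z.{u})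
    (h : Set.range φ ⊆ (chart.{u} i).opensRange) : ∃ b, φ = c i b := by
  obtain ⟨ψ, hψ⟩ := toS_surj (IsOpenImmersion.lift (chart i) φ h)
  refine ⟨ψ.hom (co i (1 - i)), ?_⟩
  rw [← IsOpenImmersion.lift_fac (chart i) φ h, hψ, c]
  congr 2
  ext1
  exact dh_eq _ _

lemma c_swap {X : Scheme.{u}} (i : Fin 2) (b b' : Γ(X, ⊤)) (h : b * b' = 1) :
    c i b = c (1 - i) b' := by
  have hb : IsUnit b := IsUnit.of_mul_eq_one _ h
  have h2 : (1 - i : Fin 2) ≠ i := by fin_cases i <;> simp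
  let x : HA.{u} := MvPolynomial.X i * MvPolynomial.X (1 - i)
  have hx : x = MvPolynomial.X i * MvPolynomial.X (1 - i) := rfl
  have hx' : x = MvPolynomial.X (1 - i) * MvPolynomial.X i := mul_comm _ _
  have hu : IsUnit (ev (vec i b) x) := by
    simpa [x, vec, h2] using hb
  have hu' : IsUnit (ev (vec i b) (MvPolynomial.X (1 - i))) := by
    simpa [x, vec, h2] using hb
  have e1 := dehom_awayMap _ _ x (vec i b) (hX i) (hX (1 - i)) hx (vec_unit i b) hu
  have e2 := dehom_awayMap _ _ x (vec i b) (hX (1 - i)) (hX i) hx' hu' hu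
  have e3 : dehom _ (vec i b) hu' = dh (1 - i) b' := by
    rw [dh_eq (1 - i) (dehom _ (vec i b) hu')]
    congr 1
    have := dehom_mk _ (vec i b) hu' (hX (1 - i)) 1 (MvPolynomial.X (1 - (1 - i))) 
      (by simpa using hX _)
    have h3 : (1 - (1 - i) : Fin 2) = i := by fin_cases i <;> simp
    simp only [ev_X, pow_one] at this
    simp only [vec, h2, h3, if_false, if_true] at this
    refine hb.mul_right_cancel ?_
    rw [mul_comm b', h, ← this, co]
    simp only [h3]
  have f1 := Proj.SpecMap_awayMap_awayι 𝒜.{u} (hX i) one_pos (hX (1 - i)) hx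
  have f2 := Proj.SpecMap_awayMap_awayι 𝒜.{u} (hX (1 - i)) one_pos (hX i) hx'
  rw [c, c, ← e3, dh, ← e1, ← e2]
  have g1 := toS_comp_SpecMap (CommRingCat.ofHom (awayMap 𝒜 (hX (1 - i)) hx))
    (CommRingCat.ofHom (dehom x (vec i b) hu))
  have g2 := toS_comp_SpecMap (CommRingCat.ofHom (awayMap 𝒜 (hX i) hx'))
    (CommRingCat.ofHom (dehom x (vec i b) hu))
  rw [CommRingCat.ofHom_comp, CommRingCat.ofHom_comp, ← g1, ← g2, Category.assoc, Category.assoc]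
  congr 1
  exact f1.trans f2.symm

lemma c_preimage {X : Scheme.{u}} (i : Fin 2) (b : Γ(X, ⊤)) :
    (c i b) ⁻¹ᵁ (chart.{u} (1 - i)).opensRange = X.basicOpen b := by
  have h := Proj.awayι_preimage_basicOpen 𝒜.{u} (hX i) one_pos (hX (1 - i)) one_pos
  have h' := Proj.opensRange_awayι 𝒜.{u} (MvPolynomial.X (1 - i)) (hX (1 - i)) one_pos
  rw [← h'] at h
  have e : (Away.isLocalizationElem (𝒜 := 𝒜.{u}) (hX i) (hX (1 - i))) = co i (1 - i) := by
    simp [Away.isLocalizationElem, co]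
  rw [e] at h
  rw [c, Scheme.Hom.comp_preimage]
  change toS _ ⁻¹ᵁ (chart i ⁻¹ᵁ (chart (1 - i)).opensRange) = _
  have h3 : chart.{u} i ⁻¹ᵁ (chart (1 - i)).opensRange = PrimeSpectrum.basicOpen (co i (1 - i)) := h
  rw [h3, toS]
  change X.toSpecΓ ⁻¹ᵁ (Spec.map (CommRingCat.ofHom (dh i b)) ⁻¹ᵁ
    PrimeSpectrum.basicOpen (co i (1 - i))) = _
  have h4 : Spec.map (CommRingCat.ofHom (dh i b)) ⁻¹ᵁ PrimeSpectrum.basicOpen (co i (1 - i)) =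
    PrimeSpectrum.basicOpen b := by
    conv_rhs => rw [← dh_co i b]
    rfl
  rw [h4, Scheme.toSpecΓ_preimage_basicOpen]

lemma unit_of_basicOpen {X : Scheme.{u}} (b : Γ(X, ⊤)) (h : X.basicOpen b = ⊤) : IsUnit b := by
  have h3 := RingedSpace.isUnit_res_basicOpen X.toRingedSpace (U := ⊤) b
  have e : IsIso (homOfLE (X.basicOpen_le b)) := by
    refine ⟨homOfLE (le_of_eq h.symm), by subsingleton, by subsingleton⟩
  have : IsIso (X.presheaf.map (homOfLE (X.basicOpen_le b)).op) := inferInstance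
  exact (isUnit_map_iff (X.presheaf.map (homOfLE (X.basicOpen_le b)).op).hom b).mp h3

lemma c_eq_iff {X : Scheme.{u}} (i : Fin 2) (b b' : Γ(X, ⊤)) :
    c i b = c (1 - i) b' ↔ b * b' = 1 := by
  refine ⟨fun h => ?_, c_swap i b b'⟩
  have h1 := c_preimage i b
  have h2 : (c i b) ⁻¹ᵁ (chart.{u} (1 - i)).opensRange = ⊤ := by
    rw [h, c, Scheme.Hom.comp_preimage, eq_top_iff]
    rintro x -
    exact ⟨_, rfl⟩
  rw [h2] at h1
  have hu : IsUnit b := by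
    exact unit_of_basicOpen b h1.symm
  obtain ⟨w, hw⟩ := hu.exists_right_inv
  rw [c_swap i b w hw] at h
  rw [← c_inj _ h, hw]

end P1aux


namespace P1aux

/-- A property of morphisms to `X` holds on an étale covering. -/
def LocE {X : Scheme.{u}} (p : ∀ ⦃Y : Scheme.{u}⦄, (Y ⟶ X) → Prop) : Prop :=
  ∀ x : X, ∃ (Y : Scheme.{u}) (h : Y ⟶ X), Etale h ∧ x ∈ Set.range h ∧ p h

lemma LocE.mem {X : Scheme.{u}} {R : Sieve X} (h : LocE R.arrows) :
    R ∈ Scheme.fppfTopology X := by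
  choose Y h h1 h2 h3 using h
  have : Presieve.ofArrows Y h ∈ Scheme.fppfPrecoverage X := by
    rw [Scheme.fppfPrecoverage, Scheme.ofArrows_mem_precoverage_iff]
    refine ⟨fun x => ⟨x, h2 x⟩, fun i => ?_⟩
    have := h1 i
    exact ⟨inferInstance, inferInstance⟩
  refine GrothendieckTopology.superset_covering _ ?_ (Precoverage.generate_mem_toGrothendieck this)
  rw [Sieve.generate_le_iff]
  rintro _ _ ⟨i⟩
  exact h3 i

lemma LocE.glue {X Z : Scheme.{u}} (Q : ∀ ⦃Y : Scheme.{u}⦄, (Y ⟶ X) → (Y ⟶ Z) → Prop)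
    (func : ∀ ⦃Y : Scheme.{u}⦄ (h : Y ⟶ X) (a b : Y ⟶ Z), Q h a → Q h b → a = b)
    (stab : ∀ ⦃Y Y' : Scheme.{u}⦄ (g : Y' ⟶ Y) (h : Y ⟶ X) (a : Y ⟶ Z), Q h a → Q (g ≫ h) (g ≫ a))
    (cov : LocE (fun _ h => ∃ a, Q h a)) :
    ∃ φ : X ⟶ Z, ∀ ⦃Y : Scheme.{u}⦄ (h : Y ⟶ X) (a : Y ⟶ Z), Q h a → h ≫ φ = a := by
  let R : Sieve X := ⟨fun _ h => ∃ a, Q h a, by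
    rintro Y Z f ⟨a, ha⟩ g
    exact ⟨_, stab g _ _ ha⟩⟩
  have hR : R ∈ Scheme.fppfTopology X := LocE.mem (R := R) cov
  have hs := (GrothendieckTopology.Subcanonical.isSheaf_of_isRepresentable
    (J := Scheme.fppfTopology) (yoneda.obj Z)) R hR
  let fam : Presieve.FamilyOfElements (yoneda.obj Z) R.arrows := fun Y h hh => hh.choose
  have hfam : fam.Compatible := by
    rw [Presieve.compatible_iff_sieveCompatible]
    intro Y Y' h g hh
    exact func _ _ _ (R.downward_closed hh g).choose_spec (stab g _ _ hh.choose_spec)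
  refine ⟨hs.amalgamate fam hfam, fun Y h a ha => ?_⟩
  have := hs.valid_glue hfam h ⟨a, ha⟩
  exact this.trans (func _ _ _ (⟨a, ha⟩ : ∃ a, Q h a).choose_spec ha)

lemma LocE.hom_ext {X Z : Scheme.{u}} {p : ∀ ⦃Y : Scheme.{u}⦄, (Y ⟶ X) → Prop} (hp : LocE p)
    (a b : X ⟶ Z) (H : ∀ ⦃Y : Scheme.{u}⦄ (h : Y ⟶ X), p h → h ≫ a = h ≫ b) : a = b := by
  obtain ⟨φ, hφ⟩ := LocE.glue (X := X) (Z := Z) (fun Y h x => x = h ≫ a ∧ x = h ≫ b)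
    (by rintro Y h _ _ ⟨rfl, _⟩ ⟨rfl, _⟩; rfl)
    (by rintro Y Y' g h x ⟨h1, h2⟩; exact ⟨by simp [h1], by rw [h2, Category.assoc]⟩)
    (by
      intro x
      obtain ⟨Y, h, h1, h2, h3⟩ := hp x
      exact ⟨Y, h, h1, h2, h ≫ a, rfl, H h h3⟩)
  let R : Sieve X := ⟨fun _ h => h ≫ a = h ≫ b, by
    rintro Y Z f ha g
    simp [ha]⟩
  have hR : R ∈ Scheme.fppfTopology X := by
    apply LocE.mem (R := R)
    intro x
    obtain ⟨Y, h, h1, h2, h3⟩ := hp x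
    exact ⟨Y, h, h1, h2, H h h3⟩
  have hs := (GrothendieckTopology.Subcanonical.isSheaf_of_isRepresentable
    (J := Scheme.fppfTopology) (yoneda.obj Z)) R hR
  exact hs.isSeparatedFor.ext fun Y h hh => hh

lemma LocE.mono {X : Scheme.{u}} {p q : ∀ ⦃Y : Scheme.{u}⦄, (Y ⟶ X) → Prop}
    (hp : LocE p) (H : ∀ ⦃Y : Scheme.{u}⦄ (h : Y ⟶ X), p h → q h) : LocE q := by
  intro x
  obtain ⟨Y, h, h1, h2, h3⟩ := hp x
  exact ⟨Y, h, h1, h2, H h h3⟩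

lemma LocE.of_opens {X : Scheme.{u}} {p : ∀ ⦃Y : Scheme.{u}⦄, (Y ⟶ X) → Prop}
    (H : ∀ x : X, ∃ U : X.Opens, x ∈ U ∧ p U.ι) : LocE p := by
  intro x
  obtain ⟨U, hx, h⟩ := H x
  exact ⟨U, U.ι, inferInstance, by simpa using hx, h⟩

lemma LocE.of_id {X : Scheme.{u}} {p : ∀ ⦃Y : Scheme.{u}⦄, (Y ⟶ X) → Prop}
    (H : p (𝟙 X)) : LocE p :=
  fun x => ⟨X, 𝟙 X, inferInstance, ⟨x, rfl⟩, H⟩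

lemma LocE.bind {X : Scheme.{u}} {p q : ∀ ⦃Y : Scheme.{u}⦄, (Y ⟶ X) → Prop}
    (hp : LocE p) (H : ∀ ⦃Y : Scheme.{u}⦄ (h : Y ⟶ X), Etale h → p h →
      LocE (fun _ g => q (g ≫ h))) : LocE q := by
  intro x
  obtain ⟨Y, h, h1, ⟨y, rfl⟩, h3⟩ := hp x
  obtain ⟨Z, g, g1, ⟨z, rfl⟩, g3⟩ := H h h1 h3 y
  exact ⟨Z, g ≫ h, inferInstance, ⟨z, by simp⟩, g3⟩

lemma LocE.pullback {X Y : Scheme.{u}} {p : ∀ ⦃Y : Scheme.{u}⦄, (Y ⟶ X) → Prop}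
    (hp : LocE p) (stab : ∀ ⦃Y Y' : Scheme.{u}⦄ (g : Y' ⟶ Y) (h : Y ⟶ X), p h → p (g ≫ h))
    (f : Y ⟶ X) : LocE (fun _ h => p (h ≫ f)) := by
  intro y
  obtain ⟨Z, h, h1, ⟨z, hz⟩, h3⟩ := hp (f y)
  obtain ⟨w, hw, -⟩ := Scheme.Pullback.exists_preimage_pullback y z hz.symm
  refine ⟨_, pullback.fst f h, inferInstance, ⟨w, hw⟩, ?_⟩
  change p (pullback.fst f h ≫ f)
  rw [pullback.condition]
  exact stab _ _ h3

/-- The point of the projective line with homogeneous coordinates `v`. -/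
def IsPt {X : Scheme.{u}} (φ : X ⟶ P1Z.{u}) (v : Fin 2 → Γ(X, ⊤)) : Prop :=
  ∃ i w, v i * w = 1 ∧ φ = c i (w * v (1 - i))

lemma IsPt.comp {X Y : Scheme.{u}} {φ : X ⟶ P1Z.{u}} {v : Fin 2 → Γ(X, ⊤)} (h : IsPt φ v)
    (g : Y ⟶ X) : IsPt (g ≫ φ) (fun k => g.appTop (v k)) := by
  obtain ⟨i, w, hw, rfl⟩ := h
  exact ⟨i, g.appTop w, by rw [← map_mul, hw, map_one], by rw [comp_c, map_mul]⟩

lemma IsPt.eq_of {X : Scheme.{u}} {φ ψ : X ⟶ P1Z.{u}} {v v' : Fin 2 → Γ(X, ⊤)} (h : IsPt φ v)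
    (h' : IsPt ψ v') (u u' : Γ(X, ⊤)) (hu : u * u' = 1) (e : ∀ k, v' k = u * v k) : φ = ψ := by
  obtain ⟨i, w, hw, rfl⟩ := h
  obtain ⟨j, w', hw', rfl⟩ := h'
  simp only [e] at hw' ⊢
  obtain rfl | rfl : j = i ∨ j = 1 - i := by fin_cases j <;> fin_cases i <;> simp
  · congr 1
    linear_combination (w' * u * v (1 - j)) * hw - (w * v (1 - j)) * hw'
  · have h3 : (1 - (1 - i) : Fin 2) = i := by fin_cases i <;> simp
    rw [h3]
    apply c_swap
    linear_combination (w' * u * v (1 - i)) * hw + hw'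

lemma IsPt.prop {X : Scheme.{u}} {φ : X ⟶ P1Z.{u}} {v v' : Fin 2 → Γ(X, ⊤)} (h : IsPt φ v)
    (h' : IsPt φ v') : ∃ u u', u * u' = 1 ∧ ∀ k, v' k = u * v k := by
  obtain ⟨i, w, hw, rfl⟩ := h
  obtain ⟨j, w', hw', e⟩ := h'
  obtain rfl | rfl : j = i ∨ j = 1 - i := by fin_cases j <;> fin_cases i <;> simp
  · have e2 := c_inj _ e
    refine ⟨w * v' j, w' * v j, by linear_combination v' j * w' * hw + hw', fun k => ?_⟩
    obtain rfl | rfl : k = j ∨ k = 1 - j := by fin_cases j <;> fin_cases k <;> simp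
    · linear_combination (-v' k) * hw
    · linear_combination (-v' (1 - j)) * hw' - v' j * e2
  · have h3 : (1 - (1 - i) : Fin 2) = i := by fin_cases i <;> simp
    rw [h3, c_eq_iff] at e
    refine ⟨w * v' i, w' * v (1 - i), by linear_combination e, fun k => ?_⟩
    obtain rfl | rfl : k = i ∨ k = 1 - i := by fin_cases i <;> fin_cases k <;> simp
    · linear_combination (-v' k) * hw
    · linear_combination (-v' (1 - i)) * e + (w * v (1 - i) * v' i) * hw'

lemma IsPt.exists {X : Scheme.{u}} {v : Fin 2 → Γ(X, ⊤)} (i : Fin 2) (h : IsUnit (v i)) :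
    ∃ φ, IsPt φ v := by
  obtain ⟨w, hw⟩ := h.exists_right_inv
  exact ⟨_, i, w, hw, rfl⟩

lemma IsPt.unimod {X : Scheme.{u}} {φ : X ⟶ P1Z.{u}} {v : Fin 2 → Γ(X, ⊤)} (h : IsPt φ v) :
    ∃ p q, p * v 0 + q * v 1 = 1 := by
  obtain ⟨i, w, hw, rfl⟩ := h
  fin_cases i
  · exact ⟨w, 0, by simpa [mul_comm] using hw⟩
  · exact ⟨0, w, by simpa [mul_comm] using hw⟩

lemma IsPt.c {X : Scheme.{u}} (i : Fin 2) (b : Γ(X, ⊤)) : IsPt (c i b) (vec i b) := by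
  have h2 : (1 - i : Fin 2) ≠ i := by fin_cases i <;> simp
  exact ⟨i, 1, by simp [vec], by simp [vec, h2]⟩

lemma IsPt.local {X : Scheme.{u}} (φ : X ⟶ P1Z.{u}) (x : X) :
    ∃ U : X.Opens, x ∈ U ∧ ∃ v, IsPt (U.ι ≫ φ) v := by
  obtain ⟨i, hi⟩ := chart_cover (φ x)
  refine ⟨φ ⁻¹ᵁ (chart i).opensRange, hi, ?_⟩
  obtain ⟨b, hb⟩ := c_surj i ((φ ⁻¹ᵁ (chart i).opensRange).ι ≫ φ) (by
    rintro _ ⟨y, rfl⟩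
    exact y.2)
  exact ⟨_, hb ▸ IsPt.c i b⟩

lemma unimod_local {X : Scheme.{u}} (a b p q : Γ(X, ⊤)) (h : p * a + q * b = 1) (x : X) :
    x ∈ X.basicOpen a ∨ x ∈ X.basicOpen b := by
  rw [Scheme.mem_basicOpen_top, Scheme.mem_basicOpen_top]
  have h0 := congr(X.presheaf.germ ⊤ x trivial $h)
  rw [map_add, map_mul, map_mul, map_one] at h0
  by_contra! hc
  have h1 := (IsLocalRing.mem_maximalIdeal _).mpr hc.1
  have h2 := (IsLocalRing.mem_maximalIdeal _).mpr hc.2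
  have := Ideal.add_mem _ (Ideal.mul_mem_left _ (X.presheaf.germ ⊤ x trivial p) h1)
    (Ideal.mul_mem_left _ (X.presheaf.germ ⊤ x trivial q) h2)
  rw [h0] at this
  exact (IsLocalRing.mem_maximalIdeal _).mp this isUnit_one

lemma isUnit_basicOpen_ι {X : Scheme.{u}} (a : Γ(X, ⊤)) :
    IsUnit ((X.basicOpen a).ι.appTop a) := by
  apply unit_of_basicOpen
  rw [← Scheme.preimage_basicOpen_top]
  exact Scheme.Opens.ι_preimage_self _

lemma IsPt.local_exists {X : Scheme.{u}} (v : Fin 2 → Γ(X, ⊤)) (p q : Γ(X, ⊤))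
    (h : p * v 0 + q * v 1 = 1) (x : X) :
    ∃ U : X.Opens, x ∈ U ∧ ∃ φ, IsPt φ (fun k => U.ι.appTop (v k)) := by
  rcases unimod_local _ _ _ _ h x with hx | hx
  · exact ⟨_, hx, IsPt.exists 0 (isUnit_basicOpen_ι _)⟩
  · exact ⟨_, hx, IsPt.exists 1 (isUnit_basicOpen_ι _)⟩

end P1aux


namespace P1aux

/-- `π` trivialises `f`. -/
abbrev Triv {P S : Scheme.{u}} (f : P ⟶ S) (π : P ⟶ P1Z.{u}) : Prop :=
  IsPullback f π (terminal.from S) (terminal.from P1Z)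

/-- action of matrices. -/
noncomputable def act {S Y : Scheme.{u}} (M : Fin 2 → Fin 2 → Γ(S, ⊤)) (g : Y ⟶ S)
    (v : Fin 2 → Γ(Y, ⊤)) : Fin 2 → Γ(Y, ⊤) :=
  fun k => g.appTop (M k 0) * v 0 + g.appTop (M k 1) * v 1

lemma act_comp {S Y Z : Scheme.{u}} (M : Fin 2 → Fin 2 → Γ(S, ⊤)) (g : Y ⟶ S)
    (v : Fin 2 → Γ(Y, ⊤)) (q : Z ⟶ Y) :
    (fun k => q.appTop (act M g v k)) = act M (q ≫ g) (fun k => q.appTop (v k)) := by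
  ext k
  simp [act]
  rfl

/-- `N * M = 1`. -/
def LInv {S : Scheme.{u}} (N M : Fin 2 → Fin 2 → Γ(S, ⊤)) : Prop :=
  ∀ k l, N k 0 * M 0 l + N k 1 * M 1 l = if k = l then 1 else 0

lemma act_act {S Y : Scheme.{u}} {N M : Fin 2 → Fin 2 → Γ(S, ⊤)} (h : LInv N M) (g : Y ⟶ S)
    (v : Fin 2 → Γ(Y, ⊤)) : act N g (act M g v) = v := by
  have h' : ∀ k l, g.appTop (N k 0) * g.appTop (M 0 l) + g.appTop (N k 1) * g.appTop (M 1 l)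
      = if k = l then 1 else 0 := by
    intro k l
    rw [← map_mul, ← map_mul, ← map_add, h]
    split_ifs <;> simp
  ext k
  simp only [act]
  have h0 := h' k 0
  have h1 := h' k 1
  fin_cases k
  · simp at h0 h1 ⊢
    linear_combination v 0 * h0 + v 1 * h1
  · simp at h0 h1 ⊢
    linear_combination v 0 * h0 + v 1 * h1

lemma act_unimod {S Y : Scheme.{u}} {N M : Fin 2 → Fin 2 → Γ(S, ⊤)} (h : LInv N M) (g : Y ⟶ S)
    (v : Fin 2 → Γ(Y, ⊤)) (p q : Γ(Y, ⊤)) (hv : p * v 0 + q * v 1 = 1) :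
    ∃ p q, p * act M g v 0 + q * act M g v 1 = 1 := by
  have h0 := congr($(act_act h g v) 0)
  have h1 := congr($(act_act h g v) 1)
  rw [act] at h0 h1
  exact ⟨p * g.appTop (N 0 0) + q * g.appTop (N 1 0), p * g.appTop (N 0 1) + q * g.appTop (N 1 1),
    by linear_combination p * h0 + q * h1 + hv⟩

lemma act_cov {S P : Scheme.{u}} {N M : Fin 2 → Fin 2 → Γ(S, ⊤)} (hNM : LInv N M) (f : P ⟶ S)
    (π : P ⟶ P1Z.{u}) :
    LocE (fun _ h => ∃ ψ v, IsPt (h ≫ π) v ∧ IsPt ψ (act M (h ≫ f) v)) := by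
  have h1 : LocE (fun _ h => ∃ v, IsPt (h ≫ π) v) := LocE.of_opens (IsPt.local π)
  refine h1.bind ?_
  rintro Y h _ ⟨v, hv⟩
  obtain ⟨p, q, hpq⟩ := hv.unimod
  obtain ⟨p, q, hpq⟩ := act_unimod hNM (h ≫ f) v p q hpq
  refine LocE.of_opens fun x => ?_
  obtain ⟨U, hxU, ψ, hψ⟩ := IsPt.local_exists _ p q hpq x
  refine ⟨U, hxU, ψ, _, by simpa using hv.comp U.ι, ?_⟩
  rw [act_comp] at hψ
  simpa using hψ

/-- `π'` is `M π`. -/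
def IsAct {S P : Scheme.{u}} (M : Fin 2 → Fin 2 → Γ(S, ⊤)) (f : P ⟶ S) (π π' : P ⟶ P1Z.{u}) : Prop :=
  ∀ ⦃Y : Scheme.{u}⦄ (h : Y ⟶ P) (ψ : Y ⟶ P1Z.{u}) (v), IsPt (h ≫ π) v →
    IsPt ψ (act M (h ≫ f) v) → h ≫ π' = ψ

lemma act_exists {S P : Scheme.{u}} {N M : Fin 2 → Fin 2 → Γ(S, ⊤)} (hNM : LInv N M) (f : P ⟶ S)
    (π : P ⟶ P1Z.{u}) : ∃ π', IsAct M f π π' := by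
  have func : ∀ ⦃Y : Scheme.{u}⦄ (h : Y ⟶ P) (ψ ψ' : Y ⟶ P1Z.{u}),
      (∃ v, IsPt (h ≫ π) v ∧ IsPt ψ (act M (h ≫ f) v)) →
      (∃ v, IsPt (h ≫ π) v ∧ IsPt ψ' (act M (h ≫ f) v)) → ψ = ψ' := by
    rintro Y h ψ ψ' ⟨v, h1, h2⟩ ⟨v', h1', h2'⟩
    obtain ⟨u, u', hu, e⟩ := h1.prop h1'
    refine h2.eq_of h2' u u' hu fun k => ?_
    simp only [act, e]
    ring
  have stab : ∀ ⦃Y Y' : Scheme.{u}⦄ (g : Y' ⟶ Y) (h : Y ⟶ P) (ψ : Y ⟶ P1Z.{u}),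
      (∃ v, IsPt (h ≫ π) v ∧ IsPt ψ (act M (h ≫ f) v)) →
      (∃ v, IsPt ((g ≫ h) ≫ π) v ∧ IsPt (g ≫ ψ) (act M ((g ≫ h) ≫ f) v)) := by
    rintro Y Y' g h ψ ⟨v, h1, h2⟩
    refine ⟨_, by simpa using h1.comp g, ?_⟩
    have := h2.comp g
    rw [act_comp] at this
    simpa using this
  obtain ⟨π', hh⟩ := LocE.glue (X := P) (Z := P1Z)
    (fun Y h ψ => ∃ v, IsPt (h ≫ π) v ∧ IsPt ψ (act M (h ≫ f) v)) func stab (act_cov hNM f π)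
  exact ⟨π', fun Y h ψ v h1 h2 => hh h ψ ⟨v, h1, h2⟩⟩

lemma act_inv {S P : Scheme.{u}} {N M : Fin 2 → Fin 2 → Γ(S, ⊤)} (hNM : LInv N M) (f : P ⟶ S)
    (π π' π'' : P ⟶ P1Z.{u}) (hπ : Triv f π) (h1 : IsAct M f π π') (h2 : IsAct N f π π'') :
    hπ.lift f π' (by simp) ≫ hπ.lift f π'' (by simp) = 𝟙 P := by
  refine (act_cov hNM f π).hom_ext _ _ ?_
  rintro Y h ⟨ψ, v, hv, hψ⟩
  refine hπ.hom_ext (by simp) ?_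
  simp only [Category.assoc, Category.id_comp, IsPullback.lift_snd]
  rw [← Category.assoc]
  have e := h1 h ψ v hv hψ
  refine h2 _ _ (act M (h ≫ f) v) ?_ ?_
  · simpa [e] using hψ
  · have := act_act hNM (h ≫ f) v
    simpa [this] using hv

lemma act_triv {S P : Scheme.{u}} {N M : Fin 2 → Fin 2 → Γ(S, ⊤)} (hNM : LInv N M)
    (hMN : LInv M N) {f : P ⟶ S} {π : P ⟶ P1Z.{u}} (hπ : Triv f π) :
    ∃ π', Triv f π' ∧ IsAct M f π π' := by
  obtain ⟨π', h1⟩ := act_exists hNM f π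
  obtain ⟨π'', h2⟩ := act_exists hMN f π
  refine ⟨π', ?_, h1⟩
  let e : P ≅ P := ⟨_, _, act_inv hNM f π π' π'' hπ h1 h2, act_inv hMN f π π'' π' hπ h2 h1⟩
  exact hπ.of_iso e.symm (Iso.refl _) (Iso.refl _) (Iso.refl _) (by simp [e]) (by
    rw [← Iso.inv_comp_eq]; simp [e]) (by simp) (by simp)

end P1aux


namespace P1aux

lemma IsPt.eq_of_det {X : Scheme.{u}} {φ ψ : X ⟶ P1Z.{u}} {v v' : Fin 2 → Γ(X, ⊤)} (h : IsPt φ v)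
    (h' : IsPt ψ v') (e : v 0 * v' 1 - v 1 * v' 0 = 0) : φ = ψ := by
  have h0 := h
  obtain ⟨i, t, ht, -⟩ := h
  obtain ⟨p, q, hpq⟩ := h'.unimod
  refine h0.eq_of h' (v' i * t) (p * v 0 + q * v 1) ?_ fun k => ?_
  · fin_cases i <;> simp at ht ⊢
    · linear_combination hpq + (p * v' 0 + q * v' 1) * ht - t * q * e
    · linear_combination hpq + (p * v' 0 + q * v' 1) * ht + t * p * e
  · fin_cases i <;> fin_cases k <;> simp at ht ⊢
    · linear_combination (-v' 0) * ht
    · linear_combination (-v' 1) * ht + t * e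
    · linear_combination (-v' 0) * ht - t * e
    · linear_combination (-v' 1) * ht

lemma isUnit_of_field_points {X : Scheme.{u}} (a : Γ(X, ⊤))
    (h : ∀ (K : Type u) [Field K] (x : Spec (.of K) ⟶ X), x.appTop a ≠ 0) : IsUnit a := by
  apply unit_of_basicOpen
  rw [eq_top_iff]
  intro x _
  have h1 : (X.fromSpecResidueField x).appTop a ≠ 0 := h _ (X.fromSpecResidueField x)
  have h2 : IsUnit ((X.fromSpecResidueField x).appTop a) := by
    have h3 : (Scheme.ΓSpecIso (X.residueField x)).hom ((X.fromSpecResidueField x).appTop a) ≠ 0 := by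
      intro h4
      apply h1
      apply (Scheme.ΓSpecIso (X.residueField x)).commRingCatIsoToRingEquiv.injective
      exact h4.trans (map_zero _).symm
    have h5 := IsUnit.mk0 _ h3
    exact (isUnit_map_iff (Scheme.ΓSpecIso (X.residueField x)).hom.hom _).mp h5
  have h6 := Scheme.basicOpen_of_isUnit (X := Spec (X.residueField x)) h2
  rw [← Scheme.preimage_basicOpen_top] at h6
  obtain ⟨z, hz⟩ : x ∈ Set.range (X.fromSpecResidueField x) := by
    rw [X.range_fromSpecResidueField x]; rfl
  have h7 : z ∈ (⊤ : (Spec (X.residueField x)).Opens) := trivial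
  rw [← h6] at h7
  have h8 : (X.fromSpecResidueField x) z ∈ X.basicOpen a := h7
  rwa [hz] at h8

lemma det_unit {S P : Scheme.{u}} {f : P ⟶ S} {π : P ⟶ P1Z.{u}} (hπ : Triv f π) (s s' : S ⟶ P)
    (hs : s ≫ f = 𝟙 S) (hs' : s' ≫ f = 𝟙 S) (v v' : Fin 2 → Γ(S, ⊤)) (hv : IsPt (s ≫ π) v)
    (hv' : IsPt (s' ≫ π) v')
    (h : ∀ (K : Type u) [Field K] (x : Spec (.of K) ⟶ S), x ≫ s ≠ x ≫ s') :
    IsUnit (v 0 * v' 1 - v 1 * v' 0) := by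
  refine isUnit_of_field_points _ fun K _ x hx => h K x ?_
  refine hπ.hom_ext (by simp [hs, hs']) ?_
  simp only [Category.assoc]
  refine (hv.comp x).eq_of_det (hv'.comp x) ?_
  simpa using hx

/-- a standard trivialisation with respect to three sections -/
structure Std {S P : Scheme.{u}} (f : P ⟶ S) (s : Fin 3 → (S ⟶ P)) (π : P ⟶ P1Z.{u}) : Prop where
  triv : Triv f π
  h0 : s 0 ≫ π = c 0 0
  h1 : s 1 ≫ π = c 1 0
  h2 : s 2 ≫ π = c 0 1

lemma exists_std {S P : Scheme.{u}} {f : P ⟶ S} {π : P ⟶ P1Z.{u}} (hπ : Triv f π)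
    (s : Fin 3 → (S ⟶ P)) (hs : ∀ i, s i ≫ f = 𝟙 S)
    (v : Fin 3 → Fin 2 → Γ(S, ⊤)) (hv : ∀ i, IsPt (s i ≫ π) (v i))
    (h : ∀ i j, i ≠ j → ∀ (K : Type u) [Field K] (x : Spec (.of K) ⟶ S), x ≫ s i ≠ x ≫ s j) :
    ∃ π', Std f s π' := by
  have d := fun i j hij => (det_unit hπ (s i) (s j) (hs i) (hs j) (v i) (v j) (hv i) (hv j)
    (h i j hij)).exists_right_inv
  obtain ⟨e, he⟩ := d 0 1 (by decide)
  obtain ⟨a, ha⟩ := d 2 1 (by decide)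
  obtain ⟨b, hb⟩ := d 0 2 (by decide)
  let D21 := v 2 0 * v 1 1 - v 2 1 * v 1 0
  let D02 := v 0 0 * v 2 1 - v 0 1 * v 2 0
  let M : Fin 2 → Fin 2 → Γ(S, ⊤) := ![![v 1 1 * a, - v 1 0 * a], ![- v 0 1 * b, v 0 0 * b]]
  let N : Fin 2 → Fin 2 → Γ(S, ⊤) :=
    ![![v 0 0 * e * D21, v 1 0 * e * D02], ![v 0 1 * e * D21, v 1 1 * e * D02]]
  have hNM : LInv N M := by
    intro k l
    fin_cases k <;> fin_cases l <;> simp [M, N, D21, D02]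
    · linear_combination v 0 0 * e * v 1 1 * ha - v 1 0 * e * v 0 1 * hb + he
    · linear_combination - v 0 0 * e * v 1 0 * ha + v 1 0 * e * v 0 0 * hb
    · linear_combination v 0 1 * e * v 1 1 * ha - v 1 1 * e * v 0 1 * hb
    · linear_combination - v 0 1 * e * v 1 0 * ha + v 1 1 * e * v 0 0 * hb + he
  have hMN : LInv M N := by
    intro k l
    fin_cases k <;> fin_cases l <;> simp [M, N, D21, D02]
    · linear_combination (v 2 0 * v 1 1 - v 2 1 * v 1 0) * a * he + ha
    · ring
    · ring
    · linear_combination (v 0 0 * v 2 1 - v 0 1 * v 2 0) * b * he + hb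
  obtain ⟨π', h1, h2⟩ := act_triv hNM hMN hπ
  refine ⟨π', h1, h2 _ _ _ (hv 0) ⟨0, e * D21, ?_, ?_⟩, h2 _ _ _ (hv 1) ⟨1, e * D02, ?_, ?_⟩,
    h2 _ _ _ (hv 2) ⟨0, 1, ?_, ?_⟩⟩
  · rw [hs]; simp [act, M, D21]
    linear_combination (v 2 0 * v 1 1 - v 2 1 * v 1 0) * a * he + ha
  · rw [hs]; simp [act, M]; congr 1; ring
  · rw [hs]; simp [act, M, D02]
    linear_combination (v 0 0 * v 2 1 - v 0 1 * v 2 0) * b * he + hb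
  · rw [hs]; simp [act, M]; congr 1; ring
  · rw [hs]; simp [act, M]
    linear_combination ha
  · rw [hs]; simp [act, M]; congr 1
    linear_combination - hb

end P1aux


namespace P1aux

lemma spec_field_unit {K : CommRingCat.{u}} (hK : IsField K) (a : Γ(Spec K, ⊤)) (ha : a ≠ 0) :
    IsUnit a := by
  let _ := hK.toField
  have h3 : (Scheme.ΓSpecIso K).hom a ≠ 0 := by
    intro h4
    apply ha
    apply (Scheme.ΓSpecIso K).commRingCatIsoToRingEquiv.injective
    exact h4.trans (map_zero _).symm
  have h5 := IsUnit.mk0 _ h3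
  exact (isUnit_map_iff (Scheme.ΓSpecIso K).hom.hom _).mp h5

lemma mem_chart_iff {S P : Scheme.{u}} {f : P ⟶ S} {π : P ⟶ P1Z.{u}} (hπ : Triv f π) (i : Fin 2)
    (s : S ⟶ P) (hs : s ≫ f = 𝟙 S) (h0 : s ≫ π = c (1 - i) 0) (p : P) :
    π p ∈ (chart i).opensRange ↔ p ≠ s (f p) := by
  have h3 : (1 - (1 - i) : Fin 2) = i := by fin_cases i <;> simp
  have key := c_preimage (1 - i) (0 : Γ(S, ⊤))
  rw [h3] at key
  constructor
  · intro h1 h2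
    have e : π p = c (1 - i) (0 : Γ(S, ⊤)) (f p) := by
      rw [← h0, Scheme.Hom.comp_apply, ← h2]
    rw [e] at h1
    have h4 : f p ∈ c (1 - i) (0 : Γ(S, ⊤)) ⁻¹ᵁ (chart i).opensRange := h1
    rw [key] at h4
    simp at h4
  · intro h1
    by_contra h2
    apply h1
    have h4 : π p ∈ (chart (1 - i)).opensRange := by
      obtain ⟨j, hj⟩ := chart_cover (π p)
      obtain rfl | rfl : j = i ∨ j = 1 - i := by fin_cases j <;> fin_cases i <;> simp
      · exact absurd hj h2
      · exact hj
    obtain ⟨b, hb⟩ := c_surj (1 - i) (P.fromSpecResidueField p ≫ π) (by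
      rintro _ ⟨z, rfl⟩
      have : (P.fromSpecResidueField p ≫ π) z = π p := by
        rw [Scheme.Hom.comp_apply, P.fromSpecResidueField_apply]
      rw [this]; exact h4)
    have hb0 : b = 0 := by
      by_contra hb0
      have := Scheme.basicOpen_of_isUnit (X := Spec (P.residueField p))
        (spec_field_unit (Field.toIsField _) b hb0)
      rw [← c_preimage (1 - i) b, h3, ← hb] at this
      obtain ⟨z, hz⟩ : p ∈ Set.range (P.fromSpecResidueField p) := by
        rw [P.range_fromSpecResidueField p]; rfl
      have h7 : z ∈ (⊤ : (Spec (P.residueField p)).Opens) := trivial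
      rw [← this] at h7
      have h8 : (P.fromSpecResidueField p ≫ π) z ∈ (chart i).opensRange := h7
      rw [Scheme.Hom.comp_apply, hz] at h8
      exact h2 h8
    have h5 : P.fromSpecResidueField p = P.fromSpecResidueField p ≫ f ≫ s := by
      refine hπ.hom_ext (by simp [hs]) ?_
      rw [hb, hb0, Category.assoc, Category.assoc, h0, comp_c, comp_c, map_zero, map_zero]
    obtain ⟨z, hz⟩ : p ∈ Set.range (P.fromSpecResidueField p) := by
      rw [P.range_fromSpecResidueField p]; rfl
    have h6 := congr($h5 z)
    rw [Scheme.Hom.comp_apply, Scheme.Hom.comp_apply, hz] at h6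
    exact h6

lemma chart_stable {S P : Scheme.{u}} {f : P ⟶ S} {π : P ⟶ P1Z.{u}} (hπ : Triv f π) (i : Fin 2)
    (s : S ⟶ P) (hs : s ≫ f = 𝟙 S) (h0 : s ≫ π = c (1 - i) 0) (α : P ⟶ P) [IsIso α]
    (hα : α ≫ f = f) (hsα : s ≫ α = s) {Y : Scheme.{u}} (h : Y ⟶ P) (b : Γ(Y, ⊤))
    (hb : h ≫ π = c i b) : ∃ b', h ≫ α ≫ π = c i b' := by
  apply c_surj
  rintro _ ⟨y, rfl⟩
  have h1 : π (h y) ∈ (chart i).opensRange := by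
    rw [← Scheme.Hom.comp_apply, hb, c]
    exact ⟨_, rfl⟩
  rw [mem_chart_iff hπ i s hs h0] at h1
  have : π (α (h y)) ∈ (chart i).opensRange := by
    rw [mem_chart_iff hπ i s hs h0]
    intro h2
    apply h1
    apply α.injective
    have e : f (α (h y)) = f (h y) := by rw [← Scheme.Hom.comp_apply, hα]
    rw [← Scheme.Hom.comp_apply s α, hsα, h2, e]
  simpa using this

/-- scalars -/
noncomputable def sc {R : CommRingCat.{u}} {Y : Scheme.{u}} (g : Y ⟶ Spec R) : R →+* Γ(Y, ⊤) :=
  ((Scheme.ΓSpecIso R).inv ≫ g.appTop).hom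

lemma toS_sc {R : CommRingCat.{u}} {Y : Scheme.{u}} (g : Y ⟶ Spec R) :
    toS (CommRingCat.ofHom (sc g)) = g := by
  obtain ⟨φ, rfl⟩ := toS_surj g
  rw [sc, toS_appTop]; rfl

lemma action_poly {R : CommRingCat.{u}} {P : Scheme.{u}} {f : P ⟶ Spec R} {π : P ⟶ P1Z.{u}}
    (hπ : Triv f π) (i : Fin 2)
    (s : Spec R ⟶ P) (hs : s ≫ f = 𝟙 _) (h0 : s ≫ π = c (1 - i) 0) (α : P ⟶ P) [IsIso α]
    (hα : α ≫ f = f) (hsα : s ≫ α = s) :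
    ∃ p : Polynomial R, ∀ (Y : Scheme.{u}) (h : Y ⟶ P) (b : Γ(Y, ⊤)), h ≫ π = c i b →
      h ≫ α ≫ π = c i (p.eval₂ (sc (h ≫ f)) b) := by
  let A : CommRingCat.{u} := .of (Polynomial R)
  let C : R ⟶ A := CommRingCat.ofHom Polynomial.C
  let t : Γ(Spec A, ⊤) := (Scheme.ΓSpecIso A).inv (Polynomial.X : Polynomial R)
  let ch : Spec A ⟶ P := hπ.lift (Spec.map C) (c i t) (by simp)
  obtain ⟨b', hb'⟩ := chart_stable hπ i s hs h0 α hα hsα ch t (by simp [ch])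
  refine ⟨(Scheme.ΓSpecIso A).hom b', fun Y h b hb => ?_⟩
  let ψ : A ⟶ Γ(Y, ⊤) := CommRingCat.ofHom (Polynomial.eval₂RingHom (sc (h ≫ f)) b)
  have e := toS_appTop ψ
  have e1 : ∀ q : A, (toS ψ).appTop ((Scheme.ΓSpecIso A).inv q) =
      Polynomial.eval₂ (sc (h ≫ f)) b q := fun q => congr($(e).hom q)
  have e2 : h = toS ψ ≫ ch := by
    refine hπ.hom_ext ?_ ?_
    · simp only [Category.assoc, ch, IsPullback.lift_fst]
      rw [toS_comp_SpecMap]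
      conv_lhs => rw [← toS_sc (h ≫ f)]
      congr 1
      ext x
      simp [ψ, C]
      exact (Polynomial.eval₂_C _ _).symm
    · simp only [Category.assoc, ch, IsPullback.lift_snd]
      rw [comp_c, hb, e1, Polynomial.eval₂_X]
  rw [← e1]
  conv_lhs => rw [e2, Category.assoc, hb', comp_c]
  congr 2
  simp

end P1aux


namespace P1aux

lemma trunc_inv {R : Type u} [CommRing R] (r : Polynomial R) :
    LaurentPolynomial.trunc (r.eval₂ LaurentPolynomial.C (LaurentPolynomial.T (-1))) =
      Polynomial.C (r.coeff 0) := by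
  induction r using Polynomial.induction_on' with
  | add p q hp hq => simp [Polynomial.eval₂_add, hp, hq]
  | monomial n a =>
    rw [Polynomial.eval₂_monomial, LaurentPolynomial.T_pow, LaurentPolynomial.trunc_C_mul_T]
    rcases n with _ | n
    · simp
    · rw [if_neg (by push_cast; omega), Polynomial.coeff_monomial, if_neg (by omega), map_zero]

lemma poly_rigid {R : Type u} [CommRing R] (p r p' : Polynomial R) (h0 : p.eval 0 = 0)
    (h1 : p.eval 1 = 1) (hr0 : r.eval 0 = 0) (hp'0 : p'.eval 0 = 0) (hp' : p'.comp p = Polynomial.X)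
    (hpr : p.eval₂ LaurentPolynomial.C (LaurentPolynomial.T 1) *
      r.eval₂ LaurentPolynomial.C (LaurentPolynomial.T (-1)) = 1) : p = Polynomial.X := by
  rw [← Polynomial.coeff_zero_eq_eval_zero, ← Polynomial.X_dvd_iff] at h0 hr0 hp'0
  obtain ⟨q, rfl⟩ := h0
  obtain ⟨r, rfl⟩ := hr0
  obtain ⟨q', rfl⟩ := hp'0
  have hu : q * q'.comp (Polynomial.X * q) = 1 := by
    apply Polynomial.isRegular_X.left
    simp only [Polynomial.mul_comp, Polynomial.X_comp] at hp'
    linear_combination hp'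
  set Q := q'.comp (Polynomial.X * q) with hQ
  have hq : ∀ s : Polynomial R, s.eval₂ LaurentPolynomial.C (LaurentPolynomial.T 1) =
      Polynomial.toLaurent s := by
    intro s
    have : Polynomial.eval₂RingHom LaurentPolynomial.C (LaurentPolynomial.T 1) =
      (Polynomial.toLaurent (R := R)) := by
      ext <;> simp
    exact congr($this s)
  rw [hq, map_mul, Polynomial.toLaurent_X, Polynomial.eval₂_mul, Polynomial.eval₂_X] at hpr
  have hT : (LaurentPolynomial.T 1 : LaurentPolynomial R) * LaurentPolynomial.T (-1) = 1 := by
    rw [← LaurentPolynomial.T_add]; simp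
  have hu' := congr(Polynomial.toLaurent $hu)
  rw [map_mul, map_one] at hu'
  have e : Polynomial.toLaurent Q =
      r.eval₂ LaurentPolynomial.C (LaurentPolynomial.T (-1)) := by
    set A := Polynomial.toLaurent q
    set B := Polynomial.toLaurent Q
    set D := r.eval₂ LaurentPolynomial.C (LaurentPolynomial.T (-1))
    linear_combination (-B) * hpr + A * D * B * hT + D * hu'
  have e2 := congr(LaurentPolynomial.trunc $e)
  rw [Polynomial.trunc_toLaurent, trunc_inv] at e2
  have h3 := congr(Polynomial.eval 1 $hu)
  rw [e2] at h3 hu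
  simp at h3 h1
  rw [h1, one_mul] at h3
  rw [h3] at hu
  simp at hu
  rw [hu, mul_one]

/-- action on chart `i` through polynomial `p` -/
def Acts {R : CommRingCat.{u}} {P : Scheme.{u}} (f : P ⟶ Spec R) (π : P ⟶ P1Z.{u}) (α : P ⟶ P)
    (i : Fin 2) (p : Polynomial R) : Prop :=
  ∀ (Y : Scheme.{u}) (h : Y ⟶ P) (b : Γ(Y, ⊤)), h ≫ π = c i b →
      h ≫ α ≫ π = c i (p.eval₂ (sc (h ≫ f)) b)

lemma sc_map {R B : CommRingCat.{u}} (ρ : R ⟶ B) (p : Polynomial R) (b : B) :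
    p.eval₂ (sc (Spec.map ρ)) ((Scheme.ΓSpecIso B).inv b) =
      (Scheme.ΓSpecIso B).inv (p.eval₂ ρ.hom b) := by
  have : sc (Spec.map ρ) = (Scheme.ΓSpecIso B).inv.hom.comp ρ.hom := by
    rw [sc, ← Scheme.ΓSpecIso_inv_naturality]; rfl
  rw [this, ← Polynomial.hom_eval₂]

lemma inv_inj {B : CommRingCat.{u}} {a b : B}
    (h : (Scheme.ΓSpecIso B).inv a = (Scheme.ΓSpecIso B).inv b) : a = b :=
  (Scheme.ΓSpecIso B).symm.commRingCatIsoToRingEquiv.injective h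

lemma Acts.eval {R : CommRingCat.{u}} {P : Scheme.{u}} {f : P ⟶ Spec R} {π : P ⟶ P1Z.{u}}
    {α : P ⟶ P} {i : Fin 2} {p : Polynomial R} (h : Acts f π α i p)
    (s : Spec R ⟶ P) (hs : s ≫ f = 𝟙 _) (hsα : s ≫ α = s) (b : R)
    (hb : s ≫ π = c i ((Scheme.ΓSpecIso R).inv b)) : p.eval b = b := by
  have h1 := h _ s _ hb
  rw [← Category.assoc, hsα, hb, hs, ← Spec.map_id, sc_map] at h1
  have := inv_inj (c_inj i h1)
  exact this.symm

lemma Acts.eq_X {R : CommRingCat.{u}} {P : Scheme.{u}} {f : P ⟶ Spec R} {π : P ⟶ P1Z.{u}}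
    (hπ : Triv f π) {α : P ⟶ P} [IsIso α] (hα : α ≫ f = f) {i : Fin 2} {p r p' : Polynomial R}
    (h : Acts f π α i p) (hr : Acts f π α (1 - i) r) (h' : Acts f π (inv α) i p')
    (z : Fin 2 → (Spec R ⟶ P)) (u : Spec R ⟶ P) (hz : ∀ k, z k ≫ f = 𝟙 _)
    (hu : u ≫ f = 𝟙 _) (hzα : ∀ k, z k ≫ α = z k) (huα : u ≫ α = u)
    (hzπ : ∀ k, z k ≫ π = c k 0) (huπ : u ≫ π = c i 1) : p = Polynomial.X := by
  have hα' : inv α ≫ f = f := by rw [IsIso.inv_comp_eq, hα]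
  refine poly_rigid p r p' (h.eval (z i) (hz i) (hzα i) 0 (by rw [map_zero]; exact hzπ i))
    (h.eval u hu huα 1 (by rw [map_one]; exact huπ))
    (hr.eval (z _) (hz _) (hzα _) 0 (by rw [map_zero]; exact hzπ _))
    (h'.eval (z i) (hz i) (by rw [IsIso.comp_inv_eq, hzα]) 0 (by rw [map_zero]; exact hzπ i)) ?_ ?_
  · let A : CommRingCat.{u} := .of (Polynomial R)
    let C : R ⟶ A := CommRingCat.ofHom Polynomial.C
    let X : A := (Polynomial.X : Polynomial R)
    let ch : Spec A ⟶ P := hπ.lift (Spec.map C) (c i ((Scheme.ΓSpecIso A).inv X)) (by simp)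
    have h1 := h _ ch ((Scheme.ΓSpecIso A).inv X) (by simp [ch])
    have e : ch ≫ f = Spec.map C := by simp [ch]
    have e' : (ch ≫ α) ≫ f = Spec.map C := by simp [ch, hα]
    rw [e, sc_map, ← Category.assoc] at h1
    have h2 := h' _ _ _ h1
    rw [e', sc_map] at h2
    simp only [Category.assoc, IsIso.hom_inv_id_assoc] at h2
    have h3 : ch ≫ π = c i ((Scheme.ΓSpecIso A).inv X) := by simp [ch]
    rw [h3] at h2
    have h4 := inv_inj (c_inj i h2)
    have h5 : Polynomial.eval₂ C.hom X p = p := Polynomial.eval₂_C_X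
    rw [h5] at h4
    exact h4.symm
  · let A : CommRingCat.{u} := .of (LaurentPolynomial R)
    let C : R ⟶ A := CommRingCat.ofHom LaurentPolynomial.C
    let T : A := (LaurentPolynomial.T 1 : LaurentPolynomial R)
    let T' : A := (LaurentPolynomial.T (-1) : LaurentPolynomial R)
    have hT : T * T' = 1 := by
      change (LaurentPolynomial.T 1 : LaurentPolynomial R) * LaurentPolynomial.T (-1) = 1
      rw [← LaurentPolynomial.T_add]; simp
    let ch : Spec A ⟶ P := hπ.lift (Spec.map C) (c i ((Scheme.ΓSpecIso A).inv T)) (by simp)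
    have e : ch ≫ f = Spec.map C := by simp [ch]
    have h1 := h _ ch ((Scheme.ΓSpecIso A).inv T) (by simp [ch])
    have h2 := hr _ ch ((Scheme.ΓSpecIso A).inv T') (by
      simp only [ch, IsPullback.lift_snd]
      apply c_swap
      rw [← map_mul, hT, map_one])
    rw [h1, e, sc_map, sc_map, c_eq_iff, ← map_mul] at h2
    exact inv_inj (h2.trans (map_one _).symm)

theorem rigid {R : CommRingCat.{u}} {P : Scheme.{u}} {f : P ⟶ Spec R} {π : P ⟶ P1Z.{u}}
    {s : Fin 3 → (Spec R ⟶ P)} (H : Std f s π) (hs : ∀ i, s i ≫ f = 𝟙 _)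
    (α : P ⟶ P) [IsIso α] (hα : α ≫ f = f) (hsα : ∀ i, s i ≫ α = s i) : α = 𝟙 P := by
  have hπ := H.triv
  have hα' : inv α ≫ f = f := by rw [IsIso.inv_comp_eq, hα]
  let z : Fin 2 → (Spec R ⟶ P) := ![s 0, s 1]
  have hz : ∀ k, z k ≫ f = 𝟙 _ := by intro k; fin_cases k <;> simp [z, hs]
  have hzα : ∀ k, z k ≫ α = z k := by intro k; fin_cases k <;> simp [z, hsα]
  have hzα' : ∀ k, z k ≫ inv α = z k := by intro k; rw [IsIso.comp_inv_eq, hzα]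
  have hzπ : ∀ k, z k ≫ π = c k 0 := by intro k; fin_cases k <;> simp [z, H.h0, H.h1]
  have huπ : ∀ k, s 2 ≫ π = c k 1 := by
    intro k; fin_cases k
    · exact H.h2
    · rw [H.h2]; exact c_swap 0 1 1 (by simp)
  have A1 := fun i => action_poly hπ i (z (1 - i)) (hz _) (hzπ _) α hα (hzα _)
  have A2 := fun i => action_poly hπ i (z (1 - i)) (hz _) (hzπ _) (inv α) hα' (hzα' _)
  choose p hp using A1
  choose p' hp' using A2
  have key : ∀ i, p i = Polynomial.X := fun i =>
    Acts.eq_X hπ hα (hp i) (hp (1 - i)) (hp' i) z (s 2) hz (hs 2) hzα (hsα 2) hzπ (huπ i)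
  have hcov : LocE (fun (Y : Scheme.{u}) (h : Y ⟶ P) => ∃ i b, h ≫ π = c i b) := LocE.of_opens fun x => by
    obtain ⟨i, hi⟩ := chart_cover (π x)
    refine ⟨π ⁻¹ᵁ (chart i).opensRange, hi, ?_⟩
    obtain ⟨b, hb⟩ := c_surj i ((π ⁻¹ᵁ (chart i).opensRange).ι ≫ π) (by
      rintro _ ⟨y, rfl⟩
      exact y.2)
    exact ⟨_, _, hb⟩
  refine hcov.hom_ext _ _ ?_
  rintro Y h ⟨i, b, hb⟩
  refine hπ.hom_ext (by simp [hα]) ?_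
  rw [Category.assoc, hp i _ h b hb, key, Polynomial.eval₂_X, Category.comp_id, hb]

end P1aux

namespace P1aux

attribute [local simp] pullback.lift_fst pullback.lift_snd pullback.lift_fst_assoc pullback.lift_snd_assoc

lemma eq_locus {D S Y : Scheme.{u}} (d : D ⟶ S) [Etale d] [IsSeparated d] (a b : Y ⟶ D)
    (hab : a ≫ d = b ≫ d) :
    ∃ U V : Y.Opens, (∀ y, y ∈ V ↔ y ∉ U) ∧ U.ι ≫ a = U.ι ≫ b ∧
      ∀ (Z : Scheme.{u}) (x : Z ⟶ Y), x ≫ a = x ≫ b ↔ ∀ z, x z ∈ U := by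
  let l : Y ⟶ pullback d d := pullback.lift a b hab
  let p := pullback.snd (pullback.diagonal d) l
  have hp : p ≫ a = p ≫ b := by
    have e : pullback.fst _ _ ≫ pullback.diagonal d = p ≫ l := pullback.condition
    have h1 := congr($e ≫ pullback.fst _ _)
    have h2 := congr($e ≫ pullback.snd _ _)
    simp only [Category.assoc, pullback.diagonal_fst, pullback.diagonal_snd, l, pullback.lift_fst,
      pullback.lift_snd] at h1 h2
    rw [← h1, ← h2]
  have ho : IsOpenImmersion p := by dsimp only [p]; infer_instance
  have hc : IsClosedImmersion p := by dsimp only [p]; infer_instance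
  have hx : ∀ (Z : Scheme.{u}) (x : Z ⟶ Y), (∀ z, x z ∈ p.opensRange) → x ≫ a = x ≫ b := by
    intro Z x hx
    have : Set.range x ⊆ Set.range p := by rintro _ ⟨z, rfl⟩; exact hx z
    rw [← IsOpenImmersion.lift_fac p x this, Category.assoc, hp, Category.assoc]
  refine ⟨p.opensRange, ⟨(Set.range p)ᶜ, p.isClosedEmbedding.isClosed_range.isOpen_compl⟩,
    fun y => Iff.rfl, ?_, fun Z x => ⟨fun h => ?_, hx Z x⟩⟩
  · exact hx _ _ (fun z => z.2)
  · have : x ≫ l = (x ≫ a) ≫ pullback.diagonal d := by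
      apply pullback.hom_ext <;> simp [l, h]
    let q := pullback.lift (x ≫ a) x this.symm
    have hq : q ≫ p = x := pullback.lift_snd _ _ _
    intro z
    rw [← hq]
    exact ⟨q z, rfl⟩

lemma card_sections {D S : Scheme.{u}} (d : D ⟶ S) (hd : IsEtaleCoverOfDegree 3 d)
    (K : Type u) [Field K] [IsAlgClosed K] (x : Spec (.of K) ⟶ S) :
    Nat.card {τ : Spec (.of K) ⟶ D // τ ≫ d = x} = 3 := by
  have := hd.1
  rw [← hd.2.2.2 K x]
  have hdisc : DiscreteTopology (pullback d x : Scheme.{u}) := by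
    have : IsLocallyArtinian (pullback d x : Scheme.{u}) :=
      .of_locallyQuasiFinite (pullback.snd d x)
    infer_instance
  have e1 := pointEquivClosedPoint (pullback.snd d x)
  refine Nat.card_congr (Equiv.trans ?_ (e1.trans ?_))
  · refine ⟨fun τ => ⟨pullback.lift τ.1 (𝟙 _) (by simpa using τ.2), by simp⟩,
      fun t => ⟨t.1 ≫ pullback.fst _ _, ?_⟩, ?_, ?_⟩
    · rw [Category.assoc, pullback.condition, reassoc_of% t.2]
    · intro τ; ext1; simp
    · intro t
      ext1
      apply pullback.hom_ext
      · simp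
      · simp [t.2]
  · exact (Equiv.subtypeUnivEquiv fun y => by simp [mem_closedPoints_iff])
end P1aux

namespace P1aux

attribute [local simp] pullback.lift_fst pullback.lift_snd pullback.lift_fst_assoc pullback.lift_snd_assoc

lemma exists_geom {X : Scheme.{u}} (x : X) :
    ∃ (K : Type u) (_ : Field K) (_ : IsAlgClosed K) (t : Spec (.of K) ⟶ X), ∀ z, t z = x := by
  refine ⟨AlgebraicClosure (X.residueField x), inferInstance, inferInstance,
    Spec.map (CommRingCat.ofHom (algebraMap (X.residueField x) _)) ≫ X.fromSpecResidueField x, ?_⟩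
  intro z
  have : ∀ y, X.fromSpecResidueField x y = x := fun y => by
    have : X.fromSpecResidueField x y ∈ Set.range (X.fromSpecResidueField x) := ⟨y, rfl⟩
    rw [X.range_fromSpecResidueField x] at this
    exact this
  exact this _

/-- three disjoint sections. -/
structure Sec3 {D S T : Scheme.{u}} (d : D ⟶ S) (g : T ⟶ S) (σ : Fin 3 → (T ⟶ D)) : Prop where
  sec : ∀ i, σ i ≫ d = g
  ne : ∀ i j, i ≠ j → ∀ (K : Type u) [Field K] (x : Spec (.of K) ⟶ T), x ≫ σ i ≠ x ≫ σ j

lemma Sec3.comp {D S T T' : Scheme.{u}} {d : D ⟶ S} {g : T ⟶ S} {σ : Fin 3 → (T ⟶ D)}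
    (h : Sec3 d g σ) (k : T' ⟶ T) : Sec3 d (k ≫ g) (fun i => k ≫ σ i) where
  sec i := by simp [h.sec]
  ne i j hij K _ x := by simpa using h.ne i j hij K (x ≫ k)

lemma field_pt_unique {K : Type u} [Field K] (z w : Spec (.of K)) : z = w :=
  Subsingleton.elim (α := PrimeSpectrum K) z w

lemma sec3_cover {D S : Scheme.{u}} (d : D ⟶ S) (hd : IsEtaleCoverOfDegree 3 d) :
    LocE (X := S) (fun T g => ∃ σ : Fin 3 → (T ⟶ D), Sec3 d g σ) := by
  have hfin : IsFinite d := hd.1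
  have het : Etale d := hd.2.1
  let D3 := pullback (pullback.fst d d ≫ d) d
  let pr : Fin 3 → (D3 ⟶ D) := ![pullback.fst _ _ ≫ pullback.fst _ _,
    pullback.fst _ _ ≫ pullback.snd _ _, pullback.snd _ _]
  have hpr : ∀ i, pr i ≫ d = pr 0 ≫ d := by
    intro i
    fin_cases i
    · rfl
    · simp [pr, pullback.condition]
    · simp [pr]
      rw [← pullback.condition]
  have hpr' : ∀ i j, pr i ≫ d = pr j ≫ d := fun i j => (hpr i).trans (hpr j).symm
  have hpre : Etale (pr 0 ≫ d) := by
    dsimp [pr]; infer_instance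
  choose U V hV hU hUx using fun i j => eq_locus d (pr i) (pr j) (hpr' i j)
  let W : D3.Opens := ⟨⋂ i, ⋂ j, ⋂ (_ : i ≠ j), (V i j : Set D3), by
    refine isOpen_iInter_of_finite fun i => isOpen_iInter_of_finite fun j =>
      isOpen_iInter_of_finite fun _ => (V i j).2⟩
  have hW : ∀ y, y ∈ W ↔ ∀ i j, i ≠ j → y ∉ U i j := by
    intro y
    change y ∈ (⋂ i, ⋂ j, ⋂ (_ : i ≠ j), (V i j : Set D3)) ↔ _
    simp only [Set.mem_iInter]
    exact forall_congr' fun i => forall_congr' fun j => imp_congr_right fun _ => hV i j y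
  intro s
  obtain ⟨K, _, _, x, hx⟩ := exists_geom s
  have hc := card_sections d hd K x
  have : Finite {τ : Spec (.of K) ⟶ D // τ ≫ d = x} := Nat.finite_of_card_ne_zero (by omega)
  let τ : Fin 3 ≃ _ := (Finite.equivFinOfCardEq hc).symm
  let t : Spec (.of K) ⟶ D3 := pullback.lift (pullback.lift (τ 0).1 (τ 1).1
    (by rw [(τ 0).2, (τ 1).2])) (τ 2).1 (by
      rw [pullback.lift_fst_assoc, (τ 0).2, (τ 2).2])
  have ht : ∀ i, t ≫ pr i = (τ i).1 := by
    intro i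
    fin_cases i <;> simp [t, pr]
  obtain ⟨z⟩ : Nonempty (Spec (.of K)) := inferInstanceAs (Nonempty (PrimeSpectrum K))
  have htW : t z ∈ W := by
    rw [hW]
    intro i j hij hz
    have := (hUx i j _ t).2 (fun z' => by rw [field_pt_unique z' z]; exact hz)
    rw [ht, ht] at this
    exact hij (τ.injective (Subtype.ext this))
  refine ⟨W, W.ι ≫ pr 0 ≫ d, inferInstance, ⟨⟨t z, htW⟩, ?_⟩, fun i => W.ι ≫ pr i, ?_, ?_⟩
  · change (pr 0 ≫ d) (t z) = s
    have : (t ≫ pr 0 ≫ d) z = s := by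
      rw [reassoc_of% (ht 0), (τ 0).2, hx]
    exact this
  · intro i
    rw [Category.assoc, hpr]
  · intro i j hij L _ y hy
    obtain ⟨z⟩ : Nonempty (Spec (.of L)) := inferInstanceAs (Nonempty (PrimeSpectrum L))
    have := (hUx i j _ (y ≫ W.ι)).1 (by simpa using hy) z
    exact (hW _).1 (y z).2 i j hij this

/-- any local section is locally one of the three. -/
lemma sec3_local {D S T Y : Scheme.{u}} {d : D ⟶ S} (hd : IsEtaleCoverOfDegree 3 d)
    {g : T ⟶ S} {σ : Fin 3 → (T ⟶ D)} (H : Sec3 d g σ) (h : Y ⟶ D) (k : Y ⟶ T)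
    (hk : h ≫ d = k ≫ g) : LocE (X := Y) (fun _ m => ∃ i, m ≫ h = m ≫ k ≫ σ i) := by
  have hfin : IsFinite d := hd.1
  have het : Etale d := hd.2.1
  choose U V hV hU hUx using fun i => eq_locus d h (k ≫ σ i) (by simp [H.sec, hk])
  apply LocE.of_opens
  intro y
  obtain ⟨K, _, _, x, hx⟩ := exists_geom y
  obtain ⟨z⟩ : Nonempty (Spec (.of K)) := inferInstanceAs (Nonempty (PrimeSpectrum K))
  have hc := card_sections d hd K (x ≫ k ≫ g)
  let X := {τ : Spec (.of K) ⟶ D // τ ≫ d = x ≫ k ≫ g}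
  have : Finite X := Nat.finite_of_card_ne_zero (by change Nat.card X = 3 at hc; omega)
  let s : Fin 3 → X := fun i => ⟨x ≫ k ≫ σ i, by simp [H.sec]⟩
  have hs : Function.Injective s := by
    intro i j hij
    by_contra hne
    exact H.ne i j hne K (x ≫ k) (by simpa [s] using congr_arg Subtype.val hij)
  have hsb : Function.Bijective s := (Nat.bijective_iff_injective_and_card s).2 ⟨hs, by simpa using hc.symm⟩
  obtain ⟨i, hi⟩ := hsb.2 ⟨x ≫ h, by simp [hk]⟩
  refine ⟨U i, ?_, i, hU i⟩
  rw [← hx z]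
  exact (hUx i _ x).1 (by simpa [s] using (congr_arg Subtype.val hi).symm) z

end P1aux

namespace P1aux

attribute [local simp] pullback.lift_fst pullback.lift_snd pullback.lift_fst_assoc pullback.lift_snd_assoc

lemma LocE.and {X : Scheme.{u}} {p q : ∀ ⦃Y : Scheme.{u}⦄, (Y ⟶ X) → Prop}
    (hp : LocE p) (hq : LocE q)
    (sp : ∀ ⦃Y Y' : Scheme.{u}⦄ (g : Y' ⟶ Y) (h : Y ⟶ X), p h → p (g ≫ h))
    (sq : ∀ ⦃Y Y' : Scheme.{u}⦄ (g : Y' ⟶ Y) (h : Y ⟶ X), q h → q (g ≫ h)) :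
    LocE (fun Y h => p (Y := Y) h ∧ q h) := by
  apply hp.bind
  intro Y h _ hh
  apply (hq.pullback sq h).mono
  intro Z g hg
  exact ⟨sp _ _ hh, hg⟩

/-- Base change comparison map. -/
noncomputable abbrev bc {P S T T' : Scheme.{u}} (f : P ⟶ S) {g : T ⟶ S} {g' : T' ⟶ S}
    (k : T' ⟶ T) (hk : k ≫ g = g') : pullback f g' ⟶ pullback f g :=
  pullback.lift (pullback.fst _ _) (pullback.snd _ _ ≫ k) (by
    rw [Category.assoc, hk, pullback.condition])

lemma bc_isPullback {P S T T' : Scheme.{u}} (f : P ⟶ S) {g : T ⟶ S} {g' : T' ⟶ S}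
    (k : T' ⟶ T) (hk : k ≫ g = g') :
    IsPullback (pullback.snd f g') (bc f k hk) k (pullback.snd f g) := by
  have h1 : IsPullback (bc f k hk ≫ pullback.fst f g) (pullback.snd f g') f (k ≫ g) := by
    subst hk
    simpa using IsPullback.of_hasPullback f (k ≫ g)
  refine (IsPullback.of_right h1 ?_ (IsPullback.of_hasPullback f g)).flip
  simp

/-- Standard trivialisation on one side. -/
def Side {P S D T : Scheme.{u}} (f : P ⟶ S) (j : D ⟶ P) (g : T ⟶ S) (σ : Fin 3 → (T ⟶ D))
    (π : pullback f g ⟶ P1Z.{u}) : Prop :=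
  ∃ s : Fin 3 → (T ⟶ pullback f g), (∀ i, s i ≫ pullback.fst f g = σ i ≫ j) ∧
    (∀ i, s i ≫ pullback.snd f g = 𝟙 T) ∧ Std (pullback.snd f g) s π

lemma Side.comp {P S D T T' : Scheme.{u}} {f : P ⟶ S} {j : D ⟶ P} {g : T ⟶ S} {g' : T' ⟶ S}
    {σ : Fin 3 → (T ⟶ D)} {π : pullback f g ⟶ P1Z.{u}} (H : Side f j g σ π) (k : T' ⟶ T)
    (hk : k ≫ g = g') : Side f j g' (fun i => k ≫ σ i) (bc f k hk ≫ π) := by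
  obtain ⟨s, h1, h2, h3⟩ := H
  have hs : ∀ i, k ≫ s i ≫ pullback.fst f g ≫ f = g' := by
    intro i
    rw [pullback.condition, reassoc_of% (h2 i), hk]
  let s' : Fin 3 → (T' ⟶ pullback f g') := fun i =>
    pullback.lift (k ≫ s i ≫ pullback.fst f g) (𝟙 _) (by simpa using hs i)
  have hs' : ∀ i, s' i ≫ bc f k hk = k ≫ s i := by
    intro i
    apply pullback.hom_ext
    · simp [s']
    · simp [s', h2]
  refine ⟨s', fun i => by simp [s', h1], fun i => by simp [s'], ?_, ?_, ?_, ?_⟩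
  · have := (bc_isPullback f k hk).flip.paste_horiz h3.triv.flip
    have e : k ≫ terminal.from T = terminal.from T' := Subsingleton.elim _ _
    rw [e] at this
    exact this.flip
  · rw [reassoc_of% (hs' 0), h3.h0, comp_c, map_zero]
  · rw [reassoc_of% (hs' 1), h3.h1, comp_c, map_zero]
  · rw [reassoc_of% (hs' 2), h3.h2, comp_c, map_one]

lemma triv_cover {P S : Scheme.{u}} {f : P ⟶ S} (hf : IsP1Bundle f) :
    LocE (X := S) (fun _ g => ∃ π, Triv (pullback.snd f g) π) := by
  apply LocE.of_opens
  intro x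
  obtain ⟨U, hx, e, he⟩ := hf x
  obtain ⟨p2, hp2⟩ : ∃ p2 : P1 (U : Scheme.{u}) ⟶ P1Z,
      IsPullback (P1proj (U : Scheme.{u})) p2 (terminal.from _) (terminal.from _) :=
    ⟨_, IsPullback.of_hasPullback (terminal.from (U : Scheme.{u})) (terminal.from P1Z)⟩
  refine ⟨U, hx, e.hom ≫ p2, ?_⟩
  refine hp2.of_iso e.symm (Iso.refl _) (Iso.refl _) (Iso.refl _) ?_ ?_ ?_ ?_
  · simp [← he]
  · simp
  · simp
  · simp

lemma triv_stab {P S : Scheme.{u}} {f : P ⟶ S} ⦃T T' : Scheme.{u}⦄ (k : T' ⟶ T) (g : T ⟶ S)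
    (H : ∃ π, Triv (pullback.snd f g) π) : ∃ π, Triv (pullback.snd f (k ≫ g)) π := by
  obtain ⟨π, h⟩ := H
  refine ⟨bc f k rfl ≫ π, ?_⟩
  have := (bc_isPullback f k rfl).flip.paste_horiz h.flip
  have e : k ≫ terminal.from T = terminal.from T' := Subsingleton.elim _ _
  rw [e] at this
  exact this.flip

lemma isPt_stab {T : Scheme.{u}} (φ : T ⟶ P1Z.{u}) ⦃Y Y' : Scheme.{u}⦄ (k : Y' ⟶ Y) (g : Y ⟶ T)
    (H : ∃ v, IsPt (g ≫ φ) v) : ∃ v, IsPt ((k ≫ g) ≫ φ) v := by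
  obtain ⟨v, hv⟩ := H
  exact ⟨_, by simpa using hv.comp k⟩

lemma side_cover {P S D : Scheme.{u}} {f : P ⟶ S} (hf : IsP1Bundle f) {j : D ⟶ P} [Mono j]
    {T : Scheme.{u}} {g : T ⟶ S} {σ : Fin 3 → (T ⟶ D)} (H : Sec3 (j ≫ f) g σ) :
    LocE (X := T) (fun _ m => ∃ π, Side f j (m ≫ g) (fun i => m ≫ σ i) π) := by
  have h1 := (triv_cover hf).pullback triv_stab g
  apply h1.bind
  rintro Y h - ⟨π, hπ⟩
  have H' := H.comp h
  let s : Fin 3 → (Y ⟶ pullback f (h ≫ g)) := fun i =>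
    pullback.lift (h ≫ σ i ≫ j) (𝟙 _) (by simpa using H'.sec i)
  have h2 : ∀ i, LocE (X := Y) (fun _ m => ∃ v, IsPt (m ≫ s i ≫ π) v) := fun i =>
    LocE.of_opens (IsPt.local (s i ≫ π))
  have h3 := (h2 0).and ((h2 1).and (h2 2) (isPt_stab _) (isPt_stab _)) (isPt_stab _)
    (fun _ _ k g h => ⟨isPt_stab _ k g h.1, isPt_stab _ k g h.2⟩)
  refine h3.mono ?_
  rintro Z m ⟨⟨v0, hv0⟩, ⟨v1, hv1⟩, ⟨v2, hv2⟩⟩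
  have H'' := H'.comp m
  let s' : Fin 3 → (Z ⟶ pullback f ((m ≫ h) ≫ g)) := fun i =>
    pullback.lift ((m ≫ h) ≫ σ i ≫ j) (𝟙 _) (by simpa using H''.sec i)
  let b := bc f m (show m ≫ (h ≫ g) = (m ≫ h) ≫ g by simp)
  have hs' : ∀ i, s' i ≫ b = m ≫ s i := by
    intro i
    apply pullback.hom_ext
    · simp [s', s, b]
    · simp [s', s, b]
  have tr : Triv (pullback.snd f ((m ≫ h) ≫ g)) (b ≫ π) := by
    have := (bc_isPullback f m (show m ≫ (h ≫ g) = (m ≫ h) ≫ g by simp)).flip.paste_horiz hπ.flip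
    have e : m ≫ terminal.from Y = terminal.from Z := Subsingleton.elim _ _
    rw [e] at this
    exact this.flip
  obtain ⟨π', hπ'⟩ := exists_std tr s' (fun i => by simp [s']) ![v0, v1, v2] (by
      intro i
      rw [reassoc_of% (hs' i)]
      fin_cases i
      · exact hv0
      · exact hv1
      · exact hv2) (by
      intro i k hik K _ x hx
      apply H''.ne i k hik K x
      have := congr($hx ≫ pullback.fst _ _)
      simp only [s', Category.assoc, pullback.lift_fst] at this
      simpa only [← Category.assoc, cancel_mono] using this)
  exact ⟨π', s', fun i => by simp [s'], fun i => by simp [s'], hπ'⟩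

end P1aux

namespace P1aux

attribute [local simp] pullback.lift_fst pullback.lift_snd pullback.lift_fst_assoc pullback.lift_snd_assoc

/-- Matching standard trivialisations on both sides. -/
def Good {P P' S D T : Scheme.{u}} (f : P ⟶ S) (f' : P' ⟶ S) (j : D ⟶ P) (j' : D ⟶ P')
    (g : T ⟶ S) (π : pullback f g ⟶ P1Z.{u}) (π' : pullback f' g ⟶ P1Z.{u}) : Prop :=
  ∃ σ, Sec3 (j ≫ f) g σ ∧ Side f j g σ π ∧ Side f' j' g σ π'

section

variable {P P' S D : Scheme.{u}} {f : P ⟶ S} {f' : P' ⟶ S} {j : D ⟶ P} {j' : D ⟶ P'}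

lemma Good.symm (hj : j ≫ f = j' ≫ f') {T : Scheme.{u}} {g : T ⟶ S} {π π'}
    (H : Good f f' j j' g π π') : Good f' f j' j g π' π := by
  obtain ⟨σ, h1, h2, h3⟩ := H
  exact ⟨σ, hj ▸ h1, h3, h2⟩

lemma Good.comp {T T' : Scheme.{u}} {g : T ⟶ S} {g' : T' ⟶ S} {π π'}
    (H : Good f f' j j' g π π') (k : T' ⟶ T) (hk : k ≫ g = g') :
    Good f f' j j' g' (bc f k hk ≫ π) (bc f' k hk ≫ π') := by
  obtain ⟨σ, h1, h2, h3⟩ := H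
  exact ⟨_, hk ▸ h1.comp k, h2.comp k hk, h3.comp k hk⟩

lemma Good.triv {T : Scheme.{u}} {g : T ⟶ S} {π π'}
    (H : Good f f' j j' g π π') : Triv (pullback.snd f g) π := by
  obtain ⟨σ, h1, ⟨_, _, _, h⟩, h3⟩ := H
  exact h.triv

lemma Good.triv' {T : Scheme.{u}} {g : T ⟶ S} {π π'}
    (H : Good f f' j j' g π π') : Triv (pullback.snd f' g) π' := by
  obtain ⟨σ, h1, h3, ⟨_, _, _, h⟩⟩ := H
  exact h.triv

lemma Good.compat (hj : j ≫ f = j' ≫ f') (hd : IsEtaleCoverOfDegree 3 (j ≫ f))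
    {T : Scheme.{u}} {g : T ⟶ S} {π π'}
    (H : Good f f' j j' g π π') {Y : Scheme.{u}} (h : Y ⟶ D) (k : Y ⟶ T)
    (w : (h ≫ j) ≫ f = k ≫ g) (w' : (h ≫ j') ≫ f' = k ≫ g) :
    pullback.lift (h ≫ j) k w ≫ π = pullback.lift (h ≫ j') k w' ≫ π' := by
  obtain ⟨σ, h1, ⟨s, hs, hs2, hs3⟩, ⟨s', hs', hs2', hs3'⟩⟩ := H
  have hst : ∀ i, s i ≫ π = s' i ≫ π' := by
    intro i
    fin_cases i
    · exact hs3.h0.trans hs3'.h0.symm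
    · exact hs3.h1.trans hs3'.h1.symm
    · exact hs3.h2.trans hs3'.h2.symm
  apply LocE.hom_ext (sec3_local hd h1 h k (by simpa using w))
  rintro Z m ⟨i, hi⟩
  have e1 : m ≫ pullback.lift (h ≫ j) k w = m ≫ k ≫ s i := by
    apply pullback.hom_ext
    · simp [hs, reassoc_of% hi]
    · simp [hs2]
  have e2 : m ≫ pullback.lift (h ≫ j') k w' = m ≫ k ≫ s' i := by
    apply pullback.hom_ext
    · simp [hs', reassoc_of% hi]
    · simp [hs2']
  rw [reassoc_of% e1, reassoc_of% e2, hst]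

lemma Triv.iso {T P P' : Scheme.{u}} {f : P ⟶ T} {f' : P' ⟶ T} {π π'} (h : Triv f π)
    (h' : Triv f' π') : ∃ e : P ≅ P', e.hom ≫ f' = f ∧ e.hom ≫ π' = π :=
  ⟨h.isoIsPullback _ _ h', by simp, by simp⟩

/-- An isomorphism compatible with the divisors agrees with the standard one. -/
lemma Good.unique (hj : j ≫ f = j' ≫ f') (hd : IsEtaleCoverOfDegree 3 (j ≫ f))
    {R : CommRingCat.{u}} {g : Spec R ⟶ S} {π π'}
    (H : Good f f' j j' g π π') (e : pullback f g ≅ pullback f' g)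
    (he : e.hom ≫ pullback.snd f' g = pullback.snd f g)
    (hc : ∀ (h : Spec R ⟶ D) (w : (h ≫ j) ≫ f = 𝟙 _ ≫ g) (w' : (h ≫ j') ≫ f' = 𝟙 _ ≫ g),
      pullback.lift (h ≫ j) (𝟙 _) w ≫ e.hom = pullback.lift (h ≫ j') (𝟙 _) w') :
    e.hom ≫ π' = π := by
  have H0 := H
  obtain ⟨e1, h1, h2⟩ := Triv.iso H.triv H.triv'
  obtain ⟨σ, hσ, ⟨s, hs, hs2, hs3⟩, -⟩ := H
  have w : ∀ i, (σ i ≫ j) ≫ f = 𝟙 _ ≫ g := fun i => by simpa using hσ.sec i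
  have w' : ∀ i, (σ i ≫ j') ≫ f' = 𝟙 _ ≫ g := fun i => by
    rw [Category.assoc, ← hj]; simpa using hσ.sec i
  have hsl : ∀ i, s i = pullback.lift (σ i ≫ j) (𝟙 _) (w i) := by
    intro i
    apply pullback.hom_ext
    · simp [hs]
    · simp [hs2]
  have k1 : ∀ i, s i ≫ e1.hom = pullback.lift (σ i ≫ j') (𝟙 _) (w' i) := by
    intro i
    apply H0.triv'.hom_ext
    · rw [Category.assoc, h1, hs2, pullback.lift_snd]
    · rw [Category.assoc, h2, ← H0.compat hj hd (σ i) (𝟙 _) (w i) (w' i), hsl]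
  have k2 : ∀ i, s i ≫ e.hom = pullback.lift (σ i ≫ j') (𝟙 _) (w' i) := by
    intro i
    rw [hsl, hc]
  have key := rigid hs3 hs2 (e.hom ≫ e1.inv) (by rw [Category.assoc, ← h1, e1.inv_hom_id_assoc, he, h1])
    (by
      intro i
      rw [reassoc_of% (k2 i), ← k1 i, Category.assoc, e1.hom_inv_id, Category.comp_id])
  rw [← h2]
  have : e.hom = e1.hom := by
    rw [← cancel_mono e1.inv, key, e1.hom_inv_id]
  rw [this]

/-- The correspondence between points of `P` and `P'`. -/
def Corr {Y : Scheme.{u}} (f : P ⟶ S) (f' : P' ⟶ S) (j : D ⟶ P) (j' : D ⟶ P')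
    (h : Y ⟶ P) (a : Y ⟶ P') : Prop :=
  ∃ (T : Scheme.{u}) (g : T ⟶ S) (π : _) (π' : _), Good f f' j j' g π π' ∧
    ∃ (k : Y ⟶ T) (w : h ≫ f = k ≫ g) (w' : a ≫ f' = k ≫ g),
      pullback.lift h k w ≫ π = pullback.lift a k w' ≫ π'

lemma Corr.symm (hj : j ≫ f = j' ≫ f') {Y : Scheme.{u}} {h : Y ⟶ P} {a : Y ⟶ P'}
    (H : Corr f f' j j' h a) : Corr f' f j' j a h := by
  obtain ⟨T, g, π, π', H, k, w, w', e⟩ := H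
  exact ⟨T, g, π', π, H.symm hj, k, w', w, e.symm⟩

lemma Corr.stab ⦃Y Y' : Scheme.{u}⦄ (m : Y' ⟶ Y) (h : Y ⟶ P) (a : Y ⟶ P')
    (H : Corr f f' j j' h a) : Corr f f' j j' (m ≫ h) (m ≫ a) := by
  obtain ⟨T, g, π, π', H, k, w, w', e⟩ := H
  refine ⟨T, g, π, π', H, m ≫ k, by simp [w], by simp [w'], ?_⟩
  have e1 : pullback.lift (m ≫ h) (m ≫ k) (by simp [w]) = m ≫ pullback.lift h k w := by
    apply pullback.hom_ext <;> simp
  have e2 : pullback.lift (m ≫ a) (m ≫ k) (by simp [w']) = m ≫ pullback.lift a k w' := by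
    apply pullback.hom_ext <;> simp
  rw [e1, e2, Category.assoc, Category.assoc, e]

lemma corr_spec (hj : j ≫ f = j' ≫ f') (hd : IsEtaleCoverOfDegree 3 (j ≫ f))
    {R : CommRingCat.{u}} {g : Spec R ⟶ S} {π₁ π₁' π₂ π₂'}
    (H₁ : Good f f' j j' g π₁ π₁') (H₂ : Good f f' j j' g π₂ π₂')
    {Y : Scheme.{u}} (x : Y ⟶ pullback f g) (y z : Y ⟶ pullback f' g)
    (hy : y ≫ pullback.snd f' g = x ≫ pullback.snd f g)
    (hz : z ≫ pullback.snd f' g = x ≫ pullback.snd f g)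
    (ey : x ≫ π₁ = y ≫ π₁') (ez : x ≫ π₂ = z ≫ π₂') : y = z := by
  obtain ⟨e, h1, h2⟩ := Triv.iso H₁.triv H₁.triv'
  have := H₂.unique hj hd e h1 (by
    intro h w w'
    apply H₁.triv'.hom_ext
    · simp [h1]
    · rw [Category.assoc, h2, H₁.compat hj hd h (𝟙 _) w w'])
  have hy' : y = x ≫ e.hom := by
    apply H₁.triv'.hom_ext
    · rw [hy, Category.assoc, h1]
    · rw [← ey, Category.assoc, h2]
  have hz' : z = x ≫ e.hom := by
    apply H₂.triv'.hom_ext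
    · rw [hz, Category.assoc, h1]
    · rw [← ez, Category.assoc, this]
  rw [hy', hz']

lemma Corr.func (hj : j ≫ f = j' ≫ f') (hd : IsEtaleCoverOfDegree 3 (j ≫ f))
    ⦃Y : Scheme.{u}⦄ (h : Y ⟶ P) (a b : Y ⟶ P')
    (Ha : Corr f f' j j' h a) (Hb : Corr f f' j j' h b) : a = b := by
  obtain ⟨T₁, g₁, π₁, π₁', H₁, k₁, w₁, w₁', e₁⟩ := Ha
  obtain ⟨T₂, g₂, π₂, π₂', H₂, k₂, w₂, w₂', e₂⟩ := Hb
  let k : Y ⟶ pullback g₁ g₂ := pullback.lift k₁ k₂ (by rw [← w₁, w₂])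
  have hp : LocE (X := Y) (fun Z m => ∃ (R : CommRingCat.{u}) (q : Spec R ⟶ pullback g₁ g₂)
      (n : Z ⟶ Spec R), n ≫ q = m ≫ k) := by
    apply LocE.of_opens
    intro y
    obtain ⟨W, hW, hyW, -⟩ := exists_isAffineOpen_mem_and_subset (TopologicalSpace.Opens.mem_top (k y))
    refine ⟨k ⁻¹ᵁ W, hyW, _, hW.fromSpec, IsOpenImmersion.lift hW.fromSpec _ ?_,
      IsOpenImmersion.lift_fac _ _ _⟩
    rw [hW.range_fromSpec]
    rintro _ ⟨z, rfl⟩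
    exact z.2
  apply LocE.hom_ext hp
  rintro Z m ⟨R, q, n, hn⟩
  let g := q ≫ pullback.fst g₁ g₂ ≫ g₁
  have hg1 : (q ≫ pullback.fst g₁ g₂) ≫ g₁ = g := by simp [g]
  have hg2 : (q ≫ pullback.snd g₁ g₂) ≫ g₂ = g := by simp [g, pullback.condition]
  have hn1 : n ≫ q ≫ pullback.fst g₁ g₂ = m ≫ k₁ := by
    rw [reassoc_of% hn]; simp [k]
  have hn2 : n ≫ q ≫ pullback.snd g₁ g₂ = m ≫ k₂ := by
    rw [reassoc_of% hn]; simp [k]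
  have hng : n ≫ g = m ≫ k₁ ≫ g₁ := by
    rw [← hg1, ← Category.assoc, hn1, Category.assoc]
  have hng2 : n ≫ g = m ≫ k₂ ≫ g₂ := by
    rw [← hg2, ← Category.assoc, hn2, Category.assoc]
  have vx : (m ≫ h) ≫ f = n ≫ g := by rw [hng, Category.assoc, w₁]
  have vy : (m ≫ a) ≫ f' = n ≫ g := by rw [hng, Category.assoc, w₁']
  have vz : (m ≫ b) ≫ f' = n ≫ g := by rw [hng2, Category.assoc, w₂']
  have := corr_spec hj hd (H₁.comp _ hg1) (H₂.comp _ hg2) (pullback.lift (m ≫ h) n vx)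
    (pullback.lift (m ≫ a) n vy) (pullback.lift (m ≫ b) n vz) (by simp) (by simp) (by
      have e3 : pullback.lift (m ≫ h) n vx ≫ bc f _ hg1 = m ≫ pullback.lift h k₁ w₁ := by
        apply pullback.hom_ext <;> simp [hn1]
      have e4 : pullback.lift (m ≫ a) n vy ≫ bc f' _ hg1 = m ≫ pullback.lift a k₁ w₁' := by
        apply pullback.hom_ext <;> simp [hn1]
      rw [reassoc_of% e3, reassoc_of% e4, e₁]) (by
      have e3 : pullback.lift (m ≫ h) n vx ≫ bc f _ hg2 = m ≫ pullback.lift h k₂ w₂ := by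
        apply pullback.hom_ext <;> simp [hn2]
      have e4 : pullback.lift (m ≫ b) n vz ≫ bc f' _ hg2 = m ≫ pullback.lift b k₂ w₂' := by
        apply pullback.hom_ext <;> simp [hn2]
      rw [reassoc_of% e3, reassoc_of% e4, e₂])
  have := congr($this ≫ pullback.fst _ _)
  simpa using this

end

end P1aux

namespace P1aux

attribute [local simp] pullback.lift_fst pullback.lift_snd pullback.lift_fst_assoc pullback.lift_snd_assoc

section

variable {P P' S D : Scheme.{u}} {f : P ⟶ S} {f' : P' ⟶ S} {j : D ⟶ P} {j' : D ⟶ P'}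

/-- `g` factors through an affine scheme with matching standard trivialisations. -/
def AffGood (f : P ⟶ S) (f' : P' ⟶ S) (j : D ⟶ P) (j' : D ⟶ P') ⦃Y : Scheme.{u}⦄
    (g : Y ⟶ S) : Prop :=
  ∃ (R : CommRingCat.{u}) (g' : Spec R ⟶ S) (m : Y ⟶ Spec R), m ≫ g' = g ∧
    ∃ π π', Good f f' j j' g' π π'

lemma AffGood.stab ⦃Y Y' : Scheme.{u}⦄ (k : Y' ⟶ Y) (g : Y ⟶ S)
    (h : AffGood f f' j j' g) : AffGood f f' j j' (k ≫ g) := by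
  obtain ⟨R, g', m, hm, h⟩ := h
  exact ⟨R, g', k ≫ m, by simp [hm], h⟩

lemma AffGood.symm (hj : j ≫ f = j' ≫ f') ⦃Y : Scheme.{u}⦄ {g : Y ⟶ S}
    (h : AffGood f f' j j' g) : AffGood f' f j' j g := by
  obtain ⟨R, g', m, hm, π, π', h⟩ := h
  exact ⟨R, g', m, hm, π', π, h.symm hj⟩

lemma affGood_cover (hf : IsP1Bundle f) (hf' : IsP1Bundle f') [Mono j] [Mono j']
    (hj : j ≫ f = j' ≫ f') (hd : IsEtaleCoverOfDegree 3 (j ≫ f)) :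
    LocE (AffGood f f' j j') := by
  have h1 : LocE (X := S) (fun _ g => ∃ π π', Good f f' j j' g π π') := by
    apply (sec3_cover _ hd).bind
    rintro T g - ⟨σ, hσ⟩
    have a := side_cover hf hσ
    have b := side_cover (j := j') hf' (hj ▸ hσ)
    refine (a.and b ?_ ?_).mono ?_
    · rintro Y Y' k h ⟨π, hπ⟩
      have := hπ.comp k (show k ≫ h ≫ g = (k ≫ h) ≫ g by simp)
      simp only [← Category.assoc] at this
      exact ⟨_, by simpa only [Category.assoc] using this⟩
    · rintro Y Y' k h ⟨π, hπ⟩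
      have := hπ.comp k (show k ≫ h ≫ g = (k ≫ h) ≫ g by simp)
      simp only [← Category.assoc] at this
      exact ⟨_, by simpa only [Category.assoc] using this⟩
    · rintro Y m ⟨⟨π, hπ⟩, ⟨π', hπ'⟩⟩
      exact ⟨π, π', _, hσ.comp m, hπ, hπ'⟩
  apply h1.bind
  rintro T g - ⟨π, π', H⟩
  apply LocE.of_opens
  intro t
  obtain ⟨W, hW, htW, -⟩ := exists_isAffineOpen_mem_and_subset (TopologicalSpace.Opens.mem_top t)
  refine ⟨W, htW, _, hW.fromSpec ≫ g, IsOpenImmersion.lift hW.fromSpec W.ι ?_, ?_,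
    _, _, H.comp hW.fromSpec rfl⟩
  · rw [hW.range_fromSpec]
    rintro _ ⟨z, rfl⟩
    exact z.2
  · rw [IsOpenImmersion.lift_fac_assoc]

lemma corr_exists {Y : Scheme.{u}} (h : Y ⟶ P) (H : AffGood f f' j j' (h ≫ f)) :
    ∃ a, Corr f f' j j' h a := by
  obtain ⟨R, g, m, hm, π, π', H⟩ := H
  obtain ⟨e, h1, h2⟩ := Triv.iso H.triv H.triv'
  refine ⟨pullback.lift h m hm.symm ≫ e.hom ≫ pullback.fst _ _, _, g, π, π', H, m, hm.symm, ?_, ?_⟩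
  · simp only [Category.assoc, pullback.condition]
    rw [reassoc_of% h1, pullback.lift_snd_assoc]
  · have : pullback.lift (pullback.lift h m hm.symm ≫ e.hom ≫ pullback.fst f' g) m (by
        simp only [Category.assoc, pullback.condition]
        rw [reassoc_of% h1, pullback.lift_snd_assoc]) = pullback.lift h m hm.symm ≫ e.hom := by
      apply pullback.hom_ext
      · simp
      · simp [h1]
    rw [this, Category.assoc, h2]

lemma corr_of_iso (hj : j ≫ f = j' ≫ f') (hd : IsEtaleCoverOfDegree 3 (j ≫ f))
    {Y : Scheme.{u}} (h : Y ⟶ P) (H : AffGood f f' j j' (h ≫ f)) (β : P ⟶ P') [IsIso β]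
    (hβ : β ≫ f' = f) (hβj : j ≫ β = j') : Corr f f' j j' h (h ≫ β) := by
  obtain ⟨R, g, m, hm, π, π', H⟩ := H
  let e : pullback f g ≅ pullback f' g :=
    { hom := pullback.lift (pullback.fst _ _ ≫ β) (pullback.snd _ _) (by
        rw [Category.assoc, hβ, pullback.condition])
      inv := pullback.lift (pullback.fst _ _ ≫ inv β) (pullback.snd _ _) (by
        rw [Category.assoc, ← hβ, IsIso.inv_hom_id_assoc, pullback.condition])
      hom_inv_id := by apply pullback.hom_ext <;> simp
      inv_hom_id := by apply pullback.hom_ext <;> simp }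
  have he := H.unique hj hd e (by simp [e]) (by
    intro h w w'
    apply pullback.hom_ext <;> simp [e, hβj])
  have w' : (h ≫ β) ≫ f' = m ≫ g := by rw [Category.assoc, hβ, hm]
  refine ⟨_, g, π, π', H, m, hm.symm, w', ?_⟩
  have : pullback.lift (h ≫ β) m w' = pullback.lift h m hm.symm ≫ e.hom := by
    apply pullback.hom_ext <;> simp [e]
  rw [this, Category.assoc, he]

lemma main (hf : IsP1Bundle f) (hf' : IsP1Bundle f') [Mono j] [Mono j']
    (hj : j ≫ f = j' ≫ f') (hd : IsEtaleCoverOfDegree 3 (j ≫ f)) :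
    ∃! α : P ⟶ P', IsIso α ∧ α ≫ f' = f ∧ j ≫ α = j' := by
  have cov := affGood_cover hf hf' hj hd
  have covP := cov.pullback AffGood.stab f
  have covP' := cov.pullback AffGood.stab f'
  have covD := cov.pullback AffGood.stab (j ≫ f)
  obtain ⟨φ, hφ⟩ := LocE.glue (fun _ h a => Corr f f' j j' h a) (Corr.func hj hd) Corr.stab
    (covP.mono fun _ h hh => corr_exists h hh)
  obtain ⟨ψ, hψ⟩ := LocE.glue (fun _ h a => Corr f' f j' j h a)
    (Corr.func hj.symm (hj ▸ hd)) Corr.stab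
    (covP'.mono fun _ h hh => corr_exists h (hh.symm hj))
  have h1 : φ ≫ ψ = 𝟙 P := by
    apply covP.hom_ext
    intro Y h hh
    obtain ⟨a, ha⟩ := corr_exists h hh
    rw [reassoc_of% (hφ h a ha), hψ a h (ha.symm hj), Category.comp_id]
  have h2 : ψ ≫ φ = 𝟙 P' := by
    apply covP'.hom_ext
    intro Y h hh
    obtain ⟨a, ha⟩ := corr_exists h (hh.symm hj)
    rw [reassoc_of% (hψ h a ha), hφ a h (ha.symm hj.symm), Category.comp_id]
  refine ⟨φ, ⟨⟨ψ, h1, h2⟩, ?_, ?_⟩, ?_⟩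
  · apply covP.hom_ext
    intro Y h hh
    obtain ⟨a, ha⟩ := corr_exists h hh
    rw [reassoc_of% (hφ h a ha)]
    obtain ⟨_, _, _, _, _, k, w, w', _⟩ := ha
    rw [w, w']
  · apply covD.hom_ext
    intro Y h ⟨R, g, m, hm, π, π', H⟩
    have w : (h ≫ j) ≫ f = m ≫ g := by rw [hm, Category.assoc]
    have w' : (h ≫ j') ≫ f' = m ≫ g := by rw [hm, hj, Category.assoc]
    have := hφ (h ≫ j) (h ≫ j') ⟨_, g, π, π', H, m, w, w', H.compat hj hd h m w w'⟩
    rw [← this, Category.assoc]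
  · rintro β ⟨hi, hβ, hβj⟩
    apply covP.hom_ext
    intro Y h hh
    exact (hφ h _ (corr_of_iso hj hd h hh β hβ hβj)).symm

end

end P1aux

/-- Let `P → S` and `P′ → S` be `ℙ¹`-bundles, let `D ⊆ P` and `D′ ⊆ P′` be
closed subschemes which are étale covers of `S` of degree 3, and let `η : D → D′` be an
`S`-isomorphism. Then there is a unique `S`-isomorphism `α : P → P′` whose restriction to
`D` equals `η`, i.e. `α ∘ ι_D = ι_{D′} ∘ η`. -/
theorem stmt6 (S P P' : Scheme.{u}) (f : P ⟶ S) (f' : P' ⟶ S)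
    (hf : IsP1Bundle f) (hf' : IsP1Bundle f')
    (D D' : Scheme.{u}) (ι : D ⟶ P) (ι' : D' ⟶ P')
    (hι : IsClosedImmersion ι) (hι' : IsClosedImmersion ι')
    (hD : IsEtaleCoverOfDegree 3 (ι ≫ f)) (hD' : IsEtaleCoverOfDegree 3 (ι' ≫ f'))
    (η : D ⟶ D') (hη : IsIso η) (hηS : η ≫ ι' ≫ f' = ι ≫ f) :
    ∃! α : P ⟶ P', IsIso α ∧ α ≫ f' = f ∧ ι ≫ α = η ≫ ι' := by
  exact P1aux.main hf hf' (j := ι) (j' := η ≫ ι') (by rw [Category.assoc, hηS]) hD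
end

section
/- Let S be a scheme and let P → S be a ℙ¹-bundle over S. If P → S admits three sections whose set-theoretic images in P are pairwise disjoint, then P is S-isomorphic to ℙ¹_S. -/
universe u

open AlgebraicGeometry CategoryTheory CategoryTheory.Limits

attribute [local instance] MvPolynomial.gradedAlgebra

namespace PB
set_option linter.unusedSectionVars false
set_option linter.unusedVariables false

open MvPolynomial HomogeneousLocalization

/-- Standard grading. -/
noncomputable abbrev gr (σ : Type) (R : Type u) [CommRing R] : ℕ → Submodule R (MvPolynomial σ R) :=
  MvPolynomial.homogeneousSubmodule σ R

/-- Projective space. -/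
noncomputable abbrev Q (σ : Type) (R : Type u) [CommRing R] : Scheme.{u} :=
  AlgebraicGeometry.Proj (gr σ R)

section
variable {σ τ υ : Type} [Fintype σ] [Fintype τ] [Fintype υ]
  {R R' R'' : Type u} [CommRing R] [CommRing R'] [CommRing R'']

/-- linear substitution -/
noncomputable def linR (ρ : R →+* R') (M : Matrix σ τ R') :
    MvPolynomial σ R →+* MvPolynomial τ R' :=
  eval₂Hom (C.comp ρ) (fun i => ∑ j, C (M i j) * X j)

lemma linR_X (ρ : R →+* R') (M : Matrix σ τ R') (i : σ) :
    linR ρ M (X i) = ∑ j, C (M i j) * X j := by simp [linR]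
lemma linR_C (ρ : R →+* R') (M : Matrix σ τ R') (r : R) :
    linR ρ M (C r) = C (ρ r) := by simp [linR]

lemma X_mem (i : σ) : (X i : MvPolynomial σ R) ∈ gr σ R 1 := isHomogeneous_X R i

/-- graded linear substitution -/
noncomputable def lin (ρ : R →+* R') (M : Matrix σ τ R') : gr σ R →+*ᵍ gr τ R' where
  __ := linR ρ M
  map_mem := by
    intro i x hx
    have h : (linR ρ M x).IsHomogeneous (1 * i) := by
      refine IsHomogeneous.eval₂ hx _ _ (fun r => isHomogeneous_C _ _) (fun j => ?_)
      exact IsHomogeneous.sum _ _ _ (fun k _ => by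
        simpa using (isHomogeneous_C _ _).mul (isHomogeneous_X _ k))
    rw [one_mul] at h
    exact h

lemma lin_apply (ρ : R →+* R') (M : Matrix σ τ R') (x) : lin ρ M x = linR ρ M x := rfl

lemma irr_le (I : Ideal (MvPolynomial σ R)) (h : ∀ i, X i ∈ I) :
    (HomogeneousIdeal.irrelevant (gr σ R)).toIdeal ≤ I := by
  rw [HomogeneousIdeal.toIdeal_irrelevant_le]
  intro i hi x hx
  have hx : x.IsHomogeneous i := hx
  have h2 : Ideal.span (Set.range (X : σ → MvPolynomial σ R)) ≤ I := by
    rw [Ideal.span_le]; rintro _ ⟨j, rfl⟩; exact h j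
  apply h2
  rw [← Set.image_univ, MvPolynomial.mem_ideal_span_X_image]
  intro m hm
  have := hx (MvPolynomial.mem_support_iff.mp hm)
  by_contra! hc
  have hm0 : m = 0 := by ext j; simpa using hc j
  subst hm0
  simp at this
  omega

open Classical in
/-- left invertible -/
def LI (M : Matrix σ τ R') : Prop :=
  ∃ N : Matrix τ σ R', ∀ i j, ∑ k, N i k * M k j = if i = j then 1 else 0

lemma lin_irr (ρ : R →+* R') (M : Matrix σ τ R') (hM : LI M) :
    HomogeneousIdeal.irrelevant (gr τ R') ≤ (HomogeneousIdeal.irrelevant (gr σ R)).map (lin ρ M) := by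
  classical
  obtain ⟨N, hN⟩ := hM
  rw [← toIdeal_le_toIdeal_iff]
  apply irr_le
  intro j
  have h : (X j : MvPolynomial τ R') = ∑ i, C (N j i) * lin ρ M (X i) := by
    simp only [lin_apply, linR_X, Finset.mul_sum]
    rw [Finset.sum_comm]
    simp only [← mul_assoc, ← C_mul, ← Finset.sum_mul, ← map_sum]
    simp [hN]
  rw [h]
  refine Ideal.sum_mem _ fun i _ => Ideal.mul_mem_left _ _ ?_
  apply Ideal.mem_map_of_mem
  exact HomogeneousIdeal.mem_irrelevant_of_mem _ zero_lt_one (X_mem i)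


end
end PB

namespace PB
set_option linter.unusedSectionVars false
set_option linter.unusedVariables false
open MvPolynomial HomogeneousLocalization

section
variable {σ τ υ : Type} [Fintype σ] [Fintype τ] [Fintype υ]
  {R R' R'' : Type u} [CommRing R] [CommRing R'] [CommRing R'']

/-- Universal map out of `Away`. -/
noncomputable def awayLift {B : Type*} [CommRing B] (f : MvPolynomial σ R)
    (g : MvPolynomial σ R →+* B) (hg : IsUnit (g f)) : Away (gr σ R) f →+* B :=
  (IsLocalization.Away.lift (S := Localization.Away f) f hg).comp
    (algebraMap (Away (gr σ R) f) (Localization.Away f))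

lemma awayLift_mk {B : Type*} [CommRing B] (f : MvPolynomial σ R)
    (g : MvPolynomial σ R →+* B) (hg : IsUnit (g f)) {d : ℕ} (hf : f ∈ gr σ R d) (n : ℕ) (x hx) :
    awayLift f g hg (Away.mk (gr σ R) hf n x hx) * g f ^ n = g x := by
  have : awayLift f g hg (Away.mk (gr σ R) hf n x hx) =
    IsLocalization.Away.lift (S := Localization.Away f) f hg (Localization.mk x ⟨f ^ n, by use n⟩) := rfl
  rw [this, Localization.mk_eq_mk', ← map_pow, ← IsLocalization.Away.lift_eq (S := Localization.Away f) f hg (f ^ n),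
   ← IsLocalization.Away.lift_eq (S := Localization.Away f) f hg x, ← map_mul]
  congr 1
  exact IsLocalization.mk'_spec (M := Submonoid.powers f) (Localization.Away f) x ⟨f ^ n, by use n⟩

/-- constants -/
noncomputable def cst (f : MvPolynomial σ R) : R →+* Away (gr σ R) f :=
  (fromZeroRingHom (gr σ R) (Submonoid.powers f)).comp (algebraMap R (gr σ R 0))

lemma val_cst (f : MvPolynomial σ R) (r : R) : (cst f r).val = algebraMap _ _ (C r : MvPolynomial σ R) := by
  rw [← Localization.mk_one_eq_algebraMap]
  rfl

/-- coordinate `X j / X i` -/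
noncomputable def frac (R : Type u) [CommRing R] (i j : σ) : Away (gr σ R) (X i) :=
  Away.mk (gr σ R) (X_mem i) 1 (X j) (X_mem j)

lemma val_frac (i j : σ) : (frac R i j).val * algebraMap _ _ (X i : MvPolynomial σ R) =
    algebraMap _ _ (X j : MvPolynomial σ R) := by
  rw [frac, Away.val_mk, Localization.mk_eq_mk']
  have h := IsLocalization.mk'_spec (M := Submonoid.powers (X i : MvPolynomial σ R)) (Localization.Away (X i : MvPolynomial σ R)) (X j : MvPolynomial σ R) ⟨X i ^ 1, by use 1⟩
  have h2 : algebraMap (MvPolynomial σ R) (Localization.Away (X i : MvPolynomial σ R)) (X i ^ 1) =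
    algebraMap (MvPolynomial σ R) _ (X i) := by rw [pow_one]
  rw [← h2]
  exact h

/-- presentation -/
noncomputable def kap (R : Type u) [CommRing R] (i : σ) : MvPolynomial σ R →+* Away (gr σ R) (X i) :=
  eval₂Hom (cst (X i)) (frac R i)

lemma kap_spec (i : σ) (n : ℕ) (x : MvPolynomial σ R) (hx : x ∈ gr σ R n) :
    (kap R i x).val * algebraMap _ _ (X i : MvPolynomial σ R) ^ n = algebraMap _ _ x := by
  have hx : x.IsHomogeneous n := hx
  have key : ∀ (y : MvPolynomial σ R), (kap R i y).val = 
      ((algebraMap (Away (gr σ R) (X i)) (Localization.Away (X i))).comp (kap R i)) y := fun y => rfl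
  rw [key]
  conv_rhs => rw [x.as_sum]
  conv_lhs => rw [x.as_sum]
  rw [map_sum, map_sum, Finset.sum_mul]
  refine Finset.sum_congr rfl fun m hm => ?_
  have hd := hx (MvPolynomial.mem_support_iff.mp hm)
  rw [← key, kap, eval₂Hom_monomial, HomogeneousLocalization.val_mul, val_cst, monomial_eq, map_mul, mul_assoc]
  congr 1
  have hn : n = ∑ j, m j := by
    rw [← hd]; simp [Finsupp.weight_apply, Finsupp.sum_fintype]
  have h1 : ∀ (a : σ →₀ ℕ), (a.prod fun i_1 k ↦ frac R i i_1 ^ k).val = ∏ j, (frac R i j).val ^ (a j) := by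
    intro a
    rw [Finsupp.prod_fintype _ _ (by simp)]
    rw [← HomogeneousLocalization.algebraMap_apply, map_prod]
    simp
  rw [h1, hn, ← Finset.prod_pow_eq_pow_sum, ← Finset.prod_mul_distrib, Finsupp.prod_fintype _ _ (by simp), map_prod]
  refine Finset.prod_congr rfl fun j _ => ?_
  rw [← mul_pow, val_frac, map_pow]

lemma kap_surj (i : σ) : Function.Surjective (kap R i) := by
  intro y
  obtain ⟨n, x, hx, rfl⟩ := Away.mk_surjective (gr σ R) (X_mem i) y
  refine ⟨x, ?_⟩
  apply HomogeneousLocalization.val_injective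
  have h := kap_spec i n x (by simpa using hx)
  rw [Away.val_mk, Localization.mk_eq_mk', eq_comm, IsLocalization.mk'_eq_iff_eq_mul]
  rw [← h, map_pow]

lemma away_ext {B : Type*} [CommRing B] (i : σ) (φ ψ : Away (gr σ R) (X i) →+* B)
    (h1 : φ.comp (cst (X i)) = ψ.comp (cst (X i))) (h2 : ∀ j, φ (frac R i j) = ψ (frac R i j)) : φ = ψ := by
  rw [← RingHom.cancel_right (kap_surj i)]
  apply MvPolynomial.ringHom_ext
  · intro r
    simpa [kap] using congr($h1 r)
  · intro j
    simpa [kap] using h2 j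

lemma frac_self (i : σ) : frac R i i = 1 := by
  apply HomogeneousLocalization.val_injective
  rw [frac, Away.val_mk, HomogeneousLocalization.val_one, Localization.mk_eq_mk', IsLocalization.mk'_eq_iff_eq_mul]
  simp

/-- evaluation -/
noncomputable def evA {B : Type*} [CommRing B] (i : σ) (ρ : R →+* B) (b : σ → B) (hb : b i = 1) :
    Away (gr σ R) (X i) →+* B :=
  awayLift (X i) (eval₂Hom ρ b) (by simp [hb])

lemma evA_frac {B : Type*} [CommRing B] (i : σ) (ρ : R →+* B) (b : σ → B) (hb : b i = 1) (j : σ) :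
    evA i ρ b hb (frac R i j) = b j := by
  have := awayLift_mk (X i) (eval₂Hom ρ b) (by simp [hb]) (X_mem i) 1 (X j) (X_mem j)
  simp [hb] at this
  exact this

lemma cst_eq {f : MvPolynomial σ R} {d} (hf : f ∈ gr σ R d) (r : R) :
    cst f r = Away.mk (gr σ R) hf 0 (C r) (by simp) := by
  apply HomogeneousLocalization.val_injective
  rw [val_cst, Away.val_mk, ← Localization.mk_one_eq_algebraMap]
  simp only [pow_zero]
  rfl

lemma awayLift_cst {B : Type*} [CommRing B] (f : MvPolynomial σ R) {d} (hf : f ∈ gr σ R d)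
    (g : MvPolynomial σ R →+* B) (hg : IsUnit (g f)) (r : R) : awayLift f g hg (cst f r) = g (C r) := by
  have := awayLift_mk f g hg hf 0 (C r) (by simp)
  rw [← cst_eq hf] at this
  simpa using this

lemma evA_cst {B : Type*} [CommRing B] (i : σ) (ρ : R →+* B) (b : σ → B) (hb : b i = 1) (r : R) :
    evA i ρ b hb (cst _ r) = ρ r := by
  have := awayLift_cst (X i) (X_mem i) (eval₂Hom ρ b) (by simp [hb]) r
  simp at this
  exact this

end
end PB

namespace PB
set_option linter.unusedSectionVars false
set_option linter.unusedVariables false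
open MvPolynomial HomogeneousLocalization

section
variable {σ τ υ : Type} [Fintype σ] [Fintype τ] [Fintype υ]
  {R R' R'' : Type u} [CommRing R] [CommRing R'] [CommRing R'']

/-- structure map -/
noncomputable def strMap (σ : Type) (R : Type u) [CommRing R] : Q σ R ⟶ Spec (.of R) :=
  Proj.toSpecZero (gr σ R) ≫ Spec.map (CommRingCat.ofHom (algebraMap R (gr σ R 0)))

lemma awayι_strMap (f : MvPolynomial σ R) {d} (hf : f ∈ gr σ R d) (hd : 0 < d) :
    Proj.awayι (gr σ R) f hf hd ≫ strMap σ R = Spec.map (CommRingCat.ofHom (cst f)) := by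
  rw [strMap, Proj.awayι_toSpecZero_assoc, ← Spec.map_comp]
  rfl

/-- linear map -/
noncomputable def lmap (ρ : R →+* R') (M : Matrix σ τ R') (hM : LI M) : Q τ R' ⟶ Q σ R :=
  Proj.map (lin ρ M) (lin_irr ρ M hM)

lemma map_cst (ρ : R →+* R') (M : Matrix σ τ R') (s : MvPolynomial σ R) {d} (hs : s ∈ gr σ R d) (r : R) :
    Away.map (lin ρ M) s (cst s r) = cst (lin ρ M s) (ρ r) := by
  have hs' : lin ρ M s ∈ gr τ R' d := (lin ρ M).map_mem hs
  apply HomogeneousLocalization.val_injective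
  rw [cst_eq hs, cst_eq hs', Away.val_mk]
  change (Localization.mk (lin ρ M (C r)) ⟨lin ρ M (s ^ 0), _⟩) = _
  congr 1
  · exact linR_C ρ M r
  · simp

lemma lmap_strMap (ρ : R →+* R') (M : Matrix σ τ R') (hM : LI M) :
    lmap ρ M hM ≫ strMap σ R = strMap τ R' ≫ Spec.map (CommRingCat.ofHom ρ) := by
  have key : ∀ (d : ℕ) (hd : 0 < d) (t : MvPolynomial σ R) (ht : t ∈ gr σ R d) (ht' : lin ρ M t ∈ gr τ R' d),
      Proj.awayι (gr τ R') (lin ρ M t) ht' hd ≫ lmap ρ M hM ≫ strMap σ R =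
      Proj.awayι (gr τ R') (lin ρ M t) ht' hd ≫ strMap τ R' ≫ Spec.map (CommRingCat.ofHom ρ) := by
    intro d hd t ht ht'
    have h1 : Proj.awayι (gr τ R') (lin ρ M t) ht' hd ≫ lmap ρ M hM =
      Spec.map (CommRingCat.ofHom (Away.map (lin ρ M) t)) ≫ Proj.awayι (gr σ R) t ht hd :=
        Proj.awayι_comp_map (lin ρ M) (lin_irr ρ M hM) hd t ht
    rw [reassoc_of% h1, awayι_strMap, reassoc_of% (awayι_strMap (R := R') (lin ρ M t) ht' hd), ← Spec.map_comp, ← Spec.map_comp]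
    congr 1
    ext r
    exact congrArg HomogeneousLocalization.val (map_cst ρ M _ ht r)
  refine (Proj.mapAffineOpenCover _ (lin_irr ρ M hM)).openCover.hom_ext _ _ fun s ↦ ?_
  exact key s.1 s.1.2 s.2.1 s.2.2 _

lemma lin_comp (ρ : R →+* R') (M : Matrix σ τ R') (ρ' : R' →+* R'') (M' : Matrix τ υ R'') :
    (lin ρ' M').comp (lin ρ M) = lin (ρ'.comp ρ) (M.map ρ' * M') := by
  have h : (linR ρ' M').comp (linR ρ M) = linR (ρ'.comp ρ) (M.map ρ' * M') := by
    apply MvPolynomial.ringHom_ext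
    · intro r; simp [linR_C]
    · intro i
      simp only [RingHom.comp_apply, linR_X, map_sum, map_mul, linR_C, Matrix.mul_apply, Finset.mul_sum,
        Finset.sum_mul, Matrix.map_apply]
      rw [Finset.sum_comm]
      simp only [mul_assoc]
  refine DFunLike.ext _ _ fun x => ?_
  exact congr($h x)

lemma proj_map_congr {f g : gr σ R →+*ᵍ gr τ R'} (h : f = g) (hf hg) : Proj.map f hf = Proj.map g hg := by
  subst h; rfl

lemma lmap_comp (ρ : R →+* R') (M : Matrix σ τ R') (ρ' : R' →+* R'') (M' : Matrix τ υ R'') (hM hM')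
    (ρ'' : R →+* R'') (M'' : Matrix σ υ R'') (hM'') (e1 : ρ'.comp ρ = ρ'') (e2 : M.map ρ' * M' = M'') :
    lmap ρ' M' hM' ≫ lmap ρ M hM = lmap ρ'' M'' hM'' := by
  subst e1 e2
  rw [lmap, lmap, ← Proj.map_comp]
  exact proj_map_congr (lin_comp ρ M ρ' M') _ _

lemma lmap_id [DecidableEq σ] (h) : lmap (RingHom.id R) (1 : Matrix σ σ R) h = 𝟙 _ := by
  rw [lmap, ← Proj.map_id]
  apply proj_map_congr
  have : linR (RingHom.id R) (1 : Matrix σ σ R) = RingHom.id _ := by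
    apply MvPolynomial.ringHom_ext
    · intro r; simp [linR_C]
    · intro i; simp [linR_X, Matrix.one_apply]
  refine DFunLike.ext _ _ fun x => ?_
  exact congr($this x)

/-- chart -/
noncomputable def chart (R : Type u) [CommRing R] (i : σ) : Spec (.of (Away (gr σ R) (X i))) ⟶ Q σ R :=
  Proj.awayι (gr σ R) (X i) (X_mem i) one_pos

instance (i : σ) : IsOpenImmersion (chart R i) := by unfold chart; infer_instance

lemma chart_range (i : σ) : (chart R i).opensRange = Proj.basicOpen (gr σ R) (X i) :=
  Proj.opensRange_awayι _ _ _ _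

lemma chart_strMap (i : σ) : chart R i ≫ strMap σ R = Spec.map (CommRingCat.ofHom (cst (X i))) :=
  awayι_strMap _ _ _

/-- chart cover -/
noncomputable def chartCover (σ : Type) [Fintype σ] (R : Type u) [CommRing R] : (Q σ R).AffineOpenCover :=
  Proj.affineOpenCoverOfIrrelevantLESpan (gr σ R) (fun i : σ => X i) (m := fun _ => 1)
    (fun i => X_mem i) (fun _ => one_pos) (irr_le _ (fun i => Ideal.subset_span ⟨i, rfl⟩))

lemma Q_ext {Z : Scheme.{u}} (f g : Q σ R ⟶ Z) (h : ∀ i, chart R i ≫ f = chart R i ≫ g) : f = g :=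
  (chartCover σ R).openCover.hom_ext _ _ h

lemma chart_cov (y : Q σ R) : ∃ i, y ∈ Proj.basicOpen (gr σ R) (X i) := by
  have := Proj.iSup_basicOpen_eq_top (gr σ R) (fun i : σ => X i) (irr_le _ (fun i => Ideal.subset_span ⟨i, rfl⟩))
  have h := this.ge (show y ∈ ⊤ from trivial)
  simpa [TopologicalSpace.Opens.mem_iSup] using h

/-- the chart map -/
noncomputable def cmap (ρ : R →+* R') (M : Matrix σ τ R') (i : σ) (k : τ) (h : lin ρ M (X i) = X k) :
    Away (gr σ R) (X i) →+* Away (gr τ R') (X k) :=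
  HomogeneousLocalization.map (lin ρ M) (by
    rintro _ ⟨n, rfl⟩; exact ⟨n, by simp [← h]⟩)

lemma awayι_map_aux {f : gr σ R →+*ᵍ gr τ R'} (hf) (s : MvPolynomial σ R) (hs : s ∈ gr σ R 1)
    (t : MvPolynomial τ R') (ht : t ∈ gr τ R' 1) (h : f s = t) (h') : 
    Proj.awayι (gr τ R') t ht one_pos ≫ Proj.map f hf =
      Spec.map (CommRingCat.ofHom (HomogeneousLocalization.map f h')) ≫ Proj.awayι (gr σ R) s hs one_pos := by
  subst h
  exact Proj.awayι_comp_map f hf one_pos s hs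

lemma chart_lmap (ρ : R →+* R') (M : Matrix σ τ R') (hM : LI M) (i : σ) (k : τ) (h : lin ρ M (X i) = X k) :
    chart R' k ≫ lmap ρ M hM = Spec.map (CommRingCat.ofHom (cmap ρ M i k h)) ≫ chart R i :=
  awayι_map_aux _ _ _ _ _ h _

lemma cmap_cst (ρ : R →+* R') (M : Matrix σ τ R') (i : σ) (k : τ) (h : lin ρ M (X i) = X k) (r : R) :
    cmap ρ M i k h (cst _ r) = cst _ (ρ r) := by
  apply HomogeneousLocalization.val_injective
  rw [cst_eq (X_mem i), cst_eq (X_mem k), Away.val_mk]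
  change (Localization.mk (lin ρ M (C r)) ⟨lin ρ M (X i ^ 0), _⟩) = _
  congr 1
  · exact linR_C ρ M r
  · simp

lemma cmap_frac (ρ : R →+* R') (M : Matrix σ τ R') (i : σ) (k : τ) (h : lin ρ M (X i) = X k) (j : σ) (c : R') (l : τ)
    (h2 : lin ρ M (X j) = C c * X l) :
    cmap ρ M i k h (frac R i j) = cst _ c * frac R' k l := by
  apply HomogeneousLocalization.val_injective
  rw [HomogeneousLocalization.val_mul, cst_eq (X_mem k), frac, frac, Away.val_mk, Away.val_mk, Localization.mk_mul]
  change (Localization.mk (lin ρ M (X j)) ⟨lin ρ M (X i ^ 1), _⟩) = _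
  congr 1
  · simp [h]

end
end PB

namespace PB
set_option linter.unusedSectionVars false
set_option linter.unusedVariables false
open MvPolynomial HomogeneousLocalization

lemma isPullback_of_cover {W X Y Z : Scheme.{u}} (fWX : W ⟶ X) (fWY : W ⟶ Y) (fXZ : X ⟶ Z) (fYZ : Y ⟶ Z)
    (𝒰 : X.OpenCover) (V : 𝒰.I₀ → Scheme.{u}) (a : ∀ i, V i ⟶ 𝒰.X i) (b : ∀ i, V i ⟶ W)
    (h1 : ∀ i, IsPullback (a i) (b i) (𝒰.f i) fWX)
    (h2 : ∀ i, IsPullback (a i) (b i ≫ fWY) (𝒰.f i ≫ fXZ) fYZ) : IsPullback fWX fWY fXZ fYZ := by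
  apply Scheme.isPullback_of_openCover _ _ _ _ 𝒰
  intro i
  have e := (h1 i).flip.isoPullback
  refine (h2 i).of_iso (h1 i).flip.isoPullback (Iso.refl _) (Iso.refl _) (Iso.refl _) ?_ ?_ ?_ ?_
  · simp only [Iso.refl_hom, Category.comp_id]
    exact ((h1 i).flip.isoPullback_hom_snd).symm
  · simp only [Iso.refl_hom, Category.comp_id]
    change _ = _ ≫ pullback.fst _ _ ≫ fWY
    rw [IsPullback.isoPullback_hom_fst_assoc]
  · simp
  · simp

section
variable {σ τ υ : Type} [Fintype σ] [Fintype τ] [Fintype υ]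
  {R R' R'' : Type u} [CommRing R] [CommRing R'] [CommRing R'']

lemma lin_one [DecidableEq σ] (ρ : R →+* R') (i : σ) : lin ρ (1 : Matrix σ σ R') (X i) = X i := by
  simp [lin_apply, linR_X, Matrix.one_apply]

lemma LI_one [DecidableEq σ] : LI (1 : Matrix σ σ R) := by
  refine ⟨1, fun i j => ?_⟩
  simp [Matrix.one_apply]

lemma isPushout_cmap [DecidableEq σ] (ρ : R →+* R') (i : σ) :
    IsPushout (CommRingCat.ofHom (cst (σ := σ) (X i))) (CommRingCat.ofHom ρ)
      (CommRingCat.ofHom (cmap ρ (1 : Matrix σ σ R') i i (lin_one ρ i))) (CommRingCat.ofHom (cst (σ := σ) (X i))) := by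
  refine ⟨⟨?_⟩, ⟨PushoutCocone.IsColimit.mk _ (fun s => CommRingCat.ofHom
     (evA i s.inr.hom (fun j => s.inl.hom (frac R i j)) (by rw [frac_self, map_one]))) ?_ ?_ ?_⟩⟩
  · ext1
    refine RingHom.ext fun r => ?_
    exact cmap_cst ρ _ i i (lin_one ρ i) r
  · intro s
    ext1
    apply away_ext
    · refine RingHom.ext fun r => ?_
      have h := congr($(s.condition).hom r)
      simp only [CommRingCat.hom_comp, CommRingCat.hom_ofHom, RingHom.comp_apply] at h ⊢
      rw [cmap_cst, evA_cst, h]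
    · intro j
      simp only [CommRingCat.hom_comp, CommRingCat.hom_ofHom, RingHom.comp_apply]
      rw [cmap_frac ρ _ i i _ j 1 j (by rw [lin_one]; simp)]
      have h1 : cst (X i : MvPolynomial σ R') 1 = 1 := map_one _
      rw [h1, one_mul, evA_frac]
  · intro s
    ext1
    refine RingHom.ext fun r => ?_
    simp only [CommRingCat.hom_comp, CommRingCat.hom_ofHom, RingHom.comp_apply]
    rw [evA_cst]
  · intro s m h1 h2
    ext1
    apply away_ext
    · refine RingHom.ext fun r => ?_
      simp only [CommRingCat.hom_ofHom, RingHom.comp_apply, evA_cst]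
      rw [← h2]; rfl
    · intro j
      simp only [CommRingCat.hom_ofHom, RingHom.comp_apply, evA_frac]
      rw [← h1]
      simp only [CommRingCat.hom_comp, CommRingCat.hom_ofHom, RingHom.comp_apply]
      rw [cmap_frac ρ _ i i _ j 1 j (by rw [lin_one]; simp)]
      rw [map_one, one_mul]

lemma isPullback_lmap [DecidableEq σ] (ρ : R →+* R') :
    IsPullback (lmap ρ (1 : Matrix σ σ R') LI_one) (strMap σ R') (strMap σ R) (Spec.map (CommRingCat.ofHom ρ)) := by
  refine isPullback_of_cover _ _ _ _ (chartCover σ R).openCover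
    (fun (i : σ) => Spec (.of (Away (gr σ R') (X i)))) 
    (fun (i : σ) => Spec.map (CommRingCat.ofHom (cmap ρ (1 : Matrix σ σ R') i i (lin_one ρ i))))
    (fun (i : σ) => chart R' i) ?_ ?_
  · intro (i : σ)
    change IsPullback _ _ (chart R i) _
    apply IsOpenImmersion.isPullback
    · exact chart_lmap ρ 1 LI_one i i (lin_one ρ i)
    · rw [chart_range, chart_range, lmap, Proj.map_preimage_basicOpen, lin_one]
  · intro (i : σ)
    change IsPullback _ (chart R' i ≫ _) (chart R i ≫ _) _
    rw [chart_strMap, chart_strMap]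
    exact isPullback_SpecMap_of_isPushout _ _ _ _ (isPushout_cmap ρ i)

instance : IsIso (strMap Unit R) := by
  have h1 : (chart R ()).opensRange = ⊤ := by
    rw [chart_range, eq_top_iff]
    intro y _
    obtain ⟨i, hi⟩ := chart_cov y
    exact hi
  have : IsIso (chart R ()) := by
    rw [isIso_iff_isOpenImmersion_and_surjective]
    refine ⟨inferInstance, ⟨fun y => ?_⟩⟩
    have : y ∈ (chart R ()).opensRange := h1 ▸ trivial
    exact this
  have h2 := chart_strMap (R := R) (σ := Unit) ()
  have h3 : IsIso (CommRingCat.ofHom (cst (R := R) (σ := Unit) (X ()))) := by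
    refine ⟨CommRingCat.ofHom (evA () (RingHom.id R) (fun _ => 1) rfl), ?_, ?_⟩
    · ext1
      refine RingHom.ext fun r => ?_
      exact evA_cst () (RingHom.id R) (fun _ => 1) rfl r
    · ext1
      apply away_ext
      · refine RingHom.ext fun r => ?_
        simp [evA_cst]
      · intro j
        simp only [CommRingCat.hom_comp, CommRingCat.hom_ofHom, RingHom.comp_apply, evA_frac, map_one]
        exact (frac_self _).symm
  have h4 : strMap Unit R = inv (chart R ()) ≫ Spec.map (CommRingCat.ofHom (cst (X ()))) := by
    rw [← h2]; simp
  rw [h4]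
  infer_instance

/-- column -/
def col (v : σ → R) : Matrix σ Unit R := fun i _ => v i

/-- unimodular -/
def UM (v : σ → R) : Prop := ∃ w : σ → R, ∑ i, w i * v i = 1

lemma UM.LI {v : σ → R} (h : UM v) : LI (col v) := by
  obtain ⟨w, hw⟩ := h
  exact ⟨fun _ i => w i, fun i j => by simpa [col] using hw⟩

/-- the point with homogeneous coordinates `v` -/
noncomputable def pt (v : σ → R) (h : UM v) : Spec (.of R) ⟶ Q σ R :=
  inv (strMap Unit R) ≫ lmap (RingHom.id R) (col v) h.LI

lemma pt_strMap (v : σ → R) (h : UM v) : pt v h ≫ strMap σ R = 𝟙 _ := by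
  rw [pt, Category.assoc, lmap_strMap]
  simp

lemma pt_congr {v w : σ → R} (e : v = w) (h h') : pt v h = pt w h' := by subst e; rfl

lemma pt_lmap (M : Matrix τ σ R) (hM : LI M) (v : σ → R) (h : UM v) (w : τ → R) (hw : UM w) (e : M.mulVec v = w) :
    pt v h ≫ lmap (RingHom.id R) M hM = pt w hw := by
  rw [pt, pt, Category.assoc, lmap_comp (ρ'' := RingHom.id R) (M'' := col w) (hM'' := hw.LI)]
  · rfl
  · subst e
    ext i j
    simp [col, Matrix.mul_apply, Matrix.mulVec, dotProduct]

lemma pt_base [DecidableEq σ] (ρ : R →+* R') (v : σ → R) (h : UM v) (h' : UM (fun i => ρ (v i))) :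
    pt (fun i => ρ (v i)) h' ≫ lmap ρ (1 : Matrix σ σ R') LI_one = Spec.map (CommRingCat.ofHom ρ) ≫ pt v h := by
  rw [pt, pt, Category.assoc, IsIso.inv_comp_eq, lmap_comp (ρ'' := ρ) (M'' := col (fun i => ρ (v i))) (hM'' := h'.LI)]
  · have : strMap Unit R' ≫ Spec.map (CommRingCat.ofHom ρ) ≫ inv (strMap Unit R) = lmap ρ 1 LI_one := by
      rw [← Category.assoc, IsIso.comp_inv_eq, lmap_strMap]
    rw [reassoc_of% this, lmap_comp (ρ'' := ρ) (M'' := col (fun i => ρ (v i))) (hM'' := h'.LI)]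
    · rfl
    · ext i j
      simp [col, Matrix.mul_apply]
  · rfl
  · ext i j
    simp [col, Matrix.mul_apply, Matrix.one_apply, apply_ite ρ]

lemma pt_smul (u : Rˣ) (v w : σ → R) (h : UM v) (hw : UM w) (e : ∀ i, w i = u * v i) : pt v h = pt w hw := by
  let M : Matrix Unit Unit R := Matrix.of fun _ _ => (u : R)
  have hu : LI M := ⟨fun _ _ => (u⁻¹ : Rˣ), by simp [M]⟩
  have h1 : lmap (RingHom.id R) M hu = 𝟙 _ := by
    rw [← cancel_mono (strMap Unit R), lmap_strMap]
    have : CommRingCat.ofHom (RingHom.id R) = 𝟙 (CommRingCat.of R) := rfl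
    rw [this]
    simp
  have h2 := lmap_comp (RingHom.id R) (col v) (RingHom.id R) M h.LI hu
    (RingHom.id R) (col w) hw.LI rfl (by ext i j; simp [M, col, Matrix.mul_apply, e, mul_comm])
  rw [h1, Category.id_comp] at h2
  rw [pt, pt, h2]

lemma UM_of_one {v : σ → R} {i : σ} (h : v i = 1) : UM v := by
  classical
  exact ⟨Pi.single i 1, by simp [Pi.single_apply, h]⟩

lemma pt_chart (v : σ → R) (h : UM v) (i : σ) (hv : v i = 1) :
    pt v h = Spec.map (CommRingCat.ofHom (evA i (RingHom.id R) v hv)) ≫ chart R i := by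
  have e1 : lin (RingHom.id R) (col v) (X i) = X () := by
    simp [lin_apply, linR_X, col, hv]
  have e0 : inv (strMap Unit R) = Spec.map (CommRingCat.ofHom (evA () (RingHom.id R) (fun _ => 1) rfl)) ≫ chart R () := by
    rw [IsIso.inv_eq_of_hom_inv_id]
    rw [← cancel_mono (strMap Unit R), Category.assoc, Category.assoc, chart_strMap, ← Spec.map_comp]
    have : CommRingCat.ofHom (cst (X ())) ≫ CommRingCat.ofHom (evA () (RingHom.id R) (fun _ => 1) rfl) = 𝟙 _ := by
      ext1
      refine RingHom.ext fun r => ?_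
      exact evA_cst () (RingHom.id R) (fun _ => 1) rfl r
    rw [this]; simp
  rw [pt, e0, Category.assoc, chart_lmap _ _ _ i () e1, ← Category.assoc, ← Spec.map_comp]
  congr 2
  ext1
  apply away_ext
  · refine RingHom.ext fun r => ?_
    simp only [CommRingCat.hom_comp, CommRingCat.hom_ofHom, RingHom.comp_apply, cmap_cst, evA_cst, RingHom.id_apply]
  · intro j
    simp only [CommRingCat.hom_comp, CommRingCat.hom_ofHom, RingHom.comp_apply, evA_frac]
    rw [cmap_frac _ _ _ _ _ j (v j) () (by simp [lin_apply, linR_X, col])]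
    rw [map_mul, evA_cst, evA_frac]
    simp

/-- A section in a chart is a point. -/
lemma exists_pt (s : Spec (.of R) ⟶ Q σ R) (hs : s ≫ strMap σ R = 𝟙 _) (i : σ)
    (hi : Set.range s ⊆ (Proj.basicOpen (gr σ R) (X i) : Set (Q σ R))) :
    ∃ (v : σ → R) (h : UM v), s = pt v h := by
  have hi' : Set.range s ⊆ Set.range (chart R i) := by
    have := congrArg (fun U : (Q σ R).Opens => (U : Set (Q σ R))) (chart_range (R := R) i)
    exact hi.trans this.ge
  obtain ⟨φ, hφ⟩ := Spec.map_surjective (IsOpenImmersion.lift (chart R i) s hi')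
  have h1 : Spec.map φ ≫ chart R i = s := by rw [hφ, IsOpenImmersion.lift_fac]
  have h2 : CommRingCat.ofHom (cst (X i)) ≫ φ = 𝟙 _ := by
    apply Spec.map_injective
    rw [Spec.map_comp, ← chart_strMap, reassoc_of% h1, hs, Spec.map_id]
  let v : σ → R := fun j => φ.hom (frac R i j)
  have hv : v i = 1 := by simp only [v, frac_self, map_one]
  refine ⟨v, UM_of_one hv, ?_⟩
  rw [pt_chart v _ i hv, ← h1]
  congr 2
  ext1
  apply away_ext
  · refine RingHom.ext fun r => ?_
    have := congr($(h2).hom r)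
    simp only [CommRingCat.hom_comp, CommRingCat.hom_ofHom, RingHom.comp_apply, evA_cst] at this ⊢
    exact this
  · intro j
    simp only [CommRingCat.hom_ofHom, evA_frac]
    rfl

end
end PB

namespace PB
set_option linter.unusedSectionVars false
set_option linter.unusedVariables false

section Poly
open Polynomial

lemma poly_key {R : Type u} [CommRing R] (p q p' : R[X]) (hp : p.eval 0 = 0) (hq : q.eval 0 = 0) (hp1 : p.eval 1 = 1)
    (hp' : p'.eval 0 = 0) (hc : p'.comp p = X)
    (h : (p.eval₂ LaurentPolynomial.C (LaurentPolynomial.T 1 : LaurentPolynomial R)) *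
      (q.eval₂ LaurentPolynomial.C (LaurentPolynomial.T (-1) : LaurentPolynomial R)) = 1) : p = X := by
  have hX : ∀ r : R[X], r.eval 0 = 0 → ∃ r1, r = X * r1 := by
    intro r hr
    rw [← coeff_zero_eq_eval_zero, ← X_dvd_iff] at hr
    exact hr
  obtain ⟨p1, rfl⟩ := hX p hp
  obtain ⟨q1, rfl⟩ := hX q hq
  obtain ⟨r1, rfl⟩ := hX p' hp'
  have hu : p1 * r1.comp (X * p1) = 1 := by
    have : X * (p1 * r1.comp (X * p1)) = X * 1 := by
      rw [mul_comp, X_comp] at hc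
      rw [← mul_assoc, hc, mul_one]
    have hreg : IsLeftRegular (X : R[X]) := isRegular_X.left
    exact hreg this
  set r := r1.comp (X * p1) with hr
  have hL : ∀ s : R[X], s.eval₂ LaurentPolynomial.C (LaurentPolynomial.T 1 : LaurentPolynomial R) = toLaurent s := by
    intro s
    have : eval₂RingHom LaurentPolynomial.C (LaurentPolynomial.T 1 : LaurentPolynomial R) = toLaurent := by
      ext <;> simp
    exact congr($this s)
  have hI : ∀ s : R[X], s.eval₂ LaurentPolynomial.C (LaurentPolynomial.T (-1) : LaurentPolynomial R) =
      LaurentPolynomial.invert (toLaurent s) := by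
    intro s
    have : eval₂RingHom LaurentPolynomial.C (LaurentPolynomial.T (-1) : LaurentPolynomial R) =
      (LaurentPolynomial.invert : LaurentPolynomial R ≃ₐ[R] LaurentPolynomial R).toRingEquiv.toRingHom.comp toLaurent := by
      ext <;> simp
    exact congr($this s)
  rw [hL, hI] at h
  simp only [map_mul, toLaurent_X, LaurentPolynomial.invert_T] at h
  have h2 : toLaurent p1 * LaurentPolynomial.invert (toLaurent q1) = 1 := by
    rw [← h]
    have : (LaurentPolynomial.T 1 : LaurentPolynomial R) * LaurentPolynomial.T (-1) = 1 := by
      rw [← LaurentPolynomial.T_add]; simp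
    linear_combination (- toLaurent p1 * LaurentPolynomial.invert (toLaurent q1)) * this
  have h3 : LaurentPolynomial.invert (toLaurent q1) = toLaurent r := by
    have h4 : toLaurent p1 * toLaurent r = 1 := by rw [← map_mul, hu, map_one]
    linear_combination (toLaurent r) * h2 - LaurentPolynomial.invert (toLaurent q1) * h4
  have h5 : r = C (r.coeff 0) := by
    ext n
    rcases Nat.eq_zero_or_pos n with rfl | hn
    · simp
    · rw [coeff_C, if_neg (by omega)]
      have := congrArg (fun l : LaurentPolynomial R => l.coeff (n : ℤ)) h3
      simp only [LaurentPolynomial.invert_apply] at this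
      have e1 : (Finsupp.mapDomain Nat.cast (toFinsupp r).coeff : ℤ →₀ R) (n : ℤ) = r.coeff n :=
        Finsupp.mapDomain_apply Nat.cast_injective _ _
      have e2 : (Finsupp.mapDomain Nat.cast (toFinsupp q1).coeff : ℤ →₀ R) (-(n : ℤ)) = 0 :=
        Finsupp.mapDomain_of_notMem_range _ _ (by rintro ⟨m, hm⟩; omega)
      exact e1.symm.trans (this.symm.trans e2)
  have h6 : p1 = C (p1.coeff 0) := by
    have h7 := congrArg (fun s : R[X] => s.coeff 0) hu
    simp only [mul_coeff_zero, coeff_one_zero] at h7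
    have h8 : C (p1.coeff 0) * r = 1 := by rw [h5, ← C_mul, h7, C_1]
    linear_combination (- p1) * h8 + C (p1.coeff 0) * hu
  rw [h6] at hp1 ⊢
  simp at hp1
  rw [hp1]; simp
end Poly
end PB

namespace PB
set_option linter.unusedSectionVars false
set_option linter.unusedVariables false
open MvPolynomial HomogeneousLocalization

section
variable {σ τ υ : Type} [Fintype σ] [Fintype τ] [Fintype υ]
  {R R' R'' : Type u} [CommRing R] [CommRing R'] [CommRing R'']

lemma pt_zero (v : σ → R) (h : UM v) (i : σ) (hv : v i = 0) (x) :
    pt v h x ∉ Proj.basicOpen (gr σ R) (X i) := by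
  intro hx
  have h1 : (inv (strMap Unit R)) x ∈ lmap (RingHom.id R) (col v) h.LI ⁻¹ᵁ Proj.basicOpen (gr σ R) (X i) := by
    rw [pt] at hx
    exact hx
  rw [lmap, Proj.map_preimage_basicOpen] at h1
  have : lin (RingHom.id R) (col v) (X i) = 0 := by simp [lin_apply, linR_X, col, hv]
  rw [this, Proj.basicOpen_zero] at h1
  exact h1

lemma lmap_one_mem [DecidableEq σ] (ρ : R →+* R') (i : σ) (y) :
    lmap ρ (1 : Matrix σ σ R') LI_one y ∈ Proj.basicOpen (gr σ R) (X i) ↔ y ∈ Proj.basicOpen (gr σ R') (X i) := by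
  change y ∈ lmap ρ (1 : Matrix σ σ R') LI_one ⁻¹ᵁ Proj.basicOpen (gr σ R) (X i) ↔ _
  rw [lmap, Proj.map_preimage_basicOpen, lin_one]

lemma UM.map {v : σ → R} (h : UM v) (ρ : R →+* R') : UM (fun i => ρ (v i)) := by
  obtain ⟨w, hw⟩ := h
  exact ⟨fun i => ρ (w i), by simp only [← map_mul, ← map_sum, hw, map_one]⟩

lemma isUnit_of_pt (v : σ → R) (h : UM v) (i : σ)
    (hx : ∀ x, pt v h x ∈ Proj.basicOpen (gr σ R) (X i)) : IsUnit (v i) := by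
  classical
  by_contra hn
  obtain ⟨m, hm, hvm⟩ := exists_max_ideal_of_mem_nonunits hn
  let ρ : R →+* R ⧸ m := Ideal.Quotient.mk m
  have h0 : ρ (v i) = 0 := Ideal.Quotient.eq_zero_iff_mem.2 hvm
  have : Nontrivial (R ⧸ m) := Ideal.Quotient.nontrivial_iff.2 hm.ne_top
  let x : Spec (.of (R ⧸ m)) := (Classical.arbitrary (PrimeSpectrum (R ⧸ m)))
  have h1 := pt_zero _ (h.map ρ) i h0 x
  apply h1
  rw [← lmap_one_mem ρ]
  have h2 := pt_base ρ v h (h.map ρ)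
  have h3 := congr($h2 x)
  simp only [Scheme.Hom.comp_apply] at h3
  rw [h3]
  exact hx _

/-- vector -/
def vec (i : Fin 2) (a : R) : Fin 2 → R := fun k => if k = i then 1 else a

lemma vec_self (i : Fin 2) (a : R) : vec i a i = 1 := if_pos rfl
lemma vec_ne {i j : Fin 2} (h : i ≠ j) (a : R) : vec i a j = a := if_neg h.symm
lemma vec_UM (i : Fin 2) (a : R) : UM (vec i a) := UM_of_one (vec_self i a)
lemma vec_map (ρ : R →+* R') (i : Fin 2) (a : R) : (fun k => ρ (vec i a k)) = vec i (ρ a) := by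
  funext k; simp only [vec]; split_ifs <;> simp

lemma fin2 {i j : Fin 2} (h : i ≠ j) (k : Fin 2) : k = i ∨ k = j := by omega

/-- family of points in a chart -/
noncomputable def bpt (ρ : R →+* R') (i : Fin 2) (a : R') : Spec (.of R') ⟶ Q (Fin 2) R :=
  pt (vec i a) (vec_UM i a) ≫ lmap ρ (1 : Matrix (Fin 2) (Fin 2) R') LI_one

lemma bpt_chart (ρ : R →+* R') (i : Fin 2) (a : R') :
    bpt ρ i a = Spec.map (CommRingCat.ofHom (evA i ρ (vec i a) (vec_self i a))) ≫ chart R i := by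
  rw [bpt, pt_chart _ _ i (vec_self i a), Category.assoc, chart_lmap _ _ _ i i (lin_one ρ i), ← Category.assoc,
    ← Spec.map_comp]
  congr 2
  ext1
  apply away_ext
  · refine RingHom.ext fun r => ?_
    simp only [CommRingCat.hom_comp, CommRingCat.hom_ofHom, RingHom.comp_apply, cmap_cst, evA_cst, RingHom.id_apply]
  · intro j
    simp only [CommRingCat.hom_comp, CommRingCat.hom_ofHom, RingHom.comp_apply, evA_frac]
    rw [cmap_frac _ _ _ _ _ j 1 j (by rw [lin_one]; simp)]
    rw [map_mul, evA_cst, evA_frac]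
    simp

lemma bpt_inj (ρ : R →+* R') (i : Fin 2) (a b : R') (h : bpt ρ i a = bpt ρ i b) : a = b := by
  rw [bpt_chart, bpt_chart, cancel_mono] at h
  have h1 := congrArg CommRingCat.Hom.hom (Spec.map_injective h)
  obtain ⟨j, hj⟩ : ∃ j, i ≠ j := ⟨i + 1, by fin_cases i <;> simp⟩
  have h2 := congr($h1 (frac R i j))
  simp only [CommRingCat.hom_ofHom, evA_frac, vec_ne hj] at h2
  exact h2

lemma bpt_swap (ρ : R →+* R') {i j : Fin 2} (h : i ≠ j) (a : R') (b : R') (e : a * b = 1) : bpt ρ i a = bpt ρ j b := by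
  rw [bpt, bpt, pt_smul ⟨b, a, by rw [mul_comm, e], e⟩ (vec i a) (vec j b) (vec_UM _ _) (vec_UM _ _)]
  intro k
  rcases fin2 h k with rfl | rfl
  · simp [vec_self, vec_ne h.symm]
  · simp [vec_self, vec_ne h, mul_comm b, e]

lemma bpt_id_mem (i : Fin 2) (a : R) (x) : pt (vec i a) (vec_UM i a) x ∈ Proj.basicOpen (gr _ R) (X i) := by
  rw [pt_chart _ _ i (vec_self i a), ← chart_range]
  exact ⟨_, rfl⟩

lemma bpt_id (i : Fin 2) (a : R) : bpt (RingHom.id R) i a = pt (vec i a) (vec_UM i a) := by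
  rw [bpt, lmap_id, Category.comp_id]

lemma pt_strMap_base (ρ : R →+* R') (v : σ → R') (h : UM v) [DecidableEq σ] :
    (pt v h ≫ lmap ρ (1 : Matrix σ σ R') LI_one) ≫ strMap σ R = Spec.map (CommRingCat.ofHom ρ) := by
  rw [Category.assoc, lmap_strMap, ← Category.assoc, pt_strMap, Category.id_comp]

lemma bpt_cross (ρ : R →+* R') {i j : Fin 2} (h : i ≠ j) (a : R') (b : R') (e : bpt ρ i a = bpt ρ j b) : a * b = 1 := by
  have e1 : pt (vec i a) (vec_UM i a) = pt (vec j b) (vec_UM j b) := by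
    apply (isPullback_lmap (σ := Fin 2) ρ).hom_ext
    · exact e
    · rw [pt_strMap, pt_strMap]
  have hu : IsUnit b := by
    have := isUnit_of_pt (vec j b) (vec_UM j b) i (by rw [← e1]; exact bpt_id_mem i a)
    rwa [vec_ne h.symm] at this
  obtain ⟨u, rfl⟩ := hu
  have e2 := bpt_swap ρ h.symm (u : R') (↑u⁻¹) (by simp)
  have e3 := bpt_inj ρ i _ _ (e.trans e2)
  rw [e3]; simp

/-- complement of the chart. -/
lemma mem_range_pt {i j : Fin 2} (h : i ≠ j) (y : Q (Fin 2) R) (hy : y ∉ Proj.basicOpen (gr _ R) (X j)) :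
    ∃ x, pt (vec i (0 : R)) (vec_UM i 0) x = y := by
  have hyi : y ∈ Proj.basicOpen (gr _ R) (X i) := by
    obtain ⟨k, hk⟩ := chart_cov y
    rcases fin2 h k with rfl | rfl
    · exact hk
    · exact absurd hk hy
  rw [← chart_range] at hyi
  obtain ⟨z, rfl⟩ := hyi
  have hz : frac R i j ∈ z.asIdeal := by
    by_contra hn
    apply hy
    change z ∈ chart R i ⁻¹ᵁ Proj.basicOpen (gr (Fin 2) R) (X j)
    rw [chart, Proj.awayι_preimage_basicOpen _ _ _ (X_mem j) one_pos]
    have e : Away.isLocalizationElem (X_mem i) (X_mem j) = frac R i j := by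
      apply HomogeneousLocalization.val_injective
      rw [frac, Away.val_mk]
      rw [Away.val_mk]
      congr 1
      simp
    change Away.isLocalizationElem (X_mem i) (X_mem j) ∉ z.asIdeal
    rw [e]; exact hn
  rw [pt_chart _ _ i (vec_self i 0)]
  refine ⟨Spec.map (CommRingCat.ofHom (cst (X i))) z, ?_⟩
  rw [Scheme.Hom.comp_apply]
  congr 1
  have hI : (Ideal.Quotient.mk z.asIdeal).comp ((cst (X i)).comp (evA i (RingHom.id R) (vec i 0) (vec_self i 0))) =
      Ideal.Quotient.mk z.asIdeal := by
    apply away_ext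
    · refine RingHom.ext fun r => ?_
      simp [evA_cst]
    · intro k
      simp only [RingHom.comp_apply, evA_frac]
      rcases fin2 h k with rfl | rfl
      · rw [vec_self, frac_self, map_one]
      · rw [vec_ne h, map_zero, map_zero]
        exact (Ideal.Quotient.eq_zero_iff_mem.2 hz).symm
  apply PrimeSpectrum.ext
  ext a
  have h2 := congr($hI a)
  change cst (X i) (evA i (RingHom.id R) (vec i 0) (vec_self i 0) a) ∈ z.asIdeal ↔ _
  rw [← Ideal.Quotient.eq_zero_iff_mem, ← Ideal.Quotient.eq_zero_iff_mem, ← h2]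
  rfl

end
end PB

namespace PB
set_option linter.unusedSectionVars false
set_option linter.unusedVariables false
open MvPolynomial HomogeneousLocalization

section
variable {R : Type u} [CommRing R]

lemma stable_chart {i j : Fin 2} (h : i ≠ j) (θ : Q (Fin 2) R ⟶ Q (Fin 2) R) (hinj : Function.Injective θ)
    (hf : pt (vec i (0 : R)) (vec_UM i 0) ≫ θ = pt (vec i (0 : R)) (vec_UM i 0))
    (y : Q (Fin 2) R) (hy : y ∈ Proj.basicOpen (gr _ R) (X j)) : θ y ∈ Proj.basicOpen (gr _ R) (X j) := by
  by_contra hn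
  obtain ⟨x, hx⟩ := mem_range_pt h _ hn
  have h1 := congr($hf x)
  rw [Scheme.Hom.comp_apply, hx] at h1
  have h2 := hinj h1
  rw [h2] at hn
  exact hn hy

lemma exists_poly {i j : Fin 2} (hij : i ≠ j) (θ : Q (Fin 2) R ⟶ Q (Fin 2) R) (hθ : θ ≫ strMap _ R = strMap _ R)
    (hs : ∀ y ∈ Proj.basicOpen (gr (Fin 2) R) (X i), θ y ∈ Proj.basicOpen (gr (Fin 2) R) (X i)) :
    ∃ p : Polynomial R, ∀ (R' : Type u) [CommRing R'] (ρ : R →+* R') (a : R'),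
      bpt ρ i a ≫ θ = bpt ρ i (p.eval₂ ρ a) := by
  have hr : Set.range (chart R i ≫ θ) ⊆ Set.range (chart R i) := by
    rintro _ ⟨z, rfl⟩
    rw [Scheme.Hom.comp_apply]
    have h1 : chart R i z ∈ Proj.basicOpen (gr (Fin 2) R) (X i) := by
      rw [← chart_range]; exact ⟨z, rfl⟩
    have h2 := hs _ h1
    rw [← chart_range] at h2
    exact h2
  obtain ⟨φ, hφ⟩ := Spec.map_surjective (IsOpenImmersion.lift (chart R i) (chart R i ≫ θ) hr)
  have h1 : Spec.map φ ≫ chart R i = chart R i ≫ θ := by rw [hφ, IsOpenImmersion.lift_fac]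
  have h2 : CommRingCat.ofHom (cst (X i)) ≫ φ = CommRingCat.ofHom (cst (X i)) := by
    apply Spec.map_injective
    rw [Spec.map_comp, ← chart_strMap, reassoc_of% h1, hθ]
  refine ⟨evA i (Polynomial.C : R →+* Polynomial R) (vec i Polynomial.X) (vec_self i _) (φ.hom (frac R i j)),
    fun R' _ ρ a => ?_⟩
  rw [bpt_chart, bpt_chart, Category.assoc, ← h1, ← Category.assoc, ← Spec.map_comp]
  congr 2
  ext1
  have hE : (Polynomial.eval₂RingHom ρ a).comp
      (evA i (Polynomial.C : R →+* Polynomial R) (vec i Polynomial.X) (vec_self i _)) = evA i ρ (vec i a) (vec_self i a) := by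
    apply away_ext
    · refine RingHom.ext fun r => ?_
      simp [evA_cst]
    · intro k
      simp only [RingHom.comp_apply, evA_frac]
      rcases fin2 hij k with rfl | rfl
      · rw [vec_self, vec_self, map_one]
      · rw [vec_ne hij, vec_ne hij]; simp
  apply away_ext
  · refine RingHom.ext fun r => ?_
    have := congr($(h2).hom r)
    simp only [CommRingCat.hom_comp, CommRingCat.hom_ofHom, RingHom.comp_apply, evA_cst] at this ⊢
    rw [this, evA_cst]
  · intro k
    simp only [CommRingCat.hom_comp, CommRingCat.hom_ofHom, RingHom.comp_apply, evA_frac]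
    rcases fin2 hij k with rfl | rfl
    · rw [vec_self, frac_self, map_one, map_one]
    · rw [vec_ne hij]
      exact congr($hE.symm _)

lemma chart_bpt {i j : Fin 2} (hij : i ≠ j) : bpt (cst (X i)) i (frac R i j) = chart R i := by
  rw [bpt_chart]
  have : evA i (cst (X i)) (vec i (frac R i j)) (vec_self i _) = RingHom.id _ := by
    apply away_ext
    · refine RingHom.ext fun r => ?_
      simp [evA_cst]
    · intro k
      simp only [evA_frac, RingHom.id_apply]
      rcases fin2 hij k with rfl | rfl
      · rw [vec_self, frac_self]
      · rw [vec_ne hij]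
  rw [this]
  have h2 : CommRingCat.ofHom (RingHom.id (Away (gr (Fin 2) R) (X i))) = 𝟙 _ := rfl
  rw [h2, Spec.map_id, Category.id_comp]

/-- fixing the three points -/
structure Fix (θ : Q (Fin 2) R ⟶ Q (Fin 2) R) : Prop where
  str : θ ≫ strMap _ R = strMap _ R
  p0 : ∀ i : Fin 2, pt (vec i (0 : R)) (vec_UM i 0) ≫ θ = pt (vec i (0 : R)) (vec_UM i 0)
  p1 : pt (vec 0 (1 : R)) (vec_UM 0 1) ≫ θ = pt (vec 0 (1 : R)) (vec_UM 0 1)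

lemma vec_one (i : Fin 2) : vec i (1 : R) = fun _ => 1 := by
  funext k; simp [vec]

lemma Fix.p1' {θ : Q (Fin 2) R ⟶ Q (Fin 2) R} (h : Fix θ) (i : Fin 2) :
    pt (vec i (1 : R)) (vec_UM i 1) ≫ θ = pt (vec i (1 : R)) (vec_UM i 1) := by
  have : pt (vec i (1 : R)) (vec_UM i 1) = pt (vec 0 (1 : R)) (vec_UM 0 1) :=
    pt_congr (by rw [vec_one, vec_one]) _ _
  rw [this, h.p1]

lemma Fix.exists_poly {θ θ' : Q (Fin 2) R ⟶ Q (Fin 2) R} (h : Fix θ) (h1 : θ ≫ θ' = 𝟙 _)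
    (i : Fin 2) : ∃ p : Polynomial R, (∀ (R' : Type u) [CommRing R'] (ρ : R →+* R') (a : R'),
      bpt ρ i a ≫ θ = bpt ρ i (p.eval₂ ρ a)) ∧ p.eval 0 = 0 ∧ p.eval 1 = 1 := by
  obtain ⟨j, hj⟩ : ∃ j, i ≠ j := ⟨i + 1, by fin_cases i <;> simp⟩
  obtain ⟨p, hp⟩ := PB.exists_poly hj θ h.str (stable_chart hj.symm θ (by
    intro x y hxy
    have := congrArg θ' hxy
    rw [← Scheme.Hom.comp_apply, ← Scheme.Hom.comp_apply, h1] at this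
    exact this) (h.p0 j))
  refine ⟨p, hp, ?_, ?_⟩
  · have h2 := hp R (RingHom.id R) 0
    rw [bpt_id, h.p0, ← bpt_id] at h2
    exact (bpt_inj _ _ _ _ h2).symm
  · have h2 := hp R (RingHom.id R) 1
    rw [bpt_id, h.p1', ← bpt_id] at h2
    exact (bpt_inj _ _ _ _ h2).symm

lemma Fix.eq_id {θ θ' : Q (Fin 2) R ⟶ Q (Fin 2) R} (h : Fix θ) (h' : Fix θ') (h1 : θ ≫ θ' = 𝟙 _) (h2 : θ' ≫ θ = 𝟙 _) :
    θ = 𝟙 _ := by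
  apply Q_ext
  intro i
  obtain ⟨j, hj⟩ : ∃ j, i ≠ j := ⟨i + 1, by fin_cases i <;> simp⟩
  obtain ⟨p, hp, hp0, hp1⟩ := h.exists_poly h1 i
  obtain ⟨q, hq, hq0, hq1⟩ := h.exists_poly h1 j
  obtain ⟨p', hp', hp'0, hp'1⟩ := h'.exists_poly h2 i
  have hX : p = Polynomial.X := by
    apply poly_key p q p' hp0 hq0 hp1 hp'0
    · have e1 := hp (Polynomial R) Polynomial.C Polynomial.X
      have e2 := hp' (Polynomial R) Polynomial.C (p.eval₂ Polynomial.C Polynomial.X)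
      rw [← e1, Category.assoc, h1, Category.comp_id] at e2
      have e3 := bpt_inj _ _ _ _ e2
      rw [Polynomial.eval₂_C_X] at e3
      exact e3.symm
    · apply bpt_cross LaurentPolynomial.C hj
      rw [← hp, ← hq]
      rw [bpt_swap LaurentPolynomial.C hj]
      rw [← LaurentPolynomial.T_add]; simp
  rw [← chart_bpt hj, hp, hX, Polynomial.eval₂_X, Category.comp_id]

end
end PB

namespace PB
set_option linter.unusedSectionVars false
set_option linter.unusedVariables false
open MvPolynomial HomogeneousLocalization

section
variable {R : Type u} [CommRing R]

lemma isUnit_det (v w : Fin 2 → R) (hv : UM v) (hw : UM w)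
    (hd : Disjoint (Set.range (pt v hv)) (Set.range (pt w hw))) : IsUnit (v 0 * w 1 - v 1 * w 0) := by
  by_contra hn
  obtain ⟨m, hm, hvm⟩ := exists_max_ideal_of_mem_nonunits hn
  let ρ : R →+* R ⧸ m := Ideal.Quotient.mk m
  have h0 : ρ (v 0 * w 1 - v 1 * w 0) = 0 := Ideal.Quotient.eq_zero_iff_mem.2 hvm
  have : Nontrivial (R ⧸ m) := Ideal.Quotient.nontrivial_iff.2 hm.ne_top
  let x : Spec (.of (R ⧸ m)) := (Classical.arbitrary (PrimeSpectrum (R ⧸ m)))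
  have e : pt _ (hv.map ρ) = pt _ (hw.map ρ) := by
    obtain ⟨a, ha⟩ := hv.map ρ
    obtain ⟨b, hb⟩ := hw.map ρ
    simp only [map_sub, map_mul, Fin.sum_univ_two] at ha hb h0
    have e0 : ρ (w 0) = (a 0 * ρ (w 0) + a 1 * ρ (w 1)) * ρ (v 0) := by
      linear_combination (-ρ (w 0)) * ha - a 1 * h0
    have e1 : ρ (w 1) = (a 0 * ρ (w 0) + a 1 * ρ (w 1)) * ρ (v 1) := by
      linear_combination (-ρ (w 1)) * ha + a 0 * h0
    refine pt_smul ⟨a 0 * ρ (w 0) + a 1 * ρ (w 1), b 0 * ρ (v 0) + b 1 * ρ (v 1), ?_, ?_⟩ _ _ _ _ ?_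
    · linear_combination hb - b 0 * e0 - b 1 * e1
    · linear_combination hb - b 0 * e0 - b 1 * e1
    · intro i
      fin_cases i
      · exact e0
      · exact e1
  have e1 := pt_base ρ v hv (hv.map ρ)
  have e2 := pt_base ρ w hw (hw.map ρ)
  rw [e, e2] at e1
  have e3 := congr($e1 x)
  rw [Scheme.Hom.comp_apply, Scheme.Hom.comp_apply] at e3
  exact Set.disjoint_left.1 hd ⟨_, e3.symm⟩ ⟨_, rfl⟩

/-- standard points -/
def st (k : Fin 3) : Fin 2 → R := if k = 0 then vec 0 0 else if k = 1 then vec 1 0 else vec 0 1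

lemma st_UM (k : Fin 3) : UM (st (R := R) k) := by
  unfold st; split_ifs <;> exact vec_UM _ _

lemma st_map {R' : Type u} [CommRing R'] (ρ : R →+* R') (k : Fin 3) : (fun i => ρ (st k i)) = st k := by
  unfold st; split_ifs <;> rw [vec_map] <;> simp

lemma exists_move (v : Fin 3 → Fin 2 → R) (hv : ∀ k, UM (v k))
    (hd : ∀ i j, i ≠ j → Disjoint (Set.range (pt (v i) (hv i))) (Set.range (pt (v j) (hv j)))) :
    ∃ ψ ψ' : Q (Fin 2) R ⟶ Q (Fin 2) R, ψ ≫ ψ' = 𝟙 _ ∧ ψ' ≫ ψ = 𝟙 _ ∧ ψ ≫ strMap _ R = strMap _ R ∧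
      ∀ k, pt (st k) (st_UM k) ≫ ψ = pt (v k) (hv k) := by
  obtain ⟨d, hd01⟩ := isUnit_det _ _ _ _ (hd 0 1 (by decide))
  obtain ⟨l, hl⟩ := isUnit_det _ _ _ _ (hd 2 1 (by decide))
  obtain ⟨m, hm⟩ := isUnit_det _ _ _ _ (hd 0 2 (by decide))
  let N : Matrix (Fin 2) (Fin 2) R := Matrix.of ![![l * ↑d⁻¹ * v 0 0, m * ↑d⁻¹ * v 1 0], ![l * ↑d⁻¹ * v 0 1, m * ↑d⁻¹ * v 1 1]]
  have hdet : IsUnit N.det := by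
    have : N.det = (l * m * d⁻¹ : Rˣ) := by
      simp only [N, Matrix.det_fin_two, Matrix.of_apply, Matrix.cons_val_zero, Matrix.cons_val_one, Units.val_mul]
      have h3 : (d : R) * ↑d⁻¹ = 1 := by simp
      linear_combination (- l * ↑d⁻¹ * m * ↑d⁻¹) * hd01 + (l * m * ↑d⁻¹) * h3
    rw [this]; exact Units.isUnit _
  have hN1 : N⁻¹ * N = 1 := Matrix.nonsing_inv_mul _ hdet
  have hN2 : N * N⁻¹ = 1 := Matrix.mul_nonsing_inv _ hdet
  have hLI : ∀ A B : Matrix (Fin 2) (Fin 2) R, B * A = 1 → LI A := by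
    intro A B h
    refine ⟨B, fun i j => ?_⟩
    have := congr($h i j)
    rw [Matrix.mul_apply, Matrix.one_apply] at this
    rw [this]
    congr
  have L1 := hLI N _ hN1
  have L2 := hLI N⁻¹ _ hN2
  refine ⟨lmap (RingHom.id R) N L1, lmap (RingHom.id R) N⁻¹ L2, ?_, ?_, ?_, ?_⟩
  · rw [lmap_comp (ρ'' := RingHom.id R) (M'' := 1) (hM'' := LI_one), lmap_id]
    · rfl
    · simpa using hN1
  · rw [lmap_comp (ρ'' := RingHom.id R) (M'' := 1) (hM'' := LI_one), lmap_id]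
    · rfl
    · simpa using hN2
  · rw [lmap_strMap]
    have : CommRingCat.ofHom (RingHom.id R) = 𝟙 (CommRingCat.of R) := rfl
    rw [this]; simp
  · intro k
    have h3 : (d : R) * ↑d⁻¹ = 1 := by simp
    fin_cases k
    · refine (pt_lmap N L1 _ _ (fun i => ((l * d⁻¹ : Rˣ) : R) * v 0 i) ?_ ?_).trans (pt_smul (l * d⁻¹) _ _ _ _ (fun _ => rfl)).symm
      · obtain ⟨w, hw⟩ := hv 0
        refine ⟨fun i => ((l * d⁻¹ : Rˣ)⁻¹ : Rˣ) * w i, ?_⟩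
        rw [← hw]
        refine Finset.sum_congr rfl fun i _ => ?_
        have : (((l * d⁻¹ : Rˣ)⁻¹ : Rˣ) : R) * ((l * d⁻¹ : Rˣ) : R) = 1 := Units.inv_mul _
        linear_combination (w i * v 0 i) * this
      · funext i
        fin_cases i <;> simp [N, Matrix.mulVec, dotProduct, st, vec]
    · refine (pt_lmap N L1 _ _ (fun i => ((m * d⁻¹ : Rˣ) : R) * v 1 i) ?_ ?_).trans (pt_smul (m * d⁻¹) _ _ _ _ (fun _ => rfl)).symm
      · obtain ⟨w, hw⟩ := hv 1
        refine ⟨fun i => ((m * d⁻¹ : Rˣ)⁻¹ : Rˣ) * w i, ?_⟩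
        rw [← hw]
        refine Finset.sum_congr rfl fun i _ => ?_
        have : (((m * d⁻¹ : Rˣ)⁻¹ : Rˣ) : R) * ((m * d⁻¹ : Rˣ) : R) = 1 := Units.inv_mul _
        linear_combination (w i * v 1 i) * this
      · funext i
        fin_cases i <;> simp [N, Matrix.mulVec, dotProduct, st, vec]
    · refine pt_lmap N L1 _ _ _ _ ?_
      funext i
      fin_cases i
      · simp [N, Matrix.mulVec, dotProduct, st, vec]
        linear_combination (↑d⁻¹ * v 0 0) * hl + (↑d⁻¹ * v 1 0) * hm - (↑d⁻¹ * v 2 0) * hd01 + v 2 0 * h3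
      · simp [N, Matrix.mulVec, dotProduct, st, vec]
        linear_combination (↑d⁻¹ * v 0 1) * hl + (↑d⁻¹ * v 1 1) * hm - (↑d⁻¹ * v 2 1) * hd01 + v 2 1 * h3

end
end PB

namespace PB
set_option linter.unusedSectionVars false
set_option linter.unusedVariables false
open MvPolynomial HomogeneousLocalization

/-- the point -/
noncomputable def zpt (k : Fin 3) : Spec (.of (ULift.{u} ℤ)) ⟶ P1Z.{u} := pt (σ := Fin 2) (st k) (st_UM k)

/-- constant section -/
noncomputable def zp (k : Fin 3) (T : Scheme.{u}) : T ⟶ P1Z.{u} := specULiftZIsTerminal.from T ≫ zpt k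

lemma comp_zp (k : Fin 3) {T T' : Scheme.{u}} (g : T' ⟶ T) : g ≫ zp k T = zp k T' := by
  rw [zp, zp, ← Category.assoc]
  congr 1
  exact specULiftZIsTerminal.hom_ext _ _

/-- the trivialisation predicate -/
def Triv {X T : Scheme.{u}} (f : X ⟶ T) (h : X ⟶ P1Z.{u}) : Prop :=
  IsPullback f h (terminal.from T) (terminal.from P1Z.{u})

/-- ring hom -/
def zhom (R : Type u) [CommRing R] : ULift.{u} ℤ →+* R := (Int.castRingHom R).comp ULift.ringEquiv.toRingHom

/-- base map -/
noncomputable def beta (R : Type u) [CommRing R] : Q (Fin 2) R ⟶ P1Z.{u} :=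
  lmap (σ := Fin 2) (zhom R) (1 : Matrix (Fin 2) (Fin 2) R) LI_one

lemma triv_beta (R : Type u) [CommRing R] : Triv (strMap (Fin 2) R) (beta R) := by
  have h : IsPullback (strMap (Fin 2) R) (beta R) (Spec.map (CommRingCat.ofHom (zhom R))) (strMap (Fin 2) (ULift.{u} ℤ)) :=
    (isPullback_lmap (zhom R)).flip
  refine h.of_iso (Iso.refl _) (Iso.refl _) (Iso.refl _) (specULiftZIsTerminal.uniqueUpToIso terminalIsTerminal) ?_ ?_ ?_ ?_
  · simp
  · change _ ≫ 𝟙 _ = _; rw [Category.comp_id]; exact (Category.id_comp _).symm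
  · exact terminalIsTerminal.hom_ext _ _
  · exact terminalIsTerminal.hom_ext _ _

lemma pt_st_beta (R : Type u) [CommRing R] (k : Fin 3) : pt (st k) (st_UM k) ≫ beta R = zp k (Spec (.of R)) := by
  have h := pt_base (zhom R) (st k) (st_UM k) ((st_UM k).map _)
  rw [pt_congr (st_map (zhom R) k) _ (st_UM k)] at h
  refine h.trans ?_
  rw [zp]
  congr 1
  exact specULiftZIsTerminal.hom_ext _ _

/-- iso -/
lemma Triv.exists_iso {R : Type u} [CommRing R] {X : Scheme.{u}} {f : X ⟶ Spec (.of R)} {h : X ⟶ P1Z.{u}} (H : Triv f h) :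
    ∃ a : X ≅ Q (Fin 2) R, a.hom ≫ strMap _ R = f ∧ a.hom ≫ beta R = h :=
  ⟨H.isoIsPullback _ _ (triv_beta R), H.isoIsPullback_hom_fst _ _ _, H.isoIsPullback_hom_snd _ _ _⟩

/-- good trivialisation -/
def Good {X T : Scheme.{u}} (f : X ⟶ T) (s : Fin 3 → (T ⟶ X)) (h : X ⟶ P1Z.{u}) : Prop :=
  Triv f h ∧ ∀ k, s k ≫ h = zp k T

lemma uniq_affine {R : Type u} [CommRing R] {X : Scheme.{u}} {f : X ⟶ Spec (.of R)} {s : Fin 3 → (Spec (.of R) ⟶ X)}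
    (hs : ∀ k, s k ≫ f = 𝟙 _) {h h' : X ⟶ P1Z.{u}} (H : Good f s h) (H' : Good f s h') : h = h' := by
  obtain ⟨a, ha1, ha2⟩ := H.1.exists_iso
  obtain ⟨b, hb1, hb2⟩ := H'.1.exists_iso
  have pa : ∀ k, s k ≫ a.hom = pt (st k) (st_UM k) := by
    intro k
    apply (triv_beta R).hom_ext
    · rw [Category.assoc, ha1, hs, pt_strMap]
    · rw [Category.assoc, ha2, H.2, pt_st_beta]
  have pb : ∀ k, s k ≫ b.hom = pt (st k) (st_UM k) := by
    intro k
    apply (triv_beta R).hom_ext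
    · rw [Category.assoc, hb1, hs, pt_strMap]
    · rw [Category.assoc, hb2, H'.2, pt_st_beta]
  have key : ∀ (a b : X ≅ Q (Fin 2) R), a.hom ≫ strMap _ R = f → b.hom ≫ strMap _ R = f →
      (∀ k, s k ≫ a.hom = pt (st k) (st_UM k)) → (∀ k, s k ≫ b.hom = pt (st k) (st_UM k)) →
      Fix (a.inv ≫ b.hom) := by
    intro a b ha hb pa pb
    have hk : ∀ k, pt (st k) (st_UM k) ≫ a.inv ≫ b.hom = pt (st k) (st_UM k) := by
      intro k
      rw [← pa k, Category.assoc, a.hom_inv_id_assoc, pb, pa]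
    refine ⟨?_, ?_, ?_⟩
    · rw [Category.assoc, hb, ← ha, a.inv_hom_id_assoc]
    · intro i
      fin_cases i
      · exact hk 0
      · exact hk 1
    · exact hk 2
  have e := (key a b ha1 hb1 pa pb).eq_id (key b a hb1 ha1 pb pa) (by simp) (by simp)
  have e2 : a.hom = b.hom := by
    rw [← cancel_epi a.inv, e, a.inv_hom_id]
  rw [← ha2, e2, hb2]

lemma exists_affine {R : Type u} [CommRing R] {X : Scheme.{u}} {f : X ⟶ Spec (.of R)} {s : Fin 3 → (Spec (.of R) ⟶ X)}
    (hs : ∀ k, s k ≫ f = 𝟙 _) {h : X ⟶ P1Z.{u}} (H : Triv f h)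
    (hd : ∀ i j : Fin 3, i ≠ j → Disjoint (Set.range (s i)) (Set.range (s j)))
    (hc : ∀ k, ∃ i : Fin 2, ∀ x, (s k ≫ h) x ∈ (Proj.basicOpen (gr (Fin 2) (ULift.{u} ℤ)) (MvPolynomial.X i))) :
    ∃ h', Good f s h' := by
  obtain ⟨a, ha1, ha2⟩ := H.exists_iso
  have h1 : ∀ k, ∃ (v : Fin 2 → R) (hv : UM v), s k ≫ a.hom = pt v hv := by
    intro k
    obtain ⟨i, hi⟩ := hc k
    apply exists_pt _ (by rw [Category.assoc, ha1, hs]) i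
    rintro _ ⟨x, rfl⟩
    have := hi x
    rw [← ha2, ← Category.assoc, Scheme.Hom.comp_apply] at this
    exact (lmap_one_mem (zhom R) i _).1 this
  choose v hv hsv using h1
  obtain ⟨ψ, ψ', e1, e2, e3, e4⟩ := exists_move v hv (by
    intro i j hij
    rw [← hsv, ← hsv]
    have := hd i j hij
    rw [Set.disjoint_left] at this ⊢
    rintro _ ⟨x, rfl⟩ ⟨y, hy⟩
    rw [Scheme.Hom.comp_apply, Scheme.Hom.comp_apply] at hy
    have hy2 := congrArg a.inv hy
    have hid : ∀ z, a.inv (a.hom z) = z := fun z => by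
      rw [← Scheme.Hom.comp_apply, a.hom_inv_id]; rfl
    rw [hid, hid] at hy2
    exact this ⟨x, rfl⟩ ⟨y, hy2⟩)
  let ψi : Q (Fin 2) R ≅ Q (Fin 2) R := ⟨ψ, ψ', e1, e2⟩
  refine ⟨a.hom ≫ ψ' ≫ beta R, ?_, ?_⟩
  · refine (triv_beta R).of_iso ((a ≪≫ ψi.symm).symm) (Iso.refl _) (Iso.refl _) (Iso.refl _) ?_ ?_ ?_ ?_
    · simp [ψi, ← ha1, e3]
    · change _ ≫ 𝟙 _ = _
      simp [ψi, reassoc_of% e1]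
    · exact terminalIsTerminal.hom_ext _ _
    · exact terminalIsTerminal.hom_ext _ _
  · intro k
    rw [← Category.assoc, hsv, ← e4, Category.assoc, reassoc_of% e1, pt_st_beta]

lemma Good.base {X T X' T' : Scheme.{u}} {f : X ⟶ T} {s : Fin 3 → (T ⟶ X)} {h : X ⟶ P1Z.{u}} (H : Good f s h)
    {f' : X' ⟶ T'} {a : X' ⟶ X} {g : T' ⟶ T} (hp : IsPullback f' a g f) {s' : Fin 3 → (T' ⟶ X')}
    (hs : ∀ k, s' k ≫ a = g ≫ s k) : Good f' s' (a ≫ h) := by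
  refine ⟨?_, ?_⟩
  · have := hp.flip.paste_horiz H.1.flip
    rw [show g ≫ terminal.from T = terminal.from T' from terminalIsTerminal.hom_ext _ _] at this
    exact this.flip
  · intro k
    rw [reassoc_of% hs, H.2, comp_zp]

end PB

namespace PB
set_option linter.unusedSectionVars false
set_option linter.unusedVariables false

/-- base change of sections -/
noncomputable def bs {X T T' : Scheme.{u}} (f : X ⟶ T) (s : Fin 3 → (T ⟶ X)) (hs : ∀ k, s k ≫ f = 𝟙 _) (g : T' ⟶ T) (k : Fin 3) :
    T' ⟶ pullback f g := pullback.lift (g ≫ s k) (𝟙 _) (by rw [Category.assoc, hs, Category.comp_id, Category.id_comp])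

section
variable {X T T' T'' : Scheme.{u}} (f : X ⟶ T) (s : Fin 3 → (T ⟶ X)) (hs : ∀ k, s k ≫ f = 𝟙 _) (g : T' ⟶ T)

lemma bs_fst (k) : bs f s hs g k ≫ pullback.fst f g = g ≫ s k := pullback.lift_fst _ _ _
lemma bs_snd (k) : bs f s hs g k ≫ pullback.snd f g = 𝟙 _ := pullback.lift_snd _ _ _

/-- comparison of base changes -/
noncomputable def cmp (g' : T'' ⟶ T') (g'' : T'' ⟶ T) (e : g'' = g' ≫ g) : pullback f g'' ⟶ pullback f g :=
  pullback.lift (pullback.fst f g'') (pullback.snd f g'' ≫ g') (by rw [pullback.condition, e, Category.assoc])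

lemma cmp_fst (g' : T'' ⟶ T') (g'' : T'' ⟶ T) (e : g'' = g' ≫ g) :
    cmp f g g' g'' e ≫ pullback.fst f g = pullback.fst f g'' := pullback.lift_fst _ _ _

lemma cmp_snd (g' : T'' ⟶ T') (g'' : T'' ⟶ T) (e : g'' = g' ≫ g) :
    cmp f g g' g'' e ≫ pullback.snd f g = pullback.snd f g'' ≫ g' := pullback.lift_snd _ _ _

lemma cmp_isPullback (g' : T'' ⟶ T') (g'' : T'' ⟶ T) (e : g'' = g' ≫ g) :
    IsPullback (pullback.snd f g'') (cmp f g g' g'' e) g' (pullback.snd f g) := by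
  have h1 : IsPullback (cmp f g g' g'' e ≫ pullback.fst f g) (pullback.snd f g'') f (g' ≫ g) := by
    rw [cmp_fst, ← e]; exact IsPullback.of_hasPullback f g''
  exact (IsPullback.of_right h1 (cmp_snd f g g' g'' e) (IsPullback.of_hasPullback f g)).flip

lemma bs_cmp (g' : T'' ⟶ T') (g'' : T'' ⟶ T) (e : g'' = g' ≫ g) (k) :
    bs f s hs g'' k ≫ cmp f g g' g'' e = g' ≫ bs f s hs g k := by
  apply pullback.hom_ext
  · rw [Category.assoc, cmp_fst, bs_fst, Category.assoc, bs_fst, e, Category.assoc]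
  · rw [Category.assoc, cmp_snd, ← Category.assoc, bs_snd, Category.assoc, bs_snd, Category.comp_id, Category.id_comp]

lemma Good.cmp {g : T' ⟶ T} {h : pullback f g ⟶ P1Z.{u}} (H : Good (pullback.snd f g) (bs f s hs g) h)
    (g' : T'' ⟶ T') (g'' : T'' ⟶ T) (e : g'' = g' ≫ g) :
    Good (pullback.snd f g'') (bs f s hs g'') (cmp f g g' g'' e ≫ h) :=
  H.base (cmp_isPullback f g g' g'' e) (bs_cmp f s hs g g' g'' e)

end

lemma Good.uniq {X T : Scheme.{u}} {f : X ⟶ T} {s : Fin 3 → (T ⟶ X)} (hs : ∀ k, s k ≫ f = 𝟙 _)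
    {h h' : X ⟶ P1Z.{u}} (H : Good f s h) (H' : Good f s h') : h = h' := by
  let 𝒰 := T.affineOpenCover
  refine Scheme.Cover.hom_ext (𝒰.openCover.pullback₁ f) _ _ fun i => ?_
  change pullback.fst f (𝒰.f i) ≫ h = pullback.fst f (𝒰.f i) ≫ h'
  have hp : IsPullback (pullback.snd f (𝒰.f i)) (pullback.fst f (𝒰.f i)) (𝒰.f i) f :=
    (IsPullback.of_hasPullback f (𝒰.f i)).flip
  exact uniq_affine (R := 𝒰.X i) (s := bs f s hs (𝒰.f i)) (bs_snd f s hs (𝒰.f i))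
    (H.base hp (bs_fst f s hs (𝒰.f i))) (H'.base hp (bs_fst f s hs (𝒰.f i)))

section
variable {P S : Scheme.{u}} (f : P ⟶ S) (s : Fin 3 → (S ⟶ P))

lemma exists_local (hs : ∀ i, s i ≫ f = 𝟙 S) (hf : IsP1Bundle f)
    (hdisj : ∀ i j : Fin 3, i ≠ j → Disjoint (Set.range (s i)) (Set.range (s j))) (x : S) :
    ∃ (R : CommRingCat.{u}) (g : Spec R ⟶ S) (h : pullback f g ⟶ P1Z.{u}), IsOpenImmersion g ∧ x ∈ Set.range g ∧
      Good (pullback.snd f g) (bs f s hs g) h := by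
  obtain ⟨U, hxU, e0, he0⟩ := hf x
  obtain ⟨e, he⟩ : ∃ e : pullback f U.ι ≅ pullback (terminal.from (U : Scheme.{u})) (terminal.from P1Z.{u}),
      e.hom ≫ pullback.fst _ _ = pullback.snd f U.ι := ⟨e0, he0⟩
  let hU : pullback f U.ι ⟶ P1Z.{u} := e.hom ≫ pullback.snd _ _
  have hT : Triv (pullback.snd f U.ι) hU := by
    refine (IsPullback.of_hasPullback (terminal.from (U : Scheme.{u})) (terminal.from P1Z.{u})).of_iso e.symm
      (Iso.refl _) (Iso.refl _) (Iso.refl _) ?_ ?_ ?_ ?_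
    · rw [← he]
      simp
    · simp [hU]
    · exact terminalIsTerminal.hom_ext _ _
    · exact terminalIsTerminal.hom_ext _ _
  let t : Fin 3 → ((U : Scheme.{u}) ⟶ P1Z.{u}) := fun k => bs f s hs U.ι k ≫ hU
  have hc : ∀ k, ∃ i : Fin 2, t k ⟨x, hxU⟩ ∈ Proj.basicOpen (gr (Fin 2) (ULift.{u} ℤ)) (MvPolynomial.X i) :=
    fun k => chart_cov _
  choose c hc using hc
  let B : Fin 3 → P1Z.{u}.Opens := fun k => Proj.basicOpen (gr (Fin 2) (ULift.{u} ℤ)) (MvPolynomial.X (c k))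
  let W : (U : Scheme.{u}).Opens := (t 0 ⁻¹ᵁ B 0) ⊓ (t 1 ⁻¹ᵁ B 1) ⊓ (t 2 ⁻¹ᵁ B 2)
  have hxW : (⟨x, hxU⟩ : U) ∈ W := ⟨⟨hc 0, hc 1⟩, hc 2⟩
  obtain ⟨R, g, hg, hxg, hgW⟩ := Scheme.exists_affine_mem_range_and_range_subset hxW
  have hW : ∀ k, ∀ y ∈ W, t k y ∈ B k := by
    intro k y hy
    fin_cases k
    · exact hy.1.1
    · exact hy.1.2
    · exact hy.2
  have hT' : Triv (pullback.snd f (g ≫ U.ι)) (cmp f U.ι g (g ≫ U.ι) rfl ≫ hU) := by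
    have := (cmp_isPullback f U.ι g (g ≫ U.ι) rfl).flip.paste_horiz hT.flip
    rw [show g ≫ terminal.from _ = terminal.from (Spec R) from terminalIsTerminal.hom_ext _ _] at this
    exact this.flip
  obtain ⟨h', hh'⟩ := exists_affine (R := R) (s := bs f s hs (g ≫ U.ι)) (bs_snd f s hs (g ≫ U.ι)) hT' (by
    intro i j hij
    have := hdisj i j hij
    rw [Set.disjoint_left] at this ⊢
    rintro _ ⟨y, rfl⟩ ⟨z, hz⟩
    have h1 := congrArg (pullback.fst f (g ≫ U.ι)) hz
    rw [← Scheme.Hom.comp_apply, ← Scheme.Hom.comp_apply, bs_fst, bs_fst, Scheme.Hom.comp_apply,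
      Scheme.Hom.comp_apply] at h1
    exact this ⟨_, rfl⟩ ⟨_, h1⟩) (by
    intro k
    refine ⟨c k, fun y => ?_⟩
    rw [← Category.assoc, bs_cmp, Category.assoc, Scheme.Hom.comp_apply]
    exact hW k _ (hgW ⟨y, rfl⟩))
  refine ⟨R, g ≫ U.ι, h', inferInstance, ?_, hh'⟩
  obtain ⟨y, hy⟩ := hxg
  refine ⟨y, ?_⟩
  rw [Scheme.Hom.comp_apply, hy]; rfl

lemma exists_global (hs : ∀ i, s i ≫ f = 𝟙 S) (hf : IsP1Bundle f)
    (hdisj : ∀ i j : Fin 3, i ≠ j → Disjoint (Set.range (s i)) (Set.range (s j))) :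
    ∃ h : P ⟶ P1Z.{u}, Triv f h := by
  choose R g h hg hx H using exists_local f s hs hf hdisj
  let 𝒰 : S.AffineOpenCover := { I₀ := S, X := R, f := g, idx := id, covers := hx }
  let 𝒱 : P.OpenCover := 𝒰.openCover.pullback₁ f
  have hcompat : ∀ x y : S, pullback.fst (pullback.fst f (g x)) (pullback.fst f (g y)) ≫ h x =
      pullback.snd (pullback.fst f (g x)) (pullback.fst f (g y)) ≫ h y := by
    intro x y
    let q := pullback.fst (g x) (g y) ≫ g x
    have hq : q = pullback.snd (g x) (g y) ≫ g y := pullback.condition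
    have e1 := (H x).cmp f s hs (pullback.fst (g x) (g y)) q rfl
    have e2 := (H y).cmp f s hs (pullback.snd (g x) (g y)) q hq
    have e3 := Good.uniq (bs_snd f s hs q) e1 e2
    let a := pullback.fst (pullback.fst f (g x)) (pullback.fst f (g y))
    let b := pullback.snd (pullback.fst f (g x)) (pullback.fst f (g y))
    have hab : a ≫ pullback.fst f (g x) = b ≫ pullback.fst f (g y) := pullback.condition
    let m : pullback (pullback.fst f (g x)) (pullback.fst f (g y)) ⟶ pullback (g x) (g y) :=
      pullback.lift (a ≫ pullback.snd f (g x)) (b ≫ pullback.snd f (g y)) (by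
        rw [Category.assoc, Category.assoc, ← pullback.condition, ← pullback.condition, reassoc_of% hab])
    have hm1 : m ≫ pullback.fst (g x) (g y) = a ≫ pullback.snd f (g x) := pullback.lift_fst _ _ _
    have hm2 : m ≫ pullback.snd (g x) (g y) = b ≫ pullback.snd f (g y) := pullback.lift_snd _ _ _
    let n : pullback (pullback.fst f (g x)) (pullback.fst f (g y)) ⟶ pullback f q :=
      pullback.lift (a ≫ pullback.fst f (g x)) m (by
        rw [Category.assoc, pullback.condition, ← Category.assoc m, hm1, Category.assoc])
    have hn1 : n ≫ pullback.fst f q = a ≫ pullback.fst f (g x) := pullback.lift_fst _ _ _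
    have hn2 : n ≫ pullback.snd f q = m := pullback.lift_snd _ _ _
    have ha : n ≫ cmp f (g x) (pullback.fst (g x) (g y)) q rfl = a := by
      apply pullback.hom_ext
      · rw [Category.assoc, cmp_fst, hn1]
      · rw [Category.assoc, cmp_snd, reassoc_of% hn2, hm1]
    have hb : n ≫ cmp f (g y) (pullback.snd (g x) (g y)) q hq = b := by
      apply pullback.hom_ext
      · rw [Category.assoc, cmp_fst, hn1, hab]
      · rw [Category.assoc, cmp_snd, reassoc_of% hn2, hm2]
    change a ≫ h x = b ≫ h y
    rw [← ha, ← hb, Category.assoc, Category.assoc, e3]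
  let hh : P ⟶ P1Z.{u} := 𝒱.glueMorphisms (fun x => h x) hcompat
  have hhx : ∀ x : S, pullback.fst f (g x) ≫ hh = h x := fun x => 𝒱.ι_glueMorphisms (fun x => h x) hcompat x
  refine ⟨hh, ?_⟩
  refine isPullback_of_cover _ _ _ _ 𝒰.openCover (fun x : S => pullback f (g x)) (fun x : S => pullback.snd f (g x))
    (fun x : S => pullback.fst f (g x)) ?_ ?_
  · intro (x : S)
    exact (IsPullback.of_hasPullback f (g x)).flip
  · intro (x : S)
    change IsPullback _ (pullback.fst f (g x) ≫ hh) (g x ≫ _) _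
    rw [hhx, show g x ≫ terminal.from S = terminal.from (Spec (R x)) from terminalIsTerminal.hom_ext _ _]
    exact (H x).1

end
end PB

/-- Let `P → S` be a `ℙ¹`-bundle over a scheme `S`. If `P → S` admits
three sections whose set-theoretic images in `P` are pairwise disjoint, then `P` is
`S`-isomorphic to `ℙ¹_S`. -/
theorem stmt7 (S P : Scheme.{u}) (f : P ⟶ S) (hf : IsP1Bundle f)
    (s : Fin 3 → (S ⟶ P)) (hs : ∀ i, s i ≫ f = 𝟙 S)
    (hdisj : ∀ i j : Fin 3, i ≠ j →
      Disjoint (Set.range (s i).base) (Set.range (s j).base)) :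
    ∃ α : P ⟶ P1 S, IsIso α ∧ α ≫ P1proj S = f := by
  obtain ⟨h, hh⟩ := PB.exists_global f s hs hf hdisj
  have hp : IsPullback f h (terminal.from S) (terminal.from P1Z.{u}) := hh
  refine ⟨hp.isoPullback.hom, inferInstanceAs (IsIso hp.isoPullback.hom), ?_⟩
  exact IsPullback.isoPullback_hom_fst hp
end
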